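/- Assume the proper functional φ on the complete metric space (X,d) satisfies the LSCC property with respect to the auxiliary topology σ. Let (ū_ε)_{ε>0} and ū belong to the effective domain D(φ) with ū_ε →σ ū, sup_ε d(ū_ε,ū) < ∞, and φ(ū_ε) → φ(ū) as ε ↓ 0, and for every ε > 0 let u_ε be a minimizer of the WED functional I_ε over the class 𝒜_{ū_ε}^ε. Then for every sequence ε_k ↓ 0 there exist a subsequence (not relabeled) and a curve u ∈ AC²_loc([0,∞);X) with u(0) = ū such that u_{ε_k}(t) →σ u(t) for every t ∈ [0,∞), and ∫₀^t ( (1/2)|u'|²(s) + (1/2)|∂⁻φ|²(u(s)) ) ds + φ(u(t)) ≤ φ(ū) for all t ≥ 0. Consequently, if |∂⁻φ| is an L^∞-moderated upper gradient for φ, then u is a curve of maximal slope for φ with respect to |∂⁻φ|, i.e. −(φ∘u)'(t) = |u'|²(t) = |∂⁻φ|²(u(t)) for a.e. t ∈ (0,∞). -/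

import Mathlib

/-!
The proof follows the value function along the minimizers. For a minimizer `u` of `I_ε`, let
`W(t) = e^{t/ε} ∫_t^∞ ((ε/2)|u'|² + φ(u)) dμ_ε` be the value left at time `t`, and let
`a = (φ(u) - W)/ε`.

At fixed `ε`, concatenation of `u` up to time `t` with an arbitrary curve leaving from `u t` gives
the dynamic programming inequality `IsMinimizer.value_le`. Comparison with the constant curve
yields `W ≤ φ(u)`, so `a ≥ 0`, while differentiating the definition of `W` yields the identity
`W(t) + ∫_s^t (|u'|²/2 + a) = W(s)` (`weighted_tail_identity`, `MinData.sum_integral`).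
Comparison with a descent curve bounds `a` from below by the slope: if the slope exceeds `c` in the
ball of radius `c T` around `u t` (on the sublevel of `u t`), then there is a curve of speed `c`
along which `φ` decreases at rate `c²` up to time `T` (`LSCC.exists_descent_curve`), and hence
`c² (1 - e^{-T/ε}) ≤ 2 a(t)` (`IsMinimizer.value_le_of_slope`). The descent curve is built by
discrete steps, each minimizing `φ + c d(y,·)` over a small ball, followed by a compactness
argument.

As `ε ↓ 0`, the quadratic lower bound on `W` (a Hardy inequality, `AC2LocOn.hardy`) and a
Gronwall-type argument bound `∫ |u'|²` and `∫ a` on compact time intervals. So `ε a → 0` a.e. along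
a subsequence, the energies are bounded at a.e. time, and an Arzelà–Ascoli argument gives a limit
curve (`SeqData.exists_limit`). Its metric derivative exists because its increments are controlled
by the limit of `∫_0^t |u_k'|²` (`exists_metricDeriv`). Choosing `T = √ε_k / c` in the slope bound
shows `|∂⁻φ|²(u) ≤ liminf 2 a_k` a.e. (`SeqData.relaxedSlope_le`), and the energy inequality follows
from Fatou's lemma and lower semicontinuity (`SeqData.exists_curve`).

If the relaxed slope is an upper gradient, the energy inequality forces equality in Young's
inequality `|∂⁻φ| |u'| ≤ (|u'|² + |∂⁻φ|²)/2` a.e. (`maximal_slope`).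
-/


open MeasureTheory Filter Topology Set ENNReal

noncomputable section

namespace WED

variable {X : Type*} [MetricSpace X]

/-- The exponential probability measure `μ_ε = ε⁻¹ e^{-t/ε} dt` on `(0,∞)`. -/
def expMeasure (ε : ℝ) : Measure ℝ :=
  (volume.restrict (Ioi (0:ℝ))).withDensity fun t => ENNReal.ofReal (ε⁻¹ * Real.exp (-t / ε))

/-- The positive part of an extended real, as an extended nonnegative real. -/
def epos (x : EReal) : ℝ≥0∞ := if x = ⊤ then ⊤ else ENNReal.ofReal x.toReal

/-- The absolute value of an extended real, as an extended nonnegative real. -/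
def eabs (x : EReal) : ℝ≥0∞ := epos x ⊔ epos (-x)

/-- The (extended-real valued) integral of an extended-real valued function, defined as the
difference between the integrals of the positive and of the negative part. -/
def eIntegral (μ : Measure ℝ) (f : ℝ → EReal) : EReal :=
  ((∫⁻ t, epos (f t) ∂μ : ℝ≥0∞) : EReal) - ((∫⁻ t, epos (-f t) ∂μ : ℝ≥0∞) : EReal)

/-- `m` is *the* metric derivative of the curve `u` on the set `I ⊆ ℝ`:  `m` is a nonnegative
locally integrable function, `d(u s, u t) ≤ ∫_s^t m` (so that `u` is absolutely continuous),
and `m t` is the limit of the difference quotients `d(u s, u t)/|s-t|` at a.e. `t ∈ I`. -/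
structure IsMetricDerivOn (u : ℝ → X) (m : ℝ → ℝ) (I : Set ℝ) : Prop where
  nonneg : ∀ t, 0 ≤ m t
  locInt : ∀ s ∈ I, ∀ t ∈ I, IntegrableOn m (Icc s t) volume
  dist_le : ∀ s ∈ I, ∀ t ∈ I, s ≤ t → dist (u s) (u t) ≤ ∫ r in Icc s t, m r
  limit : ∀ᵐ t ∂(volume.restrict I),
    Tendsto (fun s => dist (u s) (u t) / |s - t|) (𝓝[I \ {t}] t) (𝓝 (m t))

/-- `u ∈ AC²_loc(I; X)`, with metric derivative `m`. -/
def AC2LocOn (u : ℝ → X) (m : ℝ → ℝ) (I : Set ℝ) : Prop :=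
  IsMetricDerivOn u m I ∧ ∀ s ∈ I, ∀ t ∈ I, IntegrableOn (fun r => m r ^ 2) (Icc s t) volume

/-- `u ∈ AC²(I; X)`, with metric derivative `m`. -/
def AC2On (u : ℝ → X) (m : ℝ → ℝ) (I : Set ℝ) : Prop :=
  IsMetricDerivOn u m I ∧ IntegrableOn (fun r => m r ^ 2) I volume

/-- The integrand `(ε/2)|u'|²(t) + φ(u(t))` of the WED functional. -/
def wedIntegrand (φ : X → EReal) (ε : ℝ) (u : ℝ → X) (m : ℝ → ℝ) (t : ℝ) : EReal :=
  ((ε / 2 * m t ^ 2 : ℝ) : EReal) + φ (u t)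

/-- The WED functional `I_ε[u] = ∫₀^∞ ((ε/2)|u'|² + φ(u)) dμ_ε`. -/
def WEDfun (φ : X → EReal) (ε : ℝ) (u : ℝ → X) (m : ℝ → ℝ) : EReal :=
  eIntegral (expMeasure ε) (wedIntegrand φ ε u m)

/-- The admissible class `𝒜_x^ε`: curves `u ∈ AC²_loc([0,∞);X)` (with metric derivative `m`)
with `u 0 = x` and `∫₀^∞ |u'|² dμ_ε < ∞`. -/
def Admissible (ε : ℝ) (x : X) (u : ℝ → X) (m : ℝ → ℝ) : Prop :=
  u 0 = x ∧ AC2LocOn u m (Ici 0) ∧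
    (∫⁻ t, ENNReal.ofReal (m t ^ 2) ∂expMeasure ε) < ⊤

/-- The value function `V_ε(x) = inf { I_ε[u] : u ∈ 𝒜_x^ε }`. -/
def Veps (φ : X → EReal) (ε : ℝ) (x : X) : EReal :=
  ⨅ (p : {p : (ℝ → X) × (ℝ → ℝ) // Admissible ε x p.1 p.2}),
    WEDfun φ ε p.1.1 p.1.2

/-- `u` (with metric derivative `m`) minimizes the WED functional `I_ε` over `𝒜_x^ε`. -/
def IsMinimizer (φ : X → EReal) (ε : ℝ) (x : X) (u : ℝ → X) (m : ℝ → ℝ) : Prop :=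
  Admissible ε x u m ∧
    ∀ v n, Admissible ε x v n → WEDfun φ ε u m ≤ WEDfun φ ε v n

/-- The compatibility conditions (MT1), (MT2) between the distance `d` and the auxiliary
topology `σ`. -/
structure Compatible (σ : TopologicalSpace X) : Prop where
  mt1 : ∀ (u v : ℕ → X) (x y : X), Tendsto u atTop (@nhds X σ x) →
    Tendsto v atTop (@nhds X σ y) →
    ENNReal.ofReal (dist x y) ≤ Filter.liminf (fun n => ENNReal.ofReal (dist (u n) (v n))) atTop
  mt2 : ∀ U : Set X, IsOpen[σ] U → ∀ x ∈ U, ∃ V : Set X, IsOpen[σ] V ∧ x ∈ V ∧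
    ∃ δ : ℝ, 0 < δ ∧ ∀ y : X, Metric.infDist y V < δ → y ∈ U

/-- The standard lower semicontinuity–compactness–coercivity (LSCC) assumptions on a proper
functional `φ : X → (-∞,∞]`, with respect to the auxiliary topology `σ`. -/
structure LSCC (σ : TopologicalSpace X) (φ : X → EReal) (ustar : X) (A B : ℝ) : Prop where
  hA : 0 ≤ A
  hB : 0 ≤ B
  proper : ∃ x, φ x ≠ ⊤
  ne_bot : ∀ x, φ x ≠ ⊥
  lsc : ∀ (u : ℕ → X) (x : X), (∃ C : ℝ, ∀ n k, dist (u n) (u k) ≤ C) →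
    Tendsto u atTop (@nhds X σ x) → φ x ≤ Filter.liminf (fun n => φ (u n)) atTop
  cpt : ∀ u : ℕ → X, (∃ C : ℝ, ∀ n, φ (u n) ≤ (C : EReal)) →
    (∃ C : ℝ, ∀ n k, dist (u n) (u k) ≤ C) →
    ∃ (x : X) (j : ℕ → ℕ), StrictMono j ∧ Tendsto (u ∘ j) atTop (@nhds X σ x)
  coercive : ∀ u v : X, ((-(B * dist u v ^ 2 + (B * dist v ustar ^ 2 + A)) : ℝ) : EReal) ≤ φ u

/-- The local (descending) slope `|∂φ|(x) = limsup_{v→x} (φ(x)-φ(v))⁺/d(x,v)`. -/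
def slope (φ : X → EReal) (x : X) : ℝ≥0∞ :=
  Filter.limsup (fun v => epos (φ x - φ v) / ENNReal.ofReal (dist x v)) (𝓝[≠] x)

/-- The relaxed slope `|∂⁻φ|`: the σ-sequential lower semicontinuous envelope of the local
slope along `d`-bounded sequences with bounded energy. -/
def relaxedSlope (σ : TopologicalSpace X) (φ : X → EReal) (x : X) : ℝ≥0∞ :=
  ⨅ (u : ℕ → X) (_ : Tendsto u atTop (@nhds X σ x))
    (_ : ∃ C : ℝ, ∀ n, dist (u n) x ≤ C ∧ φ (u n) ≤ (C : EReal)),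
    Filter.liminf (fun n => slope φ (u n)) atTop

/-- `G_ε(x) = sqrt(2(φ(x) - V_ε(x))/ε)` if `V_ε(x) < ∞`, and `∞` otherwise. -/
def Geps (φ : X → EReal) (ε : ℝ) (x : X) : ℝ≥0∞ :=
  if Veps φ ε x = ⊤ then ⊤
  else (2 * epos (φ x - Veps φ ε x) / ENNReal.ofReal ε) ^ (1/2 : ℝ)

/-- The measure `|u'| dt` on `I` associated with the speed `m` of a curve. -/
def speedMeasure (m : ℝ → ℝ) (I : Set ℝ) : Measure ℝ :=
  (volume.restrict I).withDensity fun t => ENNReal.ofReal (m t)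

/-- Membership in `L^p(μ)`, `p ∈ [1,∞]`, for an `ℝ≥0∞`-valued function. -/
def MemLpENN (f : ℝ → ℝ≥0∞) (p : ℝ≥0∞) (μ : Measure ℝ) : Prop :=
  if p = ⊤ then ∃ C : ℝ≥0∞, C ≠ ⊤ ∧ ∀ᵐ t ∂μ, f t ≤ C
  else (∫⁻ t, f t ^ p.toReal ∂μ) < ⊤

/-- `g` is an `L^p`-moderated upper gradient for `φ`: for every absolutely continuous curve
`u` (with metric derivative `m`) on a compact interval such that `φ∘u ∈ L^p(|u'|dt)` and
`g∘u ∈ L¹(|u'|dt)`, one has `|φ(u t) - φ(u s)| ≤ ∫_s^t g(u r) |u'|(r) dr`. -/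
def IsModeratedUpperGradient (φ : X → EReal) (g : X → ℝ≥0∞) (p : ℝ≥0∞) : Prop :=
  ∀ (a b : ℝ), a ≤ b → ∀ (u : ℝ → X) (m : ℝ → ℝ), IsMetricDerivOn u m (Icc a b) →
    MemLpENN (fun t => eabs (φ (u t))) p (speedMeasure m (Icc a b)) →
    (∫⁻ t in Icc a b, g (u t) * ENNReal.ofReal (m t)) < ⊤ →
    ∀ s ∈ Icc a b, ∀ t ∈ Icc a b, s ≤ t →
      (φ (u t) ≤ φ (u s) + ((∫⁻ r in Icc s t, g (u r) * ENNReal.ofReal (m r) : ℝ≥0∞) : EReal) ∧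
       φ (u s) ≤ φ (u t) + ((∫⁻ r in Icc s t, g (u r) * ENNReal.ofReal (m r) : ℝ≥0∞) : EReal))

/-- A real function `f` is locally absolutely continuous on `[0,∞)` with density `g`. -/
def RealACLoc (f g : ℝ → ℝ) : Prop :=
  (∀ b : ℝ, 0 ≤ b → IntegrableOn g (Icc 0 b) volume) ∧
  ∀ t : ℝ, 0 ≤ t → f t = f 0 + ∫ r in Icc 0 t, g r

/-- A real function `f` belongs to `AC²_loc([0,∞);ℝ)`, with derivative `g`. -/
def RealAC2Loc (f g : ℝ → ℝ) : Prop :=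
  RealACLoc f g ∧ ∀ b : ℝ, 0 ≤ b → IntegrableOn (fun t => g t ^ 2) (Icc 0 b) volume

/-- The compact-open topology on curves `[0,∞) → X` induced by the auxiliary topology `σ`. -/
def compactOpenOf (σ : TopologicalSpace X) : TopologicalSpace (ℝ → X) :=
  TopologicalSpace.generateFrom
    {S | ∃ (K : Set ℝ) (U : Set X), K ⊆ Ici 0 ∧ IsCompact K ∧ IsOpen[σ] U ∧
      S = {f : ℝ → X | MapsTo f K U}}

/-- The WED slope `|∂_w φ|(x) = limsup_{ε↓0} G_ε(x)`. -/
def wedSlope (φ : X → EReal) (x : X) : ℝ≥0∞ :=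
  Filter.limsup (fun ε => Geps φ ε x) (𝓝[>] (0:ℝ))

/-- The relaxed WED slope `|∂_w^- φ|`. -/
def relaxedWedSlope (σ : TopologicalSpace X) (φ : X → EReal) (x : X) : ℝ≥0∞ :=
  ⨅ (u : ℕ → X) (_ : Tendsto u atTop (@nhds X σ x))
    (_ : ∃ C : ℝ, ∀ n, dist (u n) x ≤ C ∧ φ (u n) ≤ (C : EReal)),
    Filter.liminf (fun n => wedSlope φ (u n)) atTop

/-- The φ-conditioned local slope `|∂̃ψ|(x) = limsup_{v→x, φ(v)→φ(x)} (ψ(x)-ψ(v))⁺/d(x,v)`. -/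
def condSlope (φ ψ : X → EReal) (x : X) : ℝ≥0∞ :=
  Filter.limsup (fun v => epos (ψ x - ψ v) / ENNReal.ofReal (dist x v))
    ((𝓝[≠] x) ⊓ Filter.comap φ (𝓝 (φ x)))

/-- `φ` is geodesically `λ`-convex: every pair of points of `D(φ)` is joined by a
constant-speed geodesic along which `φ` is `λ`-convex. -/
def GeodesicLambdaConvex (φ : X → EReal) (lam : ℝ) : Prop :=
  ∀ v₀ v₁ : X, φ v₀ ≠ ⊤ → φ v₁ ≠ ⊤ → ∃ γ : ℝ → X, γ 0 = v₀ ∧ γ 1 = v₁ ∧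
    (∀ s ∈ Icc (0:ℝ) 1, ∀ t ∈ Icc (0:ℝ) 1, dist (γ s) (γ t) = |t - s| * dist v₀ v₁) ∧
    ∀ t ∈ Icc (0:ℝ) 1, φ (γ t) ≤ ((1 - t : ℝ) : EReal) * φ v₀ + ((t : ℝ) : EReal) * φ v₁ -
      ((lam / 2 * t * (1 - t) * dist v₀ v₁ ^ 2 : ℝ) : EReal)

end WED

namespace WED

variable {X : Type*} [MetricSpace X]

/-! ### The auxiliary topology -/

/-- A perturbation that vanishes in distance does not change the `σ`-limit. -/
theorem Compatible.tendsto_of_dist {σ : TopologicalSpace X} (h : Compatible σ) {ι : Type*}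
    {l : Filter ι} {x y : ι → X} {a : X} (hx : Tendsto x l (@nhds X σ a))
    (hd : Tendsto (fun i => dist (x i) (y i)) l (𝓝 0)) : Tendsto y l (@nhds X σ a) := by
  intro S hS
  obtain ⟨U, hUS, hU, haU⟩ := mem_nhds_iff.1 hS
  obtain ⟨V, hV, haV, δ, hδ, hVU⟩ := h.mt2 U hU a haU
  have h1 : ∀ᶠ i in l, x i ∈ V := hx (hV.mem_nhds haV)
  have h2 : ∀ᶠ i in l, dist (x i) (y i) < δ := hd.eventually (gt_mem_nhds hδ)
  rw [mem_map]
  filter_upwards [h1, h2] with i hi1 hi2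
  refine hUS (hVU _ (lt_of_le_of_lt (Metric.infDist_le_dist_of_mem hi1) ?_))
  rwa [dist_comm]

theorem Compatible.tendsto_of_metric {σ : TopologicalSpace X} (h : Compatible σ) {ι : Type*}
    {l : Filter ι} {y : ι → X} {a : X} (hd : Tendsto (fun i => dist (y i) a) l (𝓝 0)) :
    Tendsto y l (@nhds X σ a) := by
  refine h.tendsto_of_dist (x := fun _ => a) tendsto_const_nhds ?_
  simpa [dist_comm] using hd

/-- Lower semicontinuity of the distance. The upper bounds may converge along any filter finer
than `atTop`, in particular along a nonprincipal ultrafilter. -/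
theorem Compatible.dist_le {σ : TopologicalSpace X} (h : Compatible σ) {x y : ℕ → X} {a b : X}
    (hx : Tendsto x atTop (@nhds X σ a)) (hy : Tendsto y atTop (@nhds X σ b))
    {l : Filter ℕ} [l.NeBot] (hl : l ≤ atTop) {r : ℕ → ℝ} {R : ℝ}
    (hr : ∀ᶠ n in l, dist (x n) (y n) ≤ r n) (hR : Tendsto r l (𝓝 R)) : dist a b ≤ R := by
  have hR0 : 0 ≤ R := ge_of_tendsto hR (hr.mono fun n hn => dist_nonneg.trans hn)
  have h1 := h.mt1 x y a b hx hy
  have h2 : liminf (fun n => ENNReal.ofReal (dist (x n) (y n))) atTop ≤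
      liminf (fun n => ENNReal.ofReal (dist (x n) (y n))) l := liminf_le_liminf_of_le hl
  have h3 : liminf (fun n => ENNReal.ofReal (dist (x n) (y n))) l ≤
      liminf (fun n => ENNReal.ofReal (r n)) l :=
    liminf_le_liminf (hr.mono fun n hn => ENNReal.ofReal_le_ofReal hn)
  rw [(ENNReal.tendsto_ofReal hR).liminf_eq] at h3
  exact (ENNReal.ofReal_le_ofReal_iff hR0).1 (h1.trans (h2.trans h3))

theorem Compatible.unique {σ : TopologicalSpace X} (h : Compatible σ) {x : ℕ → X} {a b : X}
    (hx : Tendsto x atTop (@nhds X σ a)) (hy : Tendsto x atTop (@nhds X σ b)) : a = b := by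
  have := h.dist_le hx hy le_rfl (r := fun _ => 0) (R := 0) (by simp) tendsto_const_nhds
  exact dist_le_zero.1 this

section LSCC

variable {σ : TopologicalSpace X} {φ : X → EReal} {ustar : X} {A B : ℝ}

theorem LSCC.le_of_tendsto (h : LSCC σ φ ustar A B) {u : ℕ → X} {x p : X} {R : ℝ}
    (hb : ∀ᶠ n in atTop, dist (u n) p ≤ R) (hu : Tendsto u atTop (@nhds X σ x)) {r : ℕ → EReal}
    {L : EReal} (hr : ∀ᶠ n in atTop, φ (u n) ≤ r n) (hL : Tendsto r atTop (𝓝 L)) : φ x ≤ L := by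
  obtain ⟨N, hN⟩ := eventually_atTop.1 (hb.and hr)
  have hN' : ∀ n, N ≤ n + N := fun n => Nat.le_add_left _ _
  have h1 : φ x ≤ liminf (fun n => φ (u (n + N))) atTop := by
    refine h.lsc (fun n => u (n + N)) x ⟨R + R, fun n k => ?_⟩ ?_
    · exact (dist_triangle_right _ _ p).trans
        (add_le_add (hN _ (hN' n)).1 (hN _ (hN' k)).1)
    · exact hu.comp (tendsto_add_atTop_nat N)
  have h2 : liminf (fun n => φ (u (n + N))) atTop ≤ liminf (fun n => r (n + N)) atTop :=
    liminf_le_liminf (Eventually.of_forall fun n => (hN _ (hN' n)).2)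
  have h3 : liminf (fun n => r (n + N)) atTop = L :=
    (hL.comp (tendsto_add_atTop_nat N)).liminf_eq
  rw [h3] at h2
  exact h1.trans h2

theorem LSCC.exists_subseq (h : LSCC σ φ ustar A B) {u : ℕ → X} {p : X} {R C : ℝ}
    (hb : ∀ᶠ n in atTop, dist (u n) p ≤ R) (hC : ∀ᶠ n in atTop, φ (u n) ≤ (C : EReal)) :
    ∃ (x : X) (j : ℕ → ℕ), StrictMono j ∧ Tendsto (u ∘ j) atTop (@nhds X σ x) := by
  obtain ⟨N, hN⟩ := eventually_atTop.1 (hb.and hC)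
  have hN' : ∀ n, N ≤ n + N := fun n => Nat.le_add_left _ _
  obtain ⟨x, j, hj, hx⟩ := h.cpt (fun n => u (n + N)) ⟨C, fun n => (hN _ (hN' n)).2⟩
    ⟨R + R, fun n k => (dist_triangle_right _ _ p).trans
        (add_le_add (hN _ (hN' n)).1 (hN _ (hN' k)).1)⟩
  exact ⟨x, fun n => j n + N, fun a b hab => Nat.add_lt_add_right (hj hab) N, hx⟩

theorem LSCC.le_of_metric (h : LSCC σ φ ustar A B) (hc : Compatible σ) {u : ℕ → X} {x : X}
    (hu : Tendsto (fun n => dist (u n) x) atTop (𝓝 0)) {r : ℕ → EReal}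
    {L : EReal} (hr : ∀ᶠ n in atTop, φ (u n) ≤ r n) (hL : Tendsto r atTop (𝓝 L)) : φ x ≤ L := by
  refine h.le_of_tendsto (p := x) (R := 1) ?_ (hc.tendsto_of_metric hu) hr hL
  filter_upwards [hu.eventually (gt_mem_nhds one_pos)] with n hn using hn.le

theorem LSCC.lowerSemicontinuous (h : LSCC σ φ ustar A B) (hc : Compatible σ) {w : ℝ → X}
    (hw : ∀ t, Tendsto (fun s => dist (w s) (w t)) (𝓝 t) (𝓝 0)) :
    LowerSemicontinuous (fun t => φ (w t)) := by
  rw [lowerSemicontinuous_iff_isClosed_preimage]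
  intro y
  refine IsSeqClosed.isClosed ?_
  intro t x ht hx
  exact h.le_of_metric hc ((hw x).comp hx) (r := fun _ => y)
    (Eventually.of_forall ht) tendsto_const_nhds

end LSCC

/-! ### Compactness of sequences of curves -/

/-- Cantor's diagonal argument for a countable family of properties of extractions. -/
theorem exists_diagonal (P : ℕ → (ℕ → ℕ) → Prop)
    (hsub : ∀ (n : ℕ) (j : ℕ → ℕ), StrictMono j → ∃ i : ℕ → ℕ, StrictMono i ∧ P n (j ∘ i))
    (htail : ∀ (n : ℕ) (j j' : ℕ → ℕ), P n j →
      (∃ i : ℕ → ℕ, Tendsto i atTop atTop ∧ ∀ᶠ k in atTop, j' k = j (i k)) → P n j') :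
    ∃ j : ℕ → ℕ, StrictMono j ∧ ∀ n, P n j := by
  choose! i hi hP using hsub
  let Φ : ℕ → ℕ → ℕ := fun n => Nat.rec (i 0 id) (fun n j => j ∘ i (n + 1) j) n
  have hΦ0 : Φ 0 = i 0 id := rfl
  have hΦs : ∀ n, Φ (n + 1) = Φ n ∘ i (n + 1) (Φ n) := fun n => rfl
  have hmono : ∀ n, StrictMono (Φ n) := by
    intro n
    induction n with
    | zero => exact hi 0 id strictMono_id
    | succ n ih => rw [hΦs]; exact ih.comp (hi _ _ ih)
  have hPΦ : ∀ n, P n (Φ n) := by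
    intro n
    cases n with
    | zero => simpa [hΦ0] using hP 0 id strictMono_id
    | succ n => rw [hΦs]; exact hP _ _ (hmono n)
  -- each later extraction factors through the earlier ones
  have hfac : ∀ n d, ∃ q : ℕ → ℕ, StrictMono q ∧ Φ (n + d) = Φ n ∘ q := by
    intro n d
    induction d with
    | zero => exact ⟨id, strictMono_id, rfl⟩
    | succ d ih =>
      obtain ⟨q, hq, hqe⟩ := ih
      refine ⟨q ∘ i (n + d + 1) (Φ (n + d)), hq.comp (hi _ _ (hmono _)), ?_⟩
      rw [← add_assoc, hΦs]
      conv_lhs => rw [hqe]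
      rw [hqe]
      rfl
  refine ⟨fun k => Φ k k, ?_, fun n => ?_⟩
  · refine strictMono_nat_of_lt_succ fun k => ?_
    rw [hΦs]
    exact hmono k (lt_of_lt_of_le (Nat.lt_succ_self k) ((hi _ _ (hmono k)).id_le _))
  · choose q hq hqe using hfac n
    refine htail n (Φ n) _ (hPΦ n) ⟨fun k => q (k - n) k, ?_, ?_⟩
    · exact tendsto_atTop_mono (fun k => (hq _).id_le k) tendsto_id
    · filter_upwards [eventually_ge_atTop n] with k hk
      have := hqe (k - n)
      rw [Nat.add_sub_cancel' hk] at this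
      rw [this]; rfl

/-- A version of the Arzelà–Ascoli theorem: asymptotically equicontinuous curves which are
relatively `σ`-compact on a dense set of times converge pointwise, along a subsequence. -/
theorem Compatible.exists_subseq_curve [CompleteSpace X] {σ : TopologicalSpace X}
    (h : Compatible σ) (f : ℕ → ℝ → X)
    (heq : ∀ t, 0 ≤ t → ∀ η > 0, ∃ ρ > 0, ∀ s, 0 ≤ s → |s - t| < ρ →
      ∀ᶠ k in atTop, dist (f k s) (f k t) ≤ η)
    (q : ℕ → ℝ) (hq0 : ∀ n, 0 ≤ q n)
    (hqd : ∀ t, 0 ≤ t → ∀ ρ > 0, ∃ n, |q n - t| < ρ)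
    (hcpt : ∀ n (j : ℕ → ℕ), StrictMono j → ∃ (x : X) (i : ℕ → ℕ), StrictMono i ∧
      Tendsto (fun k => f (j (i k)) (q n)) atTop (@nhds X σ x)) :
    ∃ j : ℕ → ℕ, StrictMono j ∧ ∃ u : ℝ → X, ∀ t, 0 ≤ t →
      Tendsto (fun k => f (j k) t) atTop (@nhds X σ (u t)) := by
  obtain ⟨j, hj, hjP⟩ := exists_diagonal
    (fun n j => ∃ x : X, Tendsto (fun k => f (j k) (q n)) atTop (@nhds X σ x))
    (fun n j hj => by
      obtain ⟨x, i, hi, hx⟩ := hcpt n j hj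
      exact ⟨i, hi, x, hx⟩)
    (fun n j j' ⟨x, hx⟩ ⟨i, hi, hij⟩ => ⟨x, by
      refine (hx.comp hi).congr' ?_
      filter_upwards [hij] with k hk
      simp [hk]⟩)
  choose g hg using hjP
  refine ⟨j, hj, ?_⟩
  suffices H : ∀ t, 0 ≤ t → ∃ x, Tendsto (fun k => f (j k) t) atTop (@nhds X σ x) by
    have : Nonempty X := ⟨f 0 0⟩
    choose! u hu using H
    exact ⟨u, hu⟩
  intro t ht
  have hdist : ∀ η > 0, ∃ ρ > 0, ∀ n n', |q n - t| < ρ → |q n' - t| < ρ →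
      dist (g n) (g n') ≤ η := by
    intro η hη
    obtain ⟨ρ, hρ, hρ'⟩ := heq t ht (η / 2) (half_pos hη)
    refine ⟨ρ, hρ, fun n n' hn hn' => ?_⟩
    refine h.dist_le (hg n) (hg n') le_rfl (r := fun _ => η) ?_ tendsto_const_nhds
    have h1 := hj.tendsto_atTop.eventually (hρ' _ (hq0 n) hn)
    have h2 := hj.tendsto_atTop.eventually (hρ' _ (hq0 n') hn')
    filter_upwards [h1, h2] with k hk1 hk2
    have := dist_triangle_right (f (j k) (q n)) (f (j k) (q n')) (f (j k) t)
    linarith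
  choose n hn using fun i : ℕ => hqd t ht (1 / ((i : ℝ) + 1)) (by positivity)
  have hsmall : ∀ ρ > 0, ∀ᶠ i in atTop, |q (n i) - t| < ρ := by
    intro ρ hρ
    filter_upwards [tendsto_one_div_add_atTop_nhds_zero_nat.eventually (gt_mem_nhds hρ)] with i hi
    exact (hn i).trans hi
  have hC : CauchySeq (fun i => g (n i)) := by
    rw [Metric.cauchySeq_iff']
    intro η hη
    obtain ⟨ρ, hρ, hρ'⟩ := hdist (η / 2) (half_pos hη)
    obtain ⟨N, hN⟩ := eventually_atTop.1 (hsmall ρ hρ)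
    exact ⟨N, fun m hm => lt_of_le_of_lt (hρ' _ _ (hN m hm) (hN N le_rfl)) (by linarith)⟩
  obtain ⟨x, hx⟩ := cauchySeq_tendsto_of_complete hC
  have hx' := tendsto_iff_dist_tendsto_zero.1 hx
  refine ⟨x, fun S hS => ?_⟩
  obtain ⟨U, hUS, hU, haU⟩ := mem_nhds_iff.1 hS
  obtain ⟨V, hV, haV, δ, hδ, hVU⟩ := h.mt2 U hU x haU
  obtain ⟨ρ, hρ, hρ'⟩ := heq t ht (δ / 2) (half_pos hδ)
  have h1 : ∀ᶠ i in atTop, g (n i) ∈ V :=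
    (h.tendsto_of_metric hx') (hV.mem_nhds haV)
  obtain ⟨i, hi1, hi2⟩ := (h1.and (hsmall ρ hρ)).exists
  have h2 : ∀ᶠ k in atTop, f (j k) (q (n i)) ∈ V :=
    (hg (n i)) (hV.mem_nhds hi1)
  have h3 := hj.tendsto_atTop.eventually (hρ' _ (hq0 (n i)) hi2)
  rw [mem_map]
  filter_upwards [h2, h3] with k hk2 hk3
  refine hUS (hVU _ (lt_of_le_of_lt (Metric.infDist_le_dist_of_mem hk2) ?_))
  rw [dist_comm]
  linarith

/-! ### Existence of the metric derivative -/

/-- The increments of a monotone function over disjoint intervals of `[a, b]` add up to at most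
its total increment. -/
theorem sum_increment_le {F : ℝ → ℝ} (hF : Monotone F) {ι : Type*} [DecidableEq ι]
    (l r : ι → ℝ) (a : ℝ) (S : Finset ι) :
    ∀ b, a ≤ b → (∀ i ∈ S, a ≤ l i ∧ l i < r i ∧ r i ≤ b) →
    (∀ i ∈ S, ∀ j ∈ S, i ≠ j → Disjoint (Ioc (l i) (r i)) (Ioc (l j) (r j))) →
    ∑ i ∈ S, (F (r i) - F (l i)) ≤ F b - F a := by
  induction S using Finset.induction_on_max_value r with
  | empty => intro b hb _ _; simpa using hF hb
  | insert i s his hmax ih =>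
    intro b hb hS hd
    rw [Finset.sum_insert his]
    have hi := hS i (Finset.mem_insert_self _ _)
    have h1 := ih (l i) hi.1 (fun j hj => by
      have hj' := hS j (Finset.mem_insert_of_mem hj)
      refine ⟨hj'.1, hj'.2.1, ?_⟩
      by_contra hlt
      push Not at hlt
      have hne : i ≠ j := fun h => his (h ▸ hj)
      have := hd i (Finset.mem_insert_self _ _) j (Finset.mem_insert_of_mem hj) hne
      exact Set.disjoint_left.1 this ⟨hlt, hmax j hj⟩ ⟨hj'.2.1, le_rfl⟩)
      (fun j hj k hk hjk => hd j (Finset.mem_insert_of_mem hj) k (Finset.mem_insert_of_mem hk) hjk)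
    have h2 := hF hi.2.2
    linarith

theorem absolutelyContinuous_of_sq_le {f F : ℝ → ℝ} (hF : Monotone F)
    (hf : ∀ s t, s ≤ t → |f s - f t| ^ 2 ≤ (t - s) * (F t - F s)) {a b : ℝ} (hab : a ≤ b) :
    AbsolutelyContinuousOnInterval f a b := by
  classical
  rw [absolutelyContinuousOnInterval_iff]
  intro ε hε
  have hK : 0 ≤ F b - F a := sub_nonneg.2 (hF hab)
  refine ⟨ε ^ 2 / (F b - F a + 1), by positivity, ?_⟩
  rintro ⟨N, E⟩ ⟨hE1, hE2⟩ hsum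
  simp only at hE1 hE2 hsum ⊢
  rw [uIcc_of_le hab] at hE1
  set l : ℕ → ℝ := fun i => min (E i).1 (E i).2 with hl
  set r : ℕ → ℝ := fun i => max (E i).1 (E i).2 with hr
  have hlr : ∀ i, l i ≤ r i := fun i => min_le_max
  have hdist : ∀ i, dist (E i).1 (E i).2 = r i - l i := fun i => by
    rw [Real.dist_eq, hr, hl]; simp [max_sub_min_eq_abs']
  have hf' : ∀ i, dist (f (E i).1) (f (E i).2) ≤
      √(r i - l i) * √(F (r i) - F (l i)) := by
    intro i
    rw [← Real.sqrt_mul (sub_nonneg.2 (hlr i))]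
    refine Real.le_sqrt_of_sq_le ?_
    refine le_trans (le_of_eq ?_) (hf _ _ (hlr i))
    rw [Real.dist_eq, hl, hr]
    rcases le_total (E i).1 (E i).2 with h | h
    · simp [h]
    · simp [h, abs_sub_comm]
  have hFsum : ∑ i ∈ Finset.range N, (F (r i) - F (l i)) ≤ F b - F a := by
    have h1 : ∑ i ∈ Finset.range N, (F (r i) - F (l i)) =
        ∑ i ∈ (Finset.range N).filter (fun i => l i < r i), (F (r i) - F (l i)) := by
      rw [Finset.sum_filter]
      refine Finset.sum_congr rfl fun i _ => ?_
      split_ifs with h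
      · rfl
      · rw [le_antisymm (hlr i) (not_lt.1 h), sub_self]
    rw [h1]
    refine sum_increment_le hF l r a _ b hab ?_ ?_
    · intro i hi
      rw [Finset.mem_filter] at hi
      have := hE1 i hi.1
      exact ⟨le_min this.1.1 this.2.1, hi.2, max_le this.1.2 this.2.2⟩
    · intro i hi j hj hij
      exact hE2 (by simpa using (Finset.mem_filter.1 hi).1)
        (by simpa using (Finset.mem_filter.1 hj).1) hij
  simp only [hdist] at hsum
  calc ∑ i ∈ Finset.range N, dist (f (E i).1) (f (E i).2)
      ≤ ∑ i ∈ Finset.range N, √(r i - l i) * √(F (r i) - F (l i)) :=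
        Finset.sum_le_sum fun i _ => hf' i
    _ ≤ √(∑ i ∈ Finset.range N, (r i - l i)) * √(∑ i ∈ Finset.range N, (F (r i) - F (l i))) :=
        Real.sum_sqrt_mul_sqrt_le _ (fun i => sub_nonneg.2 (hlr i))
          (fun i => sub_nonneg.2 (hF (hlr i)))
    _ ≤ √(ε ^ 2 / (F b - F a + 1)) * √(F b - F a) := by gcongr
    _ = √(ε ^ 2 / (F b - F a + 1) * (F b - F a)) := (Real.sqrt_mul (by positivity) _).symm
    _ < ε := by
        rw [Real.sqrt_lt' hε, div_mul_eq_mul_div, div_lt_iff₀ (by positivity)]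
        nlinarith [sq_pos_of_pos hε]

/-- A curve whose squared increments are controlled by a monotone function `F` is in
`AC²_loc`, and its metric derivative satisfies `|u'|² ≤ F'`. The metric derivative is the
supremum of the derivatives of the distances from countably many points of the curve. -/
theorem exists_metricDeriv {u : ℝ → X} {F : ℝ → ℝ} (hF : Monotone F)
    (hu : ∀ s t, s ≤ t → dist (u s) (u t) ^ 2 ≤ (t - s) * (F t - F s)) :
    ∃ m : ℝ → ℝ, AC2LocOn u m (Ici 0) ∧ ∀ᵐ t, m t ^ 2 ≤ deriv F t := by
  set q : ℕ → ℝ := TopologicalSpace.denseSeq ℝ with hq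
  set f : ℕ → ℝ → ℝ := fun n t => dist (u t) (u (q n)) with hf
  have hfd : ∀ n s t, |f n s - f n t| ≤ dist (u s) (u t) := fun n s t =>
    abs_dist_sub_le (u s) (u t) (u (q n))
  have hf2 : ∀ n s t, s ≤ t → |f n s - f n t| ^ 2 ≤ (t - s) * (F t - F s) := fun n s t hst =>
    (pow_le_pow_left₀ (abs_nonneg _) (hfd n s t) 2).trans (hu s t hst)
  have hAC : ∀ n a b, a ≤ b → AbsolutelyContinuousOnInterval (f n) a b := fun n a b hab =>
    absolutelyContinuous_of_sq_le hF (hf2 n) hab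
  -- distances between points of the curve are recovered from the functions `f n`
  have hcont : Continuous u := by
    rw [Metric.continuous_iff]
    intro b ε hε
    set K := F (b + 1) - F (b - 1) with hK
    have hK0 : 0 ≤ K := sub_nonneg.2 (hF (by linarith))
    refine ⟨min 1 (ε ^ 2 / (K + 1)), by positivity, fun a ha => ?_⟩
    rw [Real.dist_eq] at ha
    have ha1 := abs_lt.1 (ha.trans_le (min_le_left _ _))
    have ha2 := ha.trans_le (min_le_right _ _)
    have h1 : dist (u a) (u b) ^ 2 ≤ |a - b| * K := by
      rcases le_total a b with h | h
      · refine (hu a b h).trans ?_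
        rw [abs_sub_comm, abs_of_nonneg (sub_nonneg.2 h)]
        have h1 := hF (show b ≤ b + 1 by linarith)
        have h2 := hF (show b - 1 ≤ a by linarith)
        exact mul_le_mul_of_nonneg_left (by linarith) (sub_nonneg.2 h)
      · rw [dist_comm]
        refine (hu b a h).trans ?_
        rw [abs_of_nonneg (sub_nonneg.2 h)]
        have h1 := hF (show a ≤ b + 1 by linarith)
        have h2 := hF (show b - 1 ≤ b by linarith)
        exact mul_le_mul_of_nonneg_left (by linarith) (sub_nonneg.2 h)
    have h2 : |a - b| * K < ε ^ 2 := by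
      rw [lt_div_iff₀ (by positivity)] at ha2
      nlinarith [abs_nonneg (a - b)]
    exact lt_of_pow_lt_pow_left₀ 2 hε.le (h1.trans_lt h2)
  have hsup : ∀ s t c, (∀ n, |f n s - f n t| ≤ c) → dist (u s) (u t) ≤ c := by
    intro s t c hc
    refine le_of_forall_pos_le_add fun η hη => ?_
    have hopen : IsOpen {r | dist (u s) (u r) < η / 2} :=
      isOpen_lt (continuous_const.dist hcont) continuous_const
    obtain ⟨n, hn⟩ := (TopologicalSpace.denseRange_denseSeq ℝ).exists_mem_open hopen
      ⟨s, by simpa using half_pos hη⟩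
    have hn' : dist (u s) (u (q n)) < η / 2 := hn
    have h1 := abs_le.1 (hc n)
    have h2 := dist_triangle_left (u s) (u t) (u (q n))
    have h3 : f n s = dist (u s) (u (q n)) := rfl
    have h4 : f n t = dist (u t) (u (q n)) := rfl
    rw [dist_comm (u (q n)) (u s), dist_comm (u (q n)) (u t)] at h2
    linarith [h1.1, h1.2]
  -- almost everywhere differentiability
  have hdiff : ∀ᵐ t, ∀ n, DifferentiableAt ℝ (f n) t := by
    rw [ae_all_iff]
    intro n
    have h1 : ∀ᵐ t, ∀ N : ℕ, t ∈ uIcc (-(N:ℝ)) N → DifferentiableAt ℝ (f n) t := by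
      rw [ae_all_iff]
      exact fun N => (hAC n (-(N:ℝ)) N (by linarith [N.cast_nonneg (α := ℝ)])).ae_differentiableAt
    filter_upwards [h1] with t ht
    obtain ⟨N, hN⟩ := exists_nat_ge |t|
    refine ht N ?_
    rw [uIcc_of_le (by linarith [N.cast_nonneg (α := ℝ)])]
    exact abs_le.1 hN
  have hFdiff := hF.ae_differentiableAt
  set me : ℝ → ℝ≥0∞ := fun t => ⨆ n, ENNReal.ofReal |deriv (f n) t| with hme
  have hme_meas : Measurable me := Measurable.iSup fun n =>
    ENNReal.measurable_ofReal.comp ((measurable_deriv (f n)).abs)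
  set m : ℝ → ℝ := fun t => (me t).toReal with hm
  have hm_meas : Measurable m := hme_meas.ennreal_toReal
  have hm0 : ∀ t, 0 ≤ m t := fun t => ENNReal.toReal_nonneg
  have hderiv_le : ∀ᵐ t, ∀ n, |deriv (f n) t| ≤ √(deriv F t) := by
    filter_upwards [hdiff, hFdiff] with t ht hFt n
    have h1 := hasDerivAt_iff_tendsto_slope.1 (ht n).hasDerivAt
    have h2 := hasDerivAt_iff_tendsto_slope.1 hFt.hasDerivAt
    refine Real.le_sqrt_of_sq_le ?_
    rw [sq_abs]
    refine le_of_tendsto_of_tendsto (h1.pow 2) h2 ?_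
    filter_upwards [self_mem_nhdsWithin] with s hs
    have hs' : s - t ≠ 0 := sub_ne_zero.2 hs
    simp only [slope_def_field]
    have h3 : (f n s - f n t) ^ 2 ≤ (s - t) * (F s - F t) := by
      rcases le_total s t with h | h
      · have := hf2 n s t h
        rw [sq_abs] at this
        linarith
      · have := hf2 n t s h
        rw [sq_abs] at this
        linarith [sub_sq_comm (f n s) (f n t)]
    have h4 : (F s - F t) / (s - t) = (s - t) * (F s - F t) / (s - t) ^ 2 := by
      field_simp
    rw [div_pow, h4]
    gcongr
  have hle_m : ∀ᵐ t, (∀ n, |deriv (f n) t| ≤ m t) ∧ m t ^ 2 ≤ deriv F t ∧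
      (∀ c < m t, ∃ n, c < |deriv (f n) t|) := by
    filter_upwards [hderiv_le] with t ht
    have h0 : 0 ≤ deriv F t := hF.deriv_nonneg
    have h1 : me t ≤ ENNReal.ofReal √(deriv F t) :=
      iSup_le fun n => ENNReal.ofReal_le_ofReal (ht n)
    have h2 : me t ≠ ⊤ := (h1.trans_lt ENNReal.ofReal_lt_top).ne
    refine ⟨fun n => ?_, ?_, fun c hc => ?_⟩
    · exact (ENNReal.ofReal_le_iff_le_toReal h2).1 (le_iSup (fun n => ENNReal.ofReal |deriv (f n) t|) n)
    · have h3 : m t ≤ √(deriv F t) := by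
        have := ENNReal.toReal_mono ENNReal.ofReal_ne_top h1
        rwa [ENNReal.toReal_ofReal (Real.sqrt_nonneg _)] at this
      calc m t ^ 2 ≤ √(deriv F t) ^ 2 := pow_le_pow_left₀ (hm0 t) h3 2
        _ = deriv F t := Real.sq_sqrt h0
    · by_contra hcon
      push Not at hcon
      have hc0 : 0 ≤ c := (abs_nonneg _).trans (hcon 0)
      have h3 : me t ≤ ENNReal.ofReal c := iSup_le fun n => ENNReal.ofReal_le_ofReal (hcon n)
      have h4 := ENNReal.toReal_mono ENNReal.ofReal_ne_top h3
      rw [ENNReal.toReal_ofReal hc0] at h4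
      exact absurd hc (not_lt.2 h4)
  have hm2_int : ∀ a b, IntegrableOn (fun t => m t ^ 2) (Icc a b) := by
    intro a b
    rcases le_or_gt a b with hab | hab
    · have h1 : IntegrableOn (deriv F) (Icc a b) := by
        rw [← intervalIntegrable_iff_integrableOn_Icc_of_le hab]
        exact MonotoneOn.intervalIntegrable_deriv (hF.monotoneOn _)
      refine Integrable.mono' h1 (hm_meas.pow_const 2).aestronglyMeasurable ?_
      filter_upwards [ae_restrict_of_ae hle_m] with t ht
      rw [Real.norm_of_nonneg (by positivity)]
      exact ht.2.1
    · simp [Icc_eq_empty_of_lt hab]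
  have hm_int : ∀ a b, IntegrableOn m (Icc a b) := by
    intro a b
    have h1 : IntegrableOn (fun t => 1 + m t ^ 2) (Icc a b) :=
      (integrableOn_const (by simp)).add (hm2_int a b)
    refine Integrable.mono' h1 hm_meas.aestronglyMeasurable (Eventually.of_forall fun t => ?_)
    rw [Real.norm_of_nonneg (hm0 t)]
    nlinarith [sq_nonneg (m t - 1)]
  have hdist : ∀ s t, s ≤ t → dist (u s) (u t) ≤ ∫ r in s..t, m r := by
    intro s t hst
    refine hsup s t _ fun n => ?_
    rw [abs_sub_comm, ← (hAC n s t hst).integral_deriv_eq_sub]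
    refine (intervalIntegral.abs_integral_le_integral_abs hst).trans ?_
    refine intervalIntegral.integral_mono_ae hst (hAC n s t hst).intervalIntegrable_deriv.abs
      ((intervalIntegrable_iff_integrableOn_Icc_of_le hst).2 (hm_int s t)) ?_
    filter_upwards [hle_m] with r hr using hr.1 n
  have hlocint : LocallyIntegrable m := by
    rw [locallyIntegrable_iff]
    intro K hK
    obtain ⟨a, ha⟩ := hK.bddBelow
    obtain ⟨b, hb⟩ := hK.bddAbove
    exact (hm_int a b).mono_set fun x hx => ⟨ha hx, hb hx⟩
  refine ⟨m, ⟨⟨hm0, fun s _ t _ => hm_int s t, ?_, ?_⟩, fun s _ t _ => hm2_int s t⟩,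
    hle_m.mono fun t ht => ht.2.1⟩
  · intro s _ t _ hst
    rw [integral_Icc_eq_integral_Ioc, ← intervalIntegral.integral_of_le hst]
    exact hdist s t hst
  · refine ae_restrict_of_ae ?_
    filter_upwards [hle_m, hdiff, LocallyIntegrable.ae_hasDerivAt_integral hlocint] with t ht htd hti
    refine Tendsto.mono_left ?_ (nhdsWithin_mono t (fun s hs => hs.2 : Ici (0:ℝ) \ {t} ⊆ {t}ᶜ))
    rw [tendsto_order]
    constructor
    · intro c hc
      obtain ⟨n, hn⟩ := ht.2.2 c hc
      have h1 := (hasDerivAt_iff_tendsto_slope.1 (htd n).hasDerivAt).abs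
      filter_upwards [h1.eventually (lt_mem_nhds hn), self_mem_nhdsWithin] with s hs hst
      refine hs.trans_le ?_
      rw [slope_def_field, abs_div]
      gcongr
      exact hfd n s t
    · intro c hc
      have h1 := (hasDerivAt_iff_tendsto_slope.1 (hti 0))
      filter_upwards [h1.eventually (gt_mem_nhds hc), self_mem_nhdsWithin] with s hs hst
      refine lt_of_le_of_lt ?_ hs
      have hii : ∀ a b, IntervalIntegrable m volume a b := fun a b =>
        (intervalIntegrable_iff.2 ((hm_int _ _).mono_set Ioc_subset_Icc_self))
      rw [slope_def_field, intervalIntegral.integral_interval_sub_left (hii _ _) (hii _ _)]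
      rcases lt_or_gt_of_ne (show s ≠ t from hst) with h | h
      · rw [intervalIntegral.integral_symm, abs_sub_comm, abs_of_pos (sub_pos.2 h), ← neg_sub t s,
          neg_div_neg_eq]
        have := sub_pos.2 h
        gcongr
        exact hdist s t h.le
      · rw [abs_of_pos (sub_pos.2 h)]
        have := sub_pos.2 h
        gcongr
        rw [dist_comm]
        exact hdist t s h.le

/-! ### Descent curves -/

theorem exists_of_lt_slope {φ : X → EReal} {x : X} {c : ℝ≥0∞} (h : c < slope φ x) {η : ℝ}
    (hη : 0 < η) :
    ∃ z, dist x z < η ∧ z ≠ x ∧ c < epos (φ x - φ z) / ENNReal.ofReal (dist x z) := by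
  have h2 := frequently_lt_of_lt_limsup (by isBoundedDefault) h
  have h3 : ∀ᶠ z in 𝓝[≠] x, dist x z < η := nhdsWithin_le_nhds (by
    filter_upwards [Metric.ball_mem_nhds x hη] with z hz
    rwa [Metric.mem_ball, dist_comm] at hz)
  have h4 : ∀ᶠ z in 𝓝[≠] x, z ≠ x := self_mem_nhdsWithin
  obtain ⟨z, hz1, hz2, hz3⟩ := (h2.and_eventually (h3.and h4)).exists
  exact ⟨z, hz2, hz3, hz1⟩

section Descent

variable {σ : TopologicalSpace X} {φ : X → EReal} {ustar : X} {A B : ℝ}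

/-- Minimizing `w ↦ φ w + c d(y,w)` over a closed ball of radius `δ`: where the slope exceeds `c`
the minimizer is on the boundary, so the energy drops by at least `c δ`. -/
theorem LSCC.exists_descent_step (h : LSCC σ φ ustar A B) (hc : Compatible σ) {y : X}
    {p c δ : ℝ} (hc0 : 0 < c) (hδ : 0 < δ) (hy : φ y ≤ (p : EReal))
    (hs : ∀ v, dist y v ≤ δ → φ v ≤ (p : EReal) → ENNReal.ofReal c < slope φ v) :
    ∃ v, dist y v ≤ δ ∧ φ v ≤ ((p - c * δ : ℝ) : EReal) := by
  set S : Set ℝ := {a | ∃ w, dist y w ≤ δ ∧ φ w ≤ ((a - c * dist y w : ℝ) : EReal)} with hS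
  have hpS : p ∈ S := ⟨y, by simpa using hδ.le, by simpa using hy⟩
  have hbdd : BddBelow S := by
    refine ⟨-(B * δ ^ 2 + (B * dist y ustar ^ 2 + A)), ?_⟩
    rintro a ⟨w, hw, hwa⟩
    have h1 := EReal.coe_le_coe_iff.1 ((h.coercive w y).trans hwa)
    have h2 : dist w y ^ 2 ≤ δ ^ 2 := by
      rw [dist_comm]; exact pow_le_pow_left₀ dist_nonneg hw 2
    have h3 := mul_le_mul_of_nonneg_left h2 h.hB
    have h4 : 0 ≤ c * dist y w := by positivity
    linarith
  set i := sInf S with hi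
  obtain ⟨a, -, hai, haS⟩ := exists_seq_tendsto_sInf ⟨p, hpS⟩ hbdd
  rw [← hi] at hai
  choose w hwδ hwa using haS
  obtain ⟨D, -, j, hj, hD⟩ := isCompact_Icc.tendsto_subseq
    (x := fun n => dist y (w n)) (s := Icc 0 δ) (fun n => ⟨dist_nonneg, hwδ n⟩)
  have hij : ∀ᶠ n in atTop, a (j n) < i + 1 :=
    (hai.comp hj.tendsto_atTop).eventually (gt_mem_nhds (by linarith))
  obtain ⟨v, k, hk, hv⟩ := h.exists_subseq (u := w ∘ j) (p := y) (R := δ) (C := i + 1)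
    (Eventually.of_forall fun n => by rw [dist_comm]; exact hwδ _)
    (hij.mono fun n hn => (hwa _).trans (EReal.coe_le_coe_iff.2 (by
      have : 0 ≤ c * dist y (w (j n)) := by positivity
      linarith)))
  have hDk : Tendsto (fun n => dist y (w (j (k n)))) atTop (𝓝 D) := hD.comp hk.tendsto_atTop
  have hak : Tendsto (fun n => a (j (k n))) atTop (𝓝 i) :=
    hai.comp (hj.tendsto_atTop.comp hk.tendsto_atTop)
  have hvD : dist y v ≤ D := hc.dist_le (x := fun _ => y) tendsto_const_nhds hv le_rfl
    (Eventually.of_forall fun n => le_rfl) hDk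
  have hvδ : dist y v ≤ δ := hvD.trans (le_of_tendsto' hDk fun n => hwδ _)
  have hφv : φ v ≤ ((i - c * dist y v : ℝ) : EReal) := by
    have h1 : φ v ≤ ((i - c * D : ℝ) : EReal) :=
      h.le_of_tendsto (p := y) (R := δ) (Eventually.of_forall fun n => by
        rw [dist_comm]; exact hwδ _) hv (Eventually.of_forall fun n => hwa _)
        ((continuous_coe_real_ereal.tendsto _).comp (hak.sub (hDk.const_mul c)))
    refine h1.trans (EReal.coe_le_coe_iff.2 ?_)
    have := mul_le_mul_of_nonneg_left hvD hc0.le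
    linarith
  have hip : i ≤ p := csInf_le hbdd hpS
  have hge : δ ≤ dist y v := by
    by_contra hlt
    push Not at hlt
    have hφvp : φ v ≤ (p : EReal) := hφv.trans (EReal.coe_le_coe_iff.2 (by
      have : 0 ≤ c * dist y v := by positivity
      linarith))
    have h1 := hs v hvδ hφvp
    obtain ⟨z, hz2, hz3, hz1⟩ := exists_of_lt_slope h1 (sub_pos.2 hlt)
    have hd : 0 < dist v z := dist_pos.2 (Ne.symm hz3)
    have htri := dist_triangle y v z
    rw [ENNReal.lt_div_iff_mul_lt (Or.inl (by simpa using hz3.symm)) (Or.inl ENNReal.ofReal_ne_top),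
      ← ENNReal.ofReal_mul hc0.le] at hz1
    have hvtop : φ v ≠ ⊤ := (hφvp.trans_lt (EReal.coe_lt_top p)).ne
    lift φ v to ℝ using ⟨hvtop, h.ne_bot v⟩ with pv hpv
    have hztop : φ z ≠ ⊤ := by
      intro hz
      rw [hz, EReal.sub_top] at hz1
      simp [epos] at hz1
    have hzb := h.ne_bot z
    obtain ⟨pz, hpz⟩ : ∃ q : ℝ, (q : EReal) = φ z := ⟨_, EReal.coe_toReal hztop hzb⟩
    rw [← hpz, ← EReal.coe_sub] at hz1
    simp only [epos, EReal.coe_ne_top, if_false, EReal.toReal_coe] at hz1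
    rw [ENNReal.ofReal_lt_ofReal_iff_of_nonneg (by positivity)] at hz1
    have h5 : i ≤ pz + c * dist y z := csInf_le hbdd ⟨z, by linarith, by
      rw [← hpz]; exact EReal.coe_le_coe_iff.2 (by linarith)⟩
    have h6 := EReal.coe_le_coe_iff.1 hφv
    have h7 := mul_le_mul_of_nonneg_left htri hc0.le
    linarith
  refine ⟨v, hvδ, hφv.trans (EReal.coe_le_coe_iff.2 ?_)⟩
  have := mul_le_mul_of_nonneg_left hge hc0.le
  linarith

theorem LSCC.exists_descent_chain (h : LSCC σ φ ustar A B) (hc : Compatible σ) {x : X}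
    {p c r : ℝ} (hc0 : 0 < c) (hr : 0 < r) (hx : φ x ≤ (p : EReal))
    (hs : ∀ v, dist x v ≤ r → φ v ≤ (p : EReal) → ENNReal.ofReal c < slope φ v)
    {N : ℕ} (hN : 0 < N) :
    ∃ y : ℕ → X, y 0 = x ∧ (∀ i, dist (y i) (y (i + 1)) ≤ r / N) ∧
      ∀ i ≤ N, φ (y i) ≤ ((p - c * (i * (r / N)) : ℝ) : EReal) := by
  have hN' : (0:ℝ) < N := by exact_mod_cast hN
  have hδ : 0 < r / N := by positivity
  suffices H : ∀ n ≤ N, ∃ y : ℕ → X, y 0 = x ∧ (∀ i, dist (y i) (y (i + 1)) ≤ r / N) ∧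
      ∀ i ≤ n, φ (y i) ≤ ((p - c * (i * (r / N)) : ℝ) : EReal) from H N le_rfl
  intro n
  induction n with
  | zero =>
    intro _
    refine ⟨fun _ => x, rfl, fun i => by simpa using hδ.le, fun i hi => ?_⟩
    obtain rfl : i = 0 := by omega
    simpa using hx
  | succ n ih =>
    intro hn
    obtain ⟨y, hy0, hyd, hyφ⟩ := ih (by omega)
    have hdx : dist x (y n) ≤ n * (r / N) := by
      have := dist_le_range_sum_of_dist_le (f := y) (d := fun _ => r / N) n (fun {k} _ => hyd k)
      rw [hy0] at this
      simpa using this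
    obtain ⟨v, hv, hφv⟩ := h.exists_descent_step hc hc0 hδ (hyφ n le_rfl) (by
      intro v hv hφv
      refine hs v ?_ (hφv.trans (EReal.coe_le_coe_iff.2 ?_))
      · have h1 := dist_triangle x (y n) v
        have h2 : ((n:ℝ) + 1) * (r / N) ≤ N * (r / N) :=
          mul_le_mul_of_nonneg_right (by exact_mod_cast hn) hδ.le
        have h3 : N * (r / N) = r := by field_simp
        linarith
      · have : 0 ≤ c * (n * (r / N)) := by positivity
        linarith)
    refine ⟨fun i => if i ≤ n then y i else v, by simp [hy0], fun i => ?_, fun i hi => ?_⟩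
    · rcases lt_trichotomy i n with hin | rfl | hin
      · simpa [hin.le, Nat.succ_le_of_lt hin] using hyd i
      · simpa using hv
      · simpa [not_le.2 hin, not_le.2 (hin.trans (Nat.lt_succ_self i))] using hδ.le
    · rcases Nat.lt_or_ge n i with hin | hin
      · obtain rfl : i = n + 1 := by omega
        simp only [not_le.2 hin, if_false]
        refine hφv.trans (EReal.coe_le_coe_iff.2 (le_of_eq ?_))
        push_cast; ring
      · simpa [hin] using hyφ i hin

/-- As long as the slope exceeds `c` on a sublevel in the ball of radius `r`, there is a curve of
speed at most one along which the energy decreases at rate `c`, up to the arclength `r`. -/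
theorem LSCC.exists_descent_unit [CompleteSpace X] (h : LSCC σ φ ustar A B) (hc : Compatible σ)
    {x : X} {p c r : ℝ} (hc0 : 0 < c) (hr : 0 < r) (hx : φ x ≤ (p : EReal))
    (hs : ∀ v, dist x v ≤ r → φ v ≤ (p : EReal) → ENNReal.ofReal c < slope φ v) :
    ∃ γ : ℝ → X, γ 0 = x ∧ (∀ s t, 0 ≤ s → s ≤ t → dist (γ s) (γ t) ≤ min t r - min s r) ∧
      ∀ s, 0 ≤ s → φ (γ s) ≤ ((p - c * min s r : ℝ) : EReal) := by
  have hN : ∀ k : ℕ, (0:ℝ) < (k + 1 : ℕ) := fun k => by positivity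
  choose y hy0 hyd hyφ using fun k : ℕ =>
    h.exists_descent_chain hc hc0 hr hx hs (N := k + 1) (Nat.succ_pos k)
  have hyij : ∀ k i j, i ≤ j → dist (y k i) (y k j) ≤ ((j:ℝ) - i) * (r / (k + 1 : ℕ)) := by
    intro k i j hij
    have := dist_le_Ico_sum_of_dist_le (f := y k) hij (d := fun _ => r / (k + 1 : ℕ))
      (fun {n} _ _ => hyd k n)
    rw [Finset.sum_const, Nat.card_Ico, nsmul_eq_mul, Nat.cast_sub hij] at this
    exact this
  set δ : ℕ → ℝ := fun k => r / (k + 1 : ℕ) with hδ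
  have hδ0 : ∀ k, 0 < δ k := fun k => div_pos hr (hN k)
  have hδt : Tendsto δ atTop (𝓝 0) := by
    have := tendsto_const_div_atTop_nhds_zero_nat r
    exact this.comp (tendsto_add_atTop_nat 1)
  set I : ℕ → ℝ → ℕ := fun k s => ⌊min s r / δ k⌋₊ with hI
  have hI1 : ∀ k s, 0 ≤ s → (I k s : ℝ) * δ k ≤ min s r := fun k s hs => by
    rw [← le_div_iff₀ (hδ0 k)]
    exact Nat.floor_le (div_nonneg (le_min hs hr.le) (hδ0 k).le)
  have hI2 : ∀ k s, min s r ≤ (I k s : ℝ) * δ k + δ k := fun k s => by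
    have := (Nat.lt_floor_add_one (min s r / δ k)).le
    rw [div_le_iff₀ (hδ0 k)] at this
    linarith
  have hI3 : ∀ k s, 0 ≤ s → I k s ≤ k + 1 := fun k s hs => by
    have h1 := (hI1 k s hs).trans (min_le_right _ _)
    have h2 : r = (k + 1 : ℕ) * δ k := by
      simp only [hδ]; field_simp
    have h3 : (I k s : ℝ) * δ k ≤ (k + 1 : ℕ) * δ k := h1.trans h2.le
    exact_mod_cast le_of_mul_le_mul_right h3 (hδ0 k)
  set f : ℕ → ℝ → X := fun k s => y k (I k s) with hf
  have hfd : ∀ k s t, 0 ≤ s → s ≤ t → dist (f k s) (f k t) ≤ min t r - min s r + δ k := by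
    intro k s t hs hst
    have hmono : I k s ≤ I k t := Nat.floor_mono (by
      have := hδ0 k
      gcongr)
    have h1 := hyij k _ _ hmono
    have h2 := hI1 k t (hs.trans hst)
    have h3 := hI2 k s
    refine h1.trans ?_
    change ((I k t : ℝ) - I k s) * δ k ≤ _
    linarith
  have hfφ : ∀ k s, 0 ≤ s → φ (f k s) ≤ ((p - c * (min s r - δ k) : ℝ) : EReal) := by
    intro k s hs
    refine (hyφ k _ (hI3 k s hs)).trans (EReal.coe_le_coe_iff.2 ?_)
    have := mul_le_mul_of_nonneg_left (hI2 k s) hc0.le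
    change p - c * (I k s * δ k) ≤ _
    linarith
  have hmin : ∀ s t : ℝ, s ≤ t → min t r - min s r ≤ t - s := fun s t hst => by
    rcases le_total s r with h1 | h1 <;> rcases le_total t r with h2 | h2 <;>
      simp [h1, h2] <;> linarith
  have hf0 : ∀ k, f k 0 = x := fun k => by simp [hf, hI, hr.le, hy0]
  obtain ⟨j, hj, γ, hγ⟩ := hc.exists_subseq_curve f (by
      intro t ht η hη
      refine ⟨η / 2, half_pos hη, fun s hs hst => ?_⟩
      filter_upwards [hδt.eventually (gt_mem_nhds (half_pos hη))] with k hk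
      rcases le_total s t with h1 | h1
      · rw [abs_sub_comm, abs_of_nonneg (sub_nonneg.2 h1)] at hst
        linarith [hfd k s t hs h1, hmin s t h1]
      · rw [abs_of_nonneg (sub_nonneg.2 h1)] at hst
        rw [dist_comm]
        linarith [hfd k t s ht h1, hmin t s h1])
    (fun n => |TopologicalSpace.denseSeq ℝ n|) (fun n => abs_nonneg _) (by
      intro t ht ρ hρ
      obtain ⟨n, hn⟩ := (TopologicalSpace.denseRange_denseSeq ℝ).exists_mem_open
        Metric.isOpen_ball ⟨t, Metric.mem_ball_self hρ⟩
      refine ⟨n, ?_⟩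
      rw [Metric.mem_ball, Real.dist_eq] at hn
      refine lt_of_le_of_lt ?_ hn
      have := abs_abs_sub_abs_le_abs_sub (TopologicalSpace.denseSeq ℝ n) t
      rwa [abs_of_nonneg ht] at this)
    (by
      intro n j hj
      set q := |TopologicalSpace.denseSeq ℝ n|
      obtain ⟨z, i, hi, hz⟩ := h.exists_subseq (u := fun k => f (j k) q) (p := x) (R := r + 1)
        (C := p + c) (by
          filter_upwards [(hδt.comp hj.tendsto_atTop).eventually (gt_mem_nhds one_pos)] with k hk
          have h1 := hfd (j k) 0 q le_rfl (abs_nonneg _)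
          rw [hf0, dist_comm] at h1
          have h2 : min q r ≤ r := min_le_right _ _
          have h3 : min 0 r = 0 := by simp [hr.le]
          simp only [Function.comp] at hk
          linarith) (by
          filter_upwards [(hδt.comp hj.tendsto_atTop).eventually (gt_mem_nhds one_pos)] with k hk
          refine (hfφ (j k) q (abs_nonneg _)).trans (EReal.coe_le_coe_iff.2 ?_)
          have h2 : 0 ≤ min q r := le_min (abs_nonneg _) hr.le
          simp only [Function.comp] at hk
          nlinarith)
      exact ⟨z, i, hi, hz⟩)
  have hδj : Tendsto (fun k => δ (j k)) atTop (𝓝 0) := hδt.comp hj.tendsto_atTop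
  refine ⟨γ, ?_, ?_, ?_⟩
  · refine hc.unique (hγ 0 le_rfl) ?_
    simp only [hf0]
    exact tendsto_const_nhds
  · intro s t hs hst
    refine hc.dist_le (hγ s hs) (hγ t (hs.trans hst)) le_rfl
      (Eventually.of_forall fun k => hfd (j k) s t hs hst) ?_
    simpa using hδj.const_add (min t r - min s r)
  · intro s hs
    refine h.le_of_tendsto (p := x) (R := r + 1) ?_ (hγ s hs)
      (Eventually.of_forall fun k => hfφ (j k) s hs)
      ((continuous_coe_real_ereal.tendsto _).comp ?_)
    · filter_upwards [hδj.eventually (gt_mem_nhds one_pos)] with k hk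
      have h1 := hfd (j k) 0 s le_rfl hs
      rw [hf0, dist_comm] at h1
      have h2 : min s r ≤ r := min_le_right _ _
      have h3 : min 0 r = 0 := by simp [hr.le]
      linarith
    · have := ((hδj.const_sub (min s r)).const_mul c).const_sub p
      simpa using this

/-- Reparametrization of the descent curve with speed `c` on `(0, T)`, constant afterwards. -/
theorem LSCC.exists_descent_curve [CompleteSpace X] (h : LSCC σ φ ustar A B) (hc : Compatible σ)
    {x : X} {p c T : ℝ} (hc0 : 0 < c) (hT : 0 < T) (hx : φ x ≤ (p : EReal))
    (hs : ∀ v, dist x v ≤ c * T → φ v ≤ (p : EReal) → ENNReal.ofReal c < slope φ v) :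
    ∃ (v : ℝ → X) (n : ℝ → ℝ), AC2LocOn v n (Ici 0) ∧ v 0 = x ∧
      (∀ s, 0 ≤ s → φ (v s) ≤ ((p - c ^ 2 * min s T : ℝ) : EReal)) ∧
      ∀ᵐ s, 0 < s → n s ^ 2 ≤ (Iio T).indicator (fun _ => c ^ 2) s := by
  obtain ⟨γ, hγ0, hγd, hγφ⟩ := h.exists_descent_unit hc hc0 (mul_pos hc0 hT) hx hs
  set F : ℝ → ℝ := fun t => c ^ 2 * min (max t 0) T with hF
  have hFm : Monotone F := fun s t hst => by
    simp only [hF]; gcongr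
  set v : ℝ → X := fun t => γ (c * max t 0) with hv
  have hcm : ∀ t, min (c * max t 0) (c * T) = c * min (max t 0) T := fun t =>
    (mul_min_of_nonneg _ _ hc0.le).symm
  have hvd : ∀ s t, s ≤ t → dist (v s) (v t) ^ 2 ≤ (t - s) * (F t - F s) := by
    intro s t hst
    have hm : max s 0 ≤ max t 0 := max_le_max_right 0 hst
    have h1 := hγd (c * max s 0) (c * max t 0) (by positivity) (by gcongr)
    rw [hcm, hcm, ← mul_sub] at h1
    have h2 : min (max t 0) T - min (max s 0) T ≤ t - s := by
      rcases le_total s 0 with h1 | h1 <;> rcases le_total t 0 with h2 | h2 <;>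
      rcases le_total s T with h3 | h3 <;> rcases le_total t T with h4 | h4 <;>
      simp [h1, h2, h3, h4, hT.le] <;> linarith
    have h3 : 0 ≤ min (max t 0) T - min (max s 0) T := sub_nonneg.2 (by gcongr)
    have h4 : dist (v s) (v t) ^ 2 ≤ (c * (min (max t 0) T - min (max s 0) T)) ^ 2 :=
      pow_le_pow_left₀ dist_nonneg h1 2
    refine h4.trans ?_
    simp only [hF]
    have := mul_le_mul_of_nonneg_right h2 h3
    nlinarith [sq_nonneg c, mul_le_mul_of_nonneg_left this (sq_nonneg c)]
  obtain ⟨n, hn, hn2⟩ := exists_metricDeriv hFm hvd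
  refine ⟨v, n, hn, by simp [hv, hγ0], fun s hs0 => ?_, ?_⟩
  · have := hγφ (c * max s 0) (by positivity)
    rw [hcm, max_eq_left hs0] at this
    simp only [hv, max_eq_left hs0]
    refine this.trans (le_of_eq ?_)
    ring_nf
  · have hneT : ∀ᵐ s : ℝ, s ≠ T := by simp [ae_iff]
    filter_upwards [hn2, hneT] with s hs hsT hs0
    refine hs.trans (le_of_eq ?_)
    rcases lt_or_gt_of_ne hsT with h1 | h1
    · rw [indicator_of_mem (show s ∈ Iio T from h1)]
      have h2 : F =ᶠ[𝓝 s] fun t => c ^ 2 * t := by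
        filter_upwards [Ioo_mem_nhds hs0 h1] with t ht
        simp [hF, ht.1.le, ht.2.le]
      rw [h2.deriv_eq]
      simp
    · rw [indicator_of_notMem (show s ∉ Iio T from not_lt.2 h1.le)]
      have h2 : F =ᶠ[𝓝 s] fun t => c ^ 2 * T := by
        filter_upwards [Ioi_mem_nhds h1] with t ht
        have ht' : T < t := ht
        simp [hF, (hT.trans ht').le, ht'.le]
      rw [h2.deriv_eq]
      simp

end Descent

/-! ### The exponential weight -/

/-- The density `ε⁻¹ e^{-t/ε}` of `expMeasure ε`. -/
def wt (ε t : ℝ) : ℝ := ε⁻¹ * Real.exp (-t / ε)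

theorem wt_pos {ε : ℝ} (hε : 0 < ε) (t : ℝ) : 0 < wt ε t := by unfold wt; positivity

theorem continuous_wt (ε : ℝ) : Continuous (wt ε) := by unfold wt; fun_prop

theorem measurable_wt (ε : ℝ) : Measurable (wt ε) := (continuous_wt ε).measurable

theorem wt_add (ε s t : ℝ) : wt ε (s + t) = Real.exp (-t / ε) * wt ε s := by
  unfold wt
  rw [neg_add, add_div, Real.exp_add]; ring

theorem integrableOn_wt {ε : ℝ} (hε : 0 < ε) (t : ℝ) : IntegrableOn (wt ε) (Ioi t) := by
  have h1 := Integrable.const_mul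
    (integrableOn_exp_mul_Ioi (a := -ε⁻¹) (by simpa using hε) t) ε⁻¹
  refine IntegrableOn.congr_fun h1 (fun s _ => ?_) measurableSet_Ioi
  simp only [wt]
  congr 2; field_simp

theorem integral_wt {ε : ℝ} (hε : 0 < ε) (t : ℝ) :
    ∫ s in Ioi t, wt ε s = Real.exp (-t / ε) := by
  have h1 : ∀ s, wt ε s = ε⁻¹ * Real.exp (-ε⁻¹ * s) := fun s => by
    simp only [wt]; congr 2; field_simp
  simp_rw [h1]
  rw [integral_const_mul, integral_exp_mul_Ioi (by simpa using hε)]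
  have : -ε⁻¹ * t = -t / ε := by field_simp
  rw [this]; field_simp

theorem expMeasure_eq (ε : ℝ) : expMeasure ε =
    (volume.restrict (Ioi (0:ℝ))).withDensity fun t => ENNReal.ofReal (wt ε t) := rfl

theorem lintegral_expMeasure (ε : ℝ) (g : ℝ → ℝ≥0∞) :
    ∫⁻ t, g t ∂expMeasure ε = ∫⁻ t in Ioi 0, ENNReal.ofReal (wt ε t) * g t := by
  rw [expMeasure_eq, lintegral_withDensity_eq_lintegral_mul_non_measurable _
    ((measurable_wt ε).ennreal_ofReal) (by simp)]
  rfl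

theorem ae_expMeasure {ε : ℝ} (hε : 0 < ε) {P : ℝ → Prop} :
    (∀ᵐ t ∂expMeasure ε, P t) ↔ ∀ᵐ t, 0 < t → P t := by
  rw [expMeasure_eq, ae_withDensity_iff ((measurable_wt ε).ennreal_ofReal),
    ae_restrict_iff' measurableSet_Ioi]
  refine ⟨fun h => ?_, fun h => ?_⟩
  · filter_upwards [h] with t ht h0
    refine ht h0 ?_
    rw [Ne, ENNReal.ofReal_eq_zero, not_le]
    exact wt_pos hε t
  · filter_upwards [h] with t ht h0 _ using ht h0

theorem integrable_expMeasure {ε : ℝ} (hε : 0 < ε) {f : ℝ → ℝ} :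
    Integrable f (expMeasure ε) ↔ IntegrableOn (fun t => wt ε t * f t) (Ioi 0) := by
  rw [expMeasure_eq, integrable_withDensity_iff_integrable_smul' ((measurable_wt ε).ennreal_ofReal)
    (by simp), IntegrableOn]
  refine integrable_congr (Eventually.of_forall fun t => ?_)
  change (ENNReal.ofReal (wt ε t)).toReal • f t = _
  rw [ENNReal.toReal_ofReal (wt_pos hε t).le, smul_eq_mul]

theorem integral_expMeasure {ε : ℝ} (hε : 0 < ε) (f : ℝ → ℝ) :
    ∫ t, f t ∂expMeasure ε = ∫ t in Ioi 0, wt ε t * f t := by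
  rw [expMeasure_eq, integral_withDensity_eq_integral_toReal_smul₀
    ((measurable_wt ε).ennreal_ofReal.aemeasurable) (by simp)]
  refine integral_congr_ae (Eventually.of_forall fun t => ?_)
  change (ENNReal.ofReal (wt ε t)).toReal • f t = _
  rw [ENNReal.toReal_ofReal (wt_pos hε t).le, smul_eq_mul]

/-- The weighted cost of the energy bound along a descent curve. -/
theorem integral_descent {ε : ℝ} (hε : 0 < ε) {T : ℝ} (hT : 0 ≤ T) (p c : ℝ) :
    IntegrableOn (fun s => wt ε s * (ε / 2 * (Iio T).indicator (fun _ => c ^ 2) s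
      + (p - c ^ 2 * min s T))) (Ioi 0) ∧
    ∫ s in Ioi 0, wt ε s * (ε / 2 * (Iio T).indicator (fun _ => c ^ 2) s
      + (p - c ^ 2 * min s T)) = p - ε / 2 * c ^ 2 * (1 - Real.exp (-T / ε)) := by
  set b : ℝ → ℝ := fun s => wt ε s * (ε / 2 * (Iio T).indicator (fun _ => c ^ 2) s
      + (p - c ^ 2 * min s T)) with hb
  set b1 : ℝ → ℝ := fun s => wt ε s * (p - c ^ 2 * s + c ^ 2 * ε / 2) with hb1
  have hb1c : Continuous b1 := by
    have := continuous_wt ε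
    fun_prop
  have hneT : ∀ᵐ s : ℝ, s ≠ T := by simp [ae_iff]
  have h1 : ∀ᵐ s ∂(volume.restrict (Ioc 0 T)), b s = b1 s := by
    rw [ae_restrict_iff' measurableSet_Ioc]
    filter_upwards [hneT] with s hs hsT
    have : s < T := lt_of_le_of_ne hsT.2 hs
    simp only [hb, hb1]
    rw [indicator_of_mem (show s ∈ Iio T from this), min_eq_left this.le]
    ring
  have h2 : ∀ s ∈ Ioi T, b s = wt ε s * (p - c ^ 2 * T) := by
    intro s hs
    simp only [hb]
    rw [indicator_of_notMem (show s ∉ Iio T from not_lt.2 (mem_Ioi.1 hs).le), min_eq_right (le_of_lt hs)]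
    ring
  have i1 : IntegrableOn b (Ioc 0 T) :=
    (hb1c.integrableOn_Ioc).congr (h1.mono fun s hs => hs.symm)
  have i2 : IntegrableOn b (Ioi T) :=
    (IntegrableOn.congr_fun (Integrable.mul_const (integrableOn_wt hε T) _)
      (fun s hs => (h2 s hs).symm) measurableSet_Ioi)
  have hdisj : Disjoint (Ioc 0 T) (Ioi T) := Ioc_disjoint_Ioi le_rfl
  have e1 : ∫ s in Ioc 0 T, b s =
      (p - c ^ 2 * ε / 2) - Real.exp (-T / ε) * (p - c ^ 2 * T - c ^ 2 * ε / 2) := by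
    rw [integral_congr_ae h1, ← intervalIntegral.integral_of_le hT]
    rw [intervalIntegral.integral_eq_sub_of_hasDerivAt
      (f := fun s => -(Real.exp (-s / ε) * (p - c ^ 2 * s - c ^ 2 * ε / 2)))]
    · simp; ring
    · intro s _
      have hd1 : HasDerivAt (fun s : ℝ => Real.exp (-s / ε)) (Real.exp (-s / ε) * (-1 / ε)) s :=
        (((hasDerivAt_id s).neg).div_const ε).exp
      have hd2 : HasDerivAt (fun s : ℝ => p - c ^ 2 * s - c ^ 2 * ε / 2) (-(c ^ 2 * 1)) s :=
        (((hasDerivAt_id s).const_mul (c ^ 2)).const_sub p).sub_const _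
      refine (hd1.mul hd2).neg.congr_deriv ?_
      simp only [hb1, wt]
      field_simp
      ring
    · exact hb1c.intervalIntegrable _ _
  have e2 : ∫ s in Ioi T, b s = Real.exp (-T / ε) * (p - c ^ 2 * T) := by
    rw [setIntegral_congr_fun measurableSet_Ioi h2, integral_mul_const, integral_wt hε]
  rw [← Ioc_union_Ioi_eq_Ioi hT]
  refine ⟨i1.union i2, ?_⟩
  rw [setIntegral_union hdisj measurableSet_Ioi i1 i2, e1, e2]
  ring

/-! ### Extended integrals -/

theorem epos_coe (x : ℝ) : epos (x : EReal) = ENNReal.ofReal x := by simp [epos]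

theorem epos_mono : Monotone epos := by
  intro x y hxy
  unfold epos
  split_ifs with h1 h2 h2
  · exact le_rfl
  · exact absurd (top_le_iff.1 (h1 ▸ hxy)) h2
  · exact le_top
  · induction x with
    | top => exact absurd rfl h1
    | bot => simp
    | coe x =>
      induction y with
      | top => exact absurd rfl h2
      | bot => simp at hxy
      | coe y => exact ENNReal.ofReal_le_ofReal (EReal.coe_le_coe_iff.1 hxy)

theorem eIntegral_coe {μ : Measure ℝ} {f : ℝ → ℝ} (hf : Integrable f μ) :
    eIntegral μ (fun t => (f t : EReal)) = ((∫ t, f t ∂μ : ℝ) : EReal) := by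
  unfold eIntegral
  simp_rw [← EReal.coe_neg, epos_coe]
  rw [integral_eq_lintegral_pos_part_sub_lintegral_neg_part hf, EReal.coe_sub]
  have h1 : ∫⁻ t, ENNReal.ofReal (f t) ∂μ ≠ ⊤ := hf.lintegral_lt_top.ne
  have h2 : ∫⁻ t, ENNReal.ofReal (-f t) ∂μ ≠ ⊤ := hf.neg.lintegral_lt_top.ne
  rw [EReal.coe_ennreal_toReal h1, EReal.coe_ennreal_toReal h2]

theorem eIntegral_mono {μ : Measure ℝ} {f g : ℝ → EReal} (h : ∀ᵐ t ∂μ, f t ≤ g t) :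
    eIntegral μ f ≤ eIntegral μ g := by
  unfold eIntegral
  refine EReal.sub_le_sub ?_ ?_
  · exact EReal.coe_ennreal_le_coe_ennreal_iff.2
      (lintegral_mono_ae (h.mono fun t ht => epos_mono ht))
  · exact EReal.coe_ennreal_le_coe_ennreal_iff.2
      (lintegral_mono_ae (h.mono fun t ht => epos_mono (EReal.neg_le_neg_iff.2 ht)))

/-- A measurable extended-real function with integrable minorant and finite integral is finite
almost everywhere, with integrable real part. -/
theorem integrable_of_eIntegral {μ : Measure ℝ} {g : ℝ → EReal} (hg : AEMeasurable g μ)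
    {l : ℝ → ℝ} (hl : Integrable l μ) (hlg : ∀ᵐ t ∂μ, (l t : EReal) ≤ g t) {C : ℝ}
    (hC : eIntegral μ g ≤ C) :
    (∀ᵐ t ∂μ, g t = ((g t).toReal : EReal)) ∧ Integrable (fun t => (g t).toReal) μ := by
  have hneg : ∫⁻ t, epos (-g t) ∂μ < ⊤ := by
    refine lt_of_le_of_lt (lintegral_mono_ae (g := fun t => ENNReal.ofReal (-l t)) ?_)
      hl.neg.lintegral_lt_top
    filter_upwards [hlg] with t ht
    rw [← epos_coe, EReal.coe_neg]
    exact epos_mono (EReal.neg_le_neg_iff.2 ht)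
  have hpos : ∫⁻ t, epos (g t) ∂μ < ⊤ := by
    rw [lt_top_iff_ne_top]
    intro htop
    rw [eIntegral, htop, ← ENNReal.ofReal_toReal hneg.ne] at hC
    rw [EReal.coe_ennreal_ofReal, EReal.coe_ennreal_top, EReal.top_sub_coe] at hC
    exact absurd hC (by simp)
  have hmeas : AEMeasurable (fun t => epos (g t)) μ :=
    (epos_mono.measurable).comp_aemeasurable hg
  have hfin : ∀ᵐ t ∂μ, g t = ((g t).toReal : EReal) := by
    filter_upwards [ae_lt_top' hmeas hpos.ne, hlg] with t ht htl
    refine (EReal.coe_toReal ?_ ?_).symm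
    · intro h; simp [h, epos] at ht
    · intro h; simp [h] at htl
  refine ⟨hfin, ?_⟩
  have hm : AEStronglyMeasurable (fun t => (g t).toReal) μ :=
    (measurable_ereal_toReal.comp_aemeasurable hg).aestronglyMeasurable
  refine ⟨hm, ?_⟩
  rw [hasFiniteIntegral_iff_norm]
  refine lt_of_le_of_lt (lintegral_mono_ae (g := fun t => epos (g t) + epos (-g t)) ?_) ?_
  · filter_upwards [hfin] with t ht
    rw [ht, ← EReal.coe_neg, epos_coe, epos_coe, EReal.toReal_coe, Real.norm_eq_abs]
    rcases le_total 0 (g t).toReal with h | h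
    · rw [abs_of_nonneg h]; exact le_self_add
    · rw [abs_of_nonpos h]; exact le_add_self
  · rw [lintegral_add_left' hmeas]
    exact ENNReal.add_lt_top.2 ⟨hpos, hneg⟩

/-! ### Curves in `AC²_loc` -/

theorem sq_lintegral_mul_le {α : Type*} [MeasurableSpace α] {μ : Measure α} {f g : α → ℝ≥0∞}
    (hf : AEMeasurable f μ) (hg : AEMeasurable g μ) :
    (∫⁻ a, f a * g a ∂μ) ^ 2 ≤ (∫⁻ a, f a ^ 2 ∂μ) * ∫⁻ a, g a ^ 2 ∂μ := by
  have h := ENNReal.lintegral_mul_le_Lp_mul_Lq μ Real.HolderConjugate.two_two hf hg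
  simp only [Pi.mul_apply, ENNReal.rpow_two] at h
  calc (∫⁻ a, f a * g a ∂μ) ^ 2
      ≤ ((∫⁻ a, f a ^ 2 ∂μ) ^ (1 / 2 : ℝ) * (∫⁻ a, g a ^ 2 ∂μ) ^ (1 / 2 : ℝ)) ^ 2 := by
        gcongr
    _ = _ := by
        rw [mul_pow, ← ENNReal.rpow_two, ← ENNReal.rpow_two, ← ENNReal.rpow_mul,
          ← ENNReal.rpow_mul]
        norm_num

/-- The metric derivative may be replaced by a Borel representative. -/
theorem AC2LocOn.exists_measurable {u : ℝ → X} {m : ℝ → ℝ} (hu : AC2LocOn u m (Ici 0)) :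
    ∃ M : ℝ → ℝ, Measurable M ∧ (∀ᵐ t, 0 ≤ t → M t = m t) ∧ AC2LocOn u M (Ici 0) := by
  have hmeas : AEMeasurable m (volume.restrict (Ici 0)) := by
    have h1 : (Ici (0:ℝ)) = ⋃ n : ℕ, Icc (0:ℝ) n := by
      ext t
      simp only [mem_Ici, mem_iUnion, mem_Icc]
      exact ⟨fun h => (exists_nat_ge t).imp fun n hn => ⟨h, hn⟩, fun ⟨n, hn⟩ => hn.1⟩
    rw [h1]
    exact AEMeasurable.iUnion fun n =>
      (hu.1.locInt 0 (by simp) n (by simp)).aestronglyMeasurable.aemeasurable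
  set M : ℝ → ℝ := fun t => max (hmeas.mk m t) 0 with hM
  have hMm : Measurable M := hmeas.measurable_mk.max measurable_const
  have hae : ∀ᵐ t, 0 ≤ t → M t = m t := by
    have := (ae_restrict_iff' measurableSet_Ici).1 hmeas.ae_eq_mk
    filter_upwards [this] with t ht h0
    simp only [hM]
    rw [← ht h0, max_eq_left (hu.1.nonneg t)]
  have haeI : ∀ s ∈ Ici (0:ℝ), ∀ t, m =ᵐ[volume.restrict (Icc s t)] M := by
    intro s hs t
    rw [EventuallyEq, ae_restrict_iff' measurableSet_Icc]
    filter_upwards [hae] with r hr hrs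
    exact (hr (le_trans hs hrs.1)).symm
  refine ⟨M, hMm, hae, ⟨fun t => le_max_right _ _, fun s hs t ht => ?_, fun s hs t ht hst => ?_, ?_⟩,
    fun s hs t ht => ?_⟩
  · exact (hu.1.locInt s hs t ht).congr (haeI s hs t)
  · rw [← integral_congr_ae (haeI s hs t)]
    exact hu.1.dist_le s hs t ht hst
  · rw [ae_restrict_iff' measurableSet_Ici]
    filter_upwards [hae, (ae_restrict_iff' measurableSet_Ici).1 hu.1.limit] with t ht htl h0
    rw [ht h0]
    exact htl h0
  · refine (hu.2 s hs t ht).congr ?_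
    filter_upwards [haeI s hs t] with r hr
    simp only [hr]

theorem AC2LocOn.ofReal_dist_le {u : ℝ → X} {m : ℝ → ℝ} (hu : AC2LocOn u m (Ici 0)) {s t : ℝ}
    (hs : 0 ≤ s) (hst : s ≤ t) :
    ENNReal.ofReal (dist (u s) (u t)) ≤ ∫⁻ r in Ioc s t, ENNReal.ofReal (m r) := by
  have ht := hs.trans hst
  rw [restrict_Ioc_eq_restrict_Icc, ← ofReal_integral_eq_lintegral_ofReal
    (hu.1.locInt s hs t ht) (Eventually.of_forall hu.1.nonneg)]
  exact ENNReal.ofReal_le_ofReal (hu.1.dist_le s hs t ht hst)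

theorem AC2LocOn.sq_dist_le {u : ℝ → X} {m : ℝ → ℝ} (hu : AC2LocOn u m (Ici 0))
    (hm : Measurable m) {s t : ℝ} (hs : 0 ≤ s) (hst : s ≤ t) :
    dist (u s) (u t) ^ 2 ≤ (t - s) * ∫ r in Icc s t, m r ^ 2 := by
  have ht := hs.trans hst
  have h1 := pow_le_pow_left₀ zero_le (hu.ofReal_dist_le hs hst) 2
  have h2 := sq_lintegral_mul_le (μ := volume.restrict (Ioc s t)) (f := fun r => ENNReal.ofReal (m r))
    (g := fun _ => 1) hm.ennreal_ofReal.aemeasurable aemeasurable_const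
  simp only [mul_one, one_pow, lintegral_const, Measure.restrict_apply_univ, Real.volume_Ioc,
    one_mul] at h2
  have h3 : ∫⁻ r in Ioc s t, ENNReal.ofReal (m r) ^ 2 =
      ENNReal.ofReal (∫ r in Icc s t, m r ^ 2) := by
    rw [restrict_Ioc_eq_restrict_Icc, ofReal_integral_eq_lintegral_ofReal
      (hu.2 s hs t ht) (Eventually.of_forall fun r => sq_nonneg _)]
    simp_rw [ENNReal.ofReal_pow (hu.1.nonneg _)]
  have h4 : 0 ≤ ∫ r in Icc s t, m r ^ 2 := integral_nonneg fun r => sq_nonneg _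
  have h5 := h1.trans h2
  rw [h3, ← ENNReal.ofReal_mul h4, ← ENNReal.ofReal_pow dist_nonneg,
    ENNReal.ofReal_le_ofReal_iff (mul_nonneg h4 (sub_nonneg.2 hst))] at h5
  linarith

theorem AC2LocOn.tendsto_dist {u : ℝ → X} {m : ℝ → ℝ} (hu : AC2LocOn u m (Ici 0))
    (hm : Measurable m) (t : ℝ) :
    Tendsto (fun s => dist (u (max s 0)) (u (max t 0))) (𝓝 t) (𝓝 0) := by
  set K := ∫ r in Icc 0 (max t 0 + 1), m r ^ 2 with hK
  have hK0 : 0 ≤ K := integral_nonneg fun r => sq_nonneg _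
  have hmono : ∀ a b, 0 ≤ a → b ≤ max t 0 + 1 → ∫ r in Icc a b, m r ^ 2 ≤ K := fun a b ha hb =>
    setIntegral_mono_set (hu.2 0 (by simp) _ (by simp; positivity))
      (Eventually.of_forall fun r => sq_nonneg _)
      (Icc_subset_Icc ha hb).eventuallyLE
  have hbound : ∀ᶠ s in 𝓝 t, dist (u (max s 0)) (u (max t 0)) ≤ √(|max s 0 - max t 0| * K) := by
    filter_upwards [gt_mem_nhds (show t < t + 1 by linarith)] with s hs
    have hs' : max s 0 ≤ max t 0 + 1 := max_le (by linarith [le_max_left t 0])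
      (by linarith [le_max_right t 0])
    refine Real.le_sqrt_of_sq_le ?_
    rcases le_total (max s 0) (max t 0) with h | h
    · refine (hu.sq_dist_le hm (le_max_right _ _) h).trans ?_
      rw [abs_sub_comm, abs_of_nonneg (sub_nonneg.2 h)]
      exact mul_le_mul_of_nonneg_left (hmono _ _ (le_max_right _ _) (by linarith))
        (sub_nonneg.2 h)
    · rw [dist_comm]
      refine (hu.sq_dist_le hm (le_max_right _ _) h).trans ?_
      rw [abs_of_nonneg (sub_nonneg.2 h)]
      exact mul_le_mul_of_nonneg_left (hmono _ _ (le_max_right _ _) hs') (sub_nonneg.2 h)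
  refine tendsto_of_tendsto_of_tendsto_of_le_of_le' tendsto_const_nhds ?_
    (Eventually.of_forall fun s => dist_nonneg) hbound
  have hc : Continuous fun s : ℝ => √(|max s 0 - max t 0| * K) := by fun_prop
  have := hc.tendsto t
  simpa using this

/-- A weighted Hardy inequality: Cauchy–Schwarz with the weight `e^{-s/(2ε)}`, then Tonelli. -/
theorem AC2LocOn.hardy {u : ℝ → X} {m : ℝ → ℝ} (hu : AC2LocOn u m (Ici 0))
    (hm : Measurable m) {ε : ℝ} (hε : 0 < ε) {t : ℝ} (ht : 0 ≤ t) :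
    ∫⁻ r in Ioi t, ENNReal.ofReal (wt ε r) * ENNReal.ofReal (dist (u r) (u t) ^ 2) ≤
      ENNReal.ofReal (4 * ε ^ 2) *
        ∫⁻ r in Ioi t, ENNReal.ofReal (wt ε r) * ENNReal.ofReal (m r ^ 2) := by
  set e : ℝ → ℝ := fun r => Real.exp (-r / (2 * ε)) with he
  have he0 : ∀ r, 0 < e r := fun r => Real.exp_pos _
  have hec : Continuous e := by simp only [he]; fun_prop
  have hw : ∀ r, wt ε r = ε⁻¹ * (e r * e r) := fun r => by
    simp only [wt, he]; rw [← Real.exp_add]; congr 2; field_simp; ring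
  set k : ℝ → ℝ≥0∞ := fun s => ENNReal.ofReal (m s ^ 2 * e s) with hk
  have hkm : Measurable k := ((hm.pow_const 2).mul hec.measurable).ennreal_ofReal
  -- pointwise bound from the Cauchy–Schwarz inequality
  have hpt : ∀ r ∈ Ioi t, ENNReal.ofReal (wt ε r) * ENNReal.ofReal (dist (u r) (u t) ^ 2) ≤
      ENNReal.ofReal (2 * e r) * ∫⁻ s in Ioc t r, k s := by
    intro r hr
    have hr' : t ≤ r := le_of_lt hr
    have h1 := pow_le_pow_left₀ zero_le (hu.ofReal_dist_le ht hr') 2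
    have h2 := sq_lintegral_mul_le (μ := volume.restrict (Ioc t r))
      (f := fun s => ENNReal.ofReal (m s * √(e s))) (g := fun s => ENNReal.ofReal ((√(e s))⁻¹))
      (hm.mul hec.measurable.sqrt).ennreal_ofReal.aemeasurable
      hec.measurable.sqrt.inv.ennreal_ofReal.aemeasurable
    have h3 : ∀ s, ENNReal.ofReal (m s * √(e s)) * ENNReal.ofReal ((√(e s))⁻¹) =
        ENNReal.ofReal (m s) := fun s => by
      have := Real.sqrt_pos.2 (he0 s)
      rw [← ENNReal.ofReal_mul (mul_nonneg (hu.1.nonneg s) this.le)]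
      congr 1; field_simp
    have h4 : ∀ s, ENNReal.ofReal (m s * √(e s)) ^ 2 = k s := fun s => by
      rw [← ENNReal.ofReal_pow (mul_nonneg (hu.1.nonneg s) (Real.sqrt_nonneg _)), mul_pow,
        Real.sq_sqrt (he0 s).le]
    have h5 : ∀ s, ENNReal.ofReal ((√(e s))⁻¹) ^ 2 = ENNReal.ofReal (Real.exp (s / (2 * ε))) :=
      fun s => by
        rw [← ENNReal.ofReal_pow (inv_nonneg.2 (Real.sqrt_nonneg _)), inv_pow,
          Real.sq_sqrt (he0 s).le]
        simp only [he]
        rw [← Real.exp_neg]; congr 2; ring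
    simp only [h3, h4, h5] at h2
    have h6 : ∫⁻ s in Ioc t r, ENNReal.ofReal (Real.exp (s / (2 * ε))) ≤
        ENNReal.ofReal (2 * ε * (e r)⁻¹) := by
      have hc : Continuous fun s : ℝ => Real.exp (s / (2 * ε)) := by fun_prop
      rw [← ofReal_integral_eq_lintegral_ofReal hc.integrableOn_Ioc
        (Eventually.of_forall fun s => (Real.exp_pos _).le)]
      refine ENNReal.ofReal_le_ofReal ?_
      rw [← intervalIntegral.integral_of_le hr',
        intervalIntegral.integral_eq_sub_of_hasDerivAt
          (f := fun s => 2 * ε * Real.exp (s / (2 * ε)))]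
      · have h7 : Real.exp (r / (2 * ε)) = (e r)⁻¹ := by
          simp only [he]; rw [← Real.exp_neg]; congr 1; ring
        rw [← h7]
        have : 0 ≤ 2 * ε * Real.exp (t / (2 * ε)) := by positivity
        linarith
      · intro s _
        refine ((((hasDerivAt_id s).div_const (2 * ε)).exp).const_mul (2 * ε)).congr_deriv ?_
        simp only [id]
        field_simp
      · exact hc.intervalIntegrable _ _
    rw [dist_comm, ENNReal.ofReal_pow dist_nonneg]
    calc ENNReal.ofReal (wt ε r) * ENNReal.ofReal (dist (u t) (u r)) ^ 2
        ≤ ENNReal.ofReal (wt ε r) * ((∫⁻ s in Ioc t r, k s) * ENNReal.ofReal (2 * ε * (e r)⁻¹)) := by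
          gcongr
          exact (h1.trans h2).trans (by gcongr)
      _ = ENNReal.ofReal (wt ε r * (2 * ε * (e r)⁻¹)) * (∫⁻ s in Ioc t r, k s) := by
          rw [ENNReal.ofReal_mul (wt_pos hε r).le]; ring
      _ = _ := by
          congr 2
          rw [hw]
          have := he0 r
          field_simp
  -- Tonelli
  set f : ℝ → ℝ → ℝ≥0∞ := fun r s =>
    {q : ℝ × ℝ | q.2 ≤ q.1}.indicator (fun q => ENNReal.ofReal (2 * e q.1) * k q.2) (r, s) with hf
  have hfm : Measurable (Function.uncurry f) := by
    have : Function.uncurry f =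
        {q : ℝ × ℝ | q.2 ≤ q.1}.indicator (fun q => ENNReal.ofReal (2 * e q.1) * k q.2) := by
      ext ⟨r, s⟩; rfl
    rw [this]
    refine Measurable.indicator ?_ (measurableSet_le measurable_snd measurable_fst)
    exact (((hec.measurable.comp measurable_fst).const_mul 2).ennreal_ofReal).mul
      (hkm.comp measurable_snd)
  have hin : ∀ r, ∫⁻ s in Ioi t, f r s =
      ENNReal.ofReal (2 * e r) * ∫⁻ s in Ioc t r, k s := by
    intro r
    have h1 : ∀ s, f r s = (Iic r).indicator (fun s => ENNReal.ofReal (2 * e r) * k s) s := by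
      intro s
      by_cases h : s ≤ r
      · simp [hf, h]
      · simp [hf, h]
    simp_rw [h1]
    rw [lintegral_indicator measurableSet_Iic, Measure.restrict_restrict measurableSet_Iic,
      lintegral_const_mul _ hkm, inter_comm, Ioi_inter_Iic]
  have hout : ∀ s ∈ Ioi t, ∫⁻ r in Ioi t, f r s =
      ENNReal.ofReal (4 * ε ^ 2) * (ENNReal.ofReal (wt ε s) * ENNReal.ofReal (m s ^ 2)) := by
    intro s hs
    have hs' : t < s := hs
    have h1 : ∀ r, f r s = (Ici s).indicator (fun r => ENNReal.ofReal (2 * e r) * k s) r := by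
      intro r
      by_cases h : s ≤ r
      · simp [hf, h]
      · simp [hf, h]
    have h2 : Ici s ∩ Ioi t = Ici s := inter_eq_left.2 fun r hr => lt_of_lt_of_le hs' hr
    simp_rw [h1]
    rw [lintegral_indicator measurableSet_Ici, Measure.restrict_restrict measurableSet_Ici, h2,
      lintegral_mul_const _ (hec.measurable.const_mul 2).ennreal_ofReal, ← restrict_Ioi_eq_restrict_Ici]
    have h3 : ∀ r, 2 * e r = 4 * ε * wt (2 * ε) r := fun r => by
      simp only [he, wt]; field_simp; ring
    have h4 : ∫⁻ r in Ioi s, ENNReal.ofReal (2 * e r) = ENNReal.ofReal (4 * ε * e s) := by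
      have hε2 : 0 < 2 * ε := by positivity
      simp_rw [h3]
      rw [← ofReal_integral_eq_lintegral_ofReal (Integrable.const_mul (integrableOn_wt hε2 s) _)
        (Eventually.of_forall fun r => by have := wt_pos hε2 r; positivity), integral_const_mul,
        integral_wt hε2]
    rw [h4, hk, hw]
    simp only
    have := he0 s
    rw [← ENNReal.ofReal_mul (by positivity), ← ENNReal.ofReal_mul (by positivity),
      ← ENNReal.ofReal_mul (by positivity)]
    congr 1
    field_simp
  calc ∫⁻ r in Ioi t, ENNReal.ofReal (wt ε r) * ENNReal.ofReal (dist (u r) (u t) ^ 2)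
      ≤ ∫⁻ r in Ioi t, ENNReal.ofReal (2 * e r) * ∫⁻ s in Ioc t r, k s :=
        setLIntegral_mono' measurableSet_Ioi hpt
    _ = ∫⁻ r in Ioi t, ∫⁻ s in Ioi t, f r s := by simp_rw [hin]
    _ = ∫⁻ s in Ioi t, ∫⁻ r in Ioi t, f r s := lintegral_lintegral_swap hfm.aemeasurable
    _ = ∫⁻ s in Ioi t, ENNReal.ofReal (4 * ε ^ 2) *
          (ENNReal.ofReal (wt ε s) * ENNReal.ofReal (m s ^ 2)) :=
        setLIntegral_congr_fun measurableSet_Ioi hout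
    _ = _ := lintegral_const_mul _
        ((measurable_wt ε).ennreal_ofReal.mul (hm.pow_const 2).ennreal_ofReal)

/-! ### Concatenation of curves -/

/-- The function following `f` until time `t`, and then `g` (restarted at time `0`). -/
def concat {α : Type*} (t : ℝ) (f g : ℝ → α) (s : ℝ) : α := if s ≤ t then f s else g (s - t)

theorem concat_of_le {α : Type*} {t s : ℝ} {f g : ℝ → α} (h : s ≤ t) : concat t f g s = f s :=
  if_pos h

theorem concat_of_lt {α : Type*} {t s : ℝ} {f g : ℝ → α} (h : t < s) :
    concat t f g s = g (s - t) := if_neg (not_le.2 h)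

theorem preimage_sub_Ioi (t : ℝ) : (fun s : ℝ => s - t) ⁻¹' Ioi 0 = Ioi t := by
  ext s; simp

theorem lintegral_Ioi_sub (g : ℝ → ℝ≥0∞) (t : ℝ) :
    ∫⁻ s in Ioi t, g (s - t) = ∫⁻ s in Ioi 0, g s := by
  rw [← preimage_sub_Ioi]
  exact (measurePreserving_sub_right volume t).setLIntegral_comp_preimage_emb
    (measurableEmbedding_subRight t) g _

theorem integral_Ioi_sub (g : ℝ → ℝ) (t : ℝ) :
    ∫ s in Ioi t, g (s - t) = ∫ s in Ioi 0, g s := by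
  rw [← preimage_sub_Ioi]
  exact (measurePreserving_sub_right volume t).setIntegral_preimage_emb
    (measurableEmbedding_subRight t) g _

theorem integrableOn_Ioi_sub {g : ℝ → ℝ} (t : ℝ) (hg : IntegrableOn g (Ioi 0)) :
    IntegrableOn (fun s => g (s - t)) (Ioi t) := by
  rw [← preimage_sub_Ioi]
  exact ((measurePreserving_sub_right volume t).integrableOn_comp_preimage
    (measurableEmbedding_subRight t)).2 hg

theorem ae_sub {P : ℝ → Prop} (t : ℝ) (h : ∀ᵐ s, P s) : ∀ᵐ s, P (s - t) :=
  (measurePreserving_sub_right volume t).quasiMeasurePreserving.ae h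

theorem integrableOn_concat {f g : ℝ → ℝ} {t : ℝ} (ht : 0 ≤ t)
    (hf : ∀ s ∈ Ici (0:ℝ), ∀ r ∈ Ici (0:ℝ), IntegrableOn f (Icc s r))
    (hg : ∀ s ∈ Ici (0:ℝ), ∀ r ∈ Ici (0:ℝ), IntegrableOn g (Icc s r))
    {a b : ℝ} (ha : 0 ≤ a) : IntegrableOn (concat t f g) (Icc a b) := by
  have h1 : IntegrableOn (concat t f g) (Icc 0 t) :=
    IntegrableOn.congr_fun (hf 0 (by simp) t ht) (fun s hs => (concat_of_le hs.2).symm)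
      measurableSet_Icc
  have h2 : IntegrableOn (concat t f g) (Ioc t (max b t)) := by
    have h3 : (fun s : ℝ => s - t) ⁻¹' Ioc 0 (max b t - t) = Ioc t (max b t) := by
      ext s; simp
    have h4 : IntegrableOn (fun s => g (s - t)) (Ioc t (max b t)) := by
      rw [← h3]
      exact ((measurePreserving_sub_right volume t).integrableOn_comp_preimage
        (measurableEmbedding_subRight t)).2 ((hg 0 (by simp) (max b t - t)
          (by simp)).mono_set Ioc_subset_Icc_self)
    exact IntegrableOn.congr_fun h4 (fun s hs => (concat_of_lt hs.1).symm) measurableSet_Ioc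
  refine (h1.union h2).mono_set fun s hs => ?_
  rcases le_or_gt s t with h | h
  · exact Or.inl ⟨ha.trans hs.1, h⟩
  · exact Or.inr ⟨h, hs.2.trans (le_max_left _ _)⟩

theorem AC2LocOn.concat {u v : ℝ → X} {m n : ℝ → ℝ} (hu : AC2LocOn u m (Ici 0))
    (hv : AC2LocOn v n (Ici 0)) {t : ℝ} (ht : 0 ≤ t) (huv : v 0 = u t) :
    AC2LocOn (concat t u v) (concat t m n) (Ici 0) := by
  have hinteg : ∀ {a b : ℝ}, 0 ≤ a → IntegrableOn (WED.concat t m n) (Icc a b) :=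
    fun ha => integrableOn_concat ht hu.1.locInt hv.1.locInt ha
  have hleft : ∀ {a b : ℝ}, 0 ≤ a → a ≤ b → b ≤ t →
      dist (WED.concat t u v a) (WED.concat t u v b) ≤ ∫ r in Icc a b, WED.concat t m n r := by
    intro a b ha hab hb
    rw [concat_of_le hb, concat_of_le (hab.trans hb), setIntegral_congr_fun measurableSet_Icc
      (fun s hs => concat_of_le (hs.2.trans hb))]
    exact hu.1.dist_le a ha b (ha.trans hab) hab
  have hright : ∀ {a b : ℝ}, t ≤ a → a ≤ b →
      dist (WED.concat t u v a) (WED.concat t u v b) ≤ ∫ r in Icc a b, WED.concat t m n r := by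
    intro a b ha hab
    have h1 : ∀ c, t ≤ c → WED.concat t u v c = v (c - t) := by
      intro c hc
      rcases hc.eq_or_lt with rfl | hc
      · rw [concat_of_le le_rfl, sub_self, huv]
      · exact concat_of_lt hc
    rw [h1 a ha, h1 b (ha.trans hab)]
    refine (hv.1.dist_le (a - t) (by simpa using ha) (b - t) (by simpa using ha.trans hab)
      (by linarith)).trans (le_of_eq ?_)
    rw [integral_Icc_eq_integral_Ioc, integral_Icc_eq_integral_Ioc,
      ← intervalIntegral.integral_of_le (by linarith : a - t ≤ b - t),
      ← intervalIntegral.integral_comp_sub_right, intervalIntegral.integral_of_le hab]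
    exact setIntegral_congr_fun measurableSet_Ioc fun s hs =>
      (concat_of_lt (lt_of_le_of_lt ha hs.1)).symm
  refine ⟨⟨fun s => ?_, fun a ha b _ => hinteg ha, fun a ha b hb hab => ?_, ?_⟩,
    fun a ha b _ => ?_⟩
  · unfold WED.concat; split_ifs
    · exact hu.1.nonneg _
    · exact hv.1.nonneg _
  · rcases le_total b t with h | h
    · exact hleft ha hab h
    rcases le_total t a with h' | h'
    · exact hright h' hab
    refine (dist_triangle _ (WED.concat t u v t) _).trans
      ((add_le_add (hleft ha h' le_rfl) (hright le_rfl h)).trans (le_of_eq ?_))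
    simp only [integral_Icc_eq_integral_Ioc]
    rw [← intervalIntegral.integral_of_le h', ← intervalIntegral.integral_of_le h,
      ← intervalIntegral.integral_of_le hab]
    refine intervalIntegral.integral_add_adjacent_intervals ?_ ?_
    · exact (intervalIntegrable_iff_integrableOn_Icc_of_le h').2 (hinteg ha)
    · exact (intervalIntegrable_iff_integrableOn_Icc_of_le h).2 (hinteg ht)
  · rw [ae_restrict_iff' measurableSet_Ici]
    filter_upwards [(ae_restrict_iff' measurableSet_Ici).1 hu.1.limit,
      ae_sub t ((ae_restrict_iff' measurableSet_Ici).1 hv.1.limit),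
      Measure.ae_ne volume t] with r hr1 hr2 hrt hr0
    rcases lt_or_gt_of_ne hrt with h | h
    · rw [concat_of_le h.le, concat_of_le h.le]
      refine (hr1 hr0).congr' ?_
      filter_upwards [nhdsWithin_le_nhds (Iio_mem_nhds h)] with s hs
      rw [concat_of_le (mem_Iio.1 hs).le]
    · rw [concat_of_lt h, concat_of_lt h]
      have hmap : Tendsto (fun s => s - t) (𝓝[Ici 0 \ {r}] r) (𝓝[Ici 0 \ {r - t}] (r - t)) := by
        refine tendsto_nhdsWithin_iff.2 ⟨?_, ?_⟩
        · exact ((continuous_id.sub continuous_const).tendsto r).mono_left nhdsWithin_le_nhds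
        · filter_upwards [nhdsWithin_le_nhds (Ioi_mem_nhds h), self_mem_nhdsWithin] with s hs hs'
          refine ⟨by simpa using (mem_Ioi.1 hs).le, fun h => hs'.2 ?_⟩
          simpa using h
      refine ((hr2 (by simpa using h.le)).comp hmap).congr' ?_
      filter_upwards [nhdsWithin_le_nhds (Ioi_mem_nhds h)] with s hs
      simp only [Function.comp]
      rw [concat_of_lt hs, sub_sub_sub_cancel_right]
  · have : (fun r => WED.concat t m n r ^ 2) =
        WED.concat t (fun r => m r ^ 2) (fun r => n r ^ 2) := by
      ext r; unfold WED.concat; split_ifs <;> rfl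
    rw [this]
    exact integrableOn_concat ht hu.2 hv.2 ha

/-! ### Minimizers at fixed `ε` -/

theorem eIntegral_congr {μ : Measure ℝ} {f g : ℝ → EReal} (h : ∀ᵐ t ∂μ, f t = g t) :
    eIntegral μ f = eIntegral μ g :=
  le_antisymm (eIntegral_mono (h.mono fun _ ht => ht.le))
    (eIntegral_mono (h.mono fun _ ht => ht.ge))

theorem IsMinimizer.exists_measurable {φ : X → EReal} {ε : ℝ} (hε : 0 < ε) {x : X} {u : ℝ → X}
    {m : ℝ → ℝ} (h : IsMinimizer φ ε x u m) :
    ∃ M : ℝ → ℝ, Measurable M ∧ IsMinimizer φ ε x u M := by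
  obtain ⟨M, hM, hae, hu⟩ := h.1.2.1.exists_measurable
  have hae' : ∀ᵐ t ∂expMeasure ε, M t = m t :=
    (ae_expMeasure hε).2 (hae.mono fun t ht h0 => ht h0.le)
  refine ⟨M, hM, ⟨h.1.1, hu, ?_⟩, fun v n hv => ?_⟩
  · refine lt_of_le_of_lt (le_of_eq (lintegral_congr_ae ?_)) h.1.2.2
    exact hae'.mono fun t ht => by simp only [ht]
  · refine le_trans (le_of_eq ?_) (h.2 v n hv)
    exact eIntegral_congr (hae'.mono fun t ht => by simp only [wedIntegrand, ht])

theorem AC2LocOn.const (x : X) : AC2LocOn (fun _ => x) (fun _ => 0) (Ici 0) := by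
  refine ⟨⟨fun _ => le_rfl, fun _ _ _ _ => integrableOn_zero, fun _ _ _ _ _ => by simp,
    Eventually.of_forall fun t => by simpa using tendsto_const_nhds⟩, fun _ _ _ _ => by simp⟩

theorem integrable_const_expMeasure {ε : ℝ} (hε : 0 < ε) (c : ℝ) :
    Integrable (fun _ => c) (expMeasure ε) :=
  (integrable_expMeasure hε).2 (Integrable.mul_const (integrableOn_wt hε 0) c)

theorem integral_const_expMeasure {ε : ℝ} (hε : 0 < ε) (c : ℝ) :
    ∫ _, c ∂expMeasure ε = c := by
  rw [integral_expMeasure hε, integral_mul_const, integral_wt hε]; simp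

theorem lintegral_const_expMeasure {ε : ℝ} (hε : 0 < ε) (c : ℝ) :
    ∫⁻ _, ENNReal.ofReal c ∂expMeasure ε < ⊤ :=
  (integrable_const_expMeasure hε c).lintegral_lt_top

section

variable {σ : TopologicalSpace X} {φ : X → EReal} {ustar : X} {A B : ℝ}

theorem measurable_comp (h : LSCC σ φ ustar A B) (hc : Compatible σ) {u : ℝ → X} {M : ℝ → ℝ}
    (hu : AC2LocOn u M (Ici 0)) (hM : Measurable M) :
    Measurable fun t => φ (u (max t 0)) :=
  (h.lowerSemicontinuous hc (w := fun t => u (max t 0)) (hu.tendsto_dist hM)).measurable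

/-- Along an admissible curve, the square of the distance to the initial point is integrable. -/
theorem Admissible.integrable_sq_dist {ε : ℝ} (hε : 0 < ε) {x : X} {u : ℝ → X} {M : ℝ → ℝ}
    (h : Admissible ε x u M) (hM : Measurable M) :
    Integrable (fun t => dist (u t) x ^ 2) (expMeasure ε) := by
  have hmeas : AEStronglyMeasurable (fun t => dist (u t) x ^ 2) (expMeasure ε) := by
    have hcont : Continuous fun t => dist (u (max t 0)) x := by
      refine continuous_iff_continuousAt.2 fun t => ?_
      refine tendsto_iff_dist_tendsto_zero.2 (squeeze_zero (fun s => dist_nonneg) (fun s => ?_)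
        (h.2.1.tendsto_dist hM t))
      rw [Real.dist_eq]
      exact abs_dist_sub_le _ _ _
    refine ((hcont.pow 2).aestronglyMeasurable).congr ((ae_expMeasure hε).2 ?_)
    exact Eventually.of_forall fun t ht => by simp only [Pi.pow_apply, max_eq_left ht.le]
  refine ⟨hmeas, ?_⟩
  rw [hasFiniteIntegral_iff_ofReal (Eventually.of_forall fun t => sq_nonneg _),
    lintegral_expMeasure]
  have h1 := h.2.1.hardy hM hε le_rfl
  rw [h.1] at h1
  refine h1.trans_lt (ENNReal.mul_lt_top ENNReal.ofReal_lt_top ?_)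
  rw [← lintegral_expMeasure]
  exact h.2.2

/-- The real-valued integrand `(ε/2)|u'|² + φ(u)`, with `φ(u)` read as a real number. -/
def dens (φ : X → EReal) (ε : ℝ) (u : ℝ → X) (M : ℝ → ℝ) (t : ℝ) : ℝ :=
  ε / 2 * M t ^ 2 + (φ (u t)).toReal

theorem IsMinimizer.integrable (h : LSCC σ φ ustar A B) (hc : Compatible σ) {ε : ℝ} (hε : 0 < ε)
    {x : X} {u : ℝ → X} {M : ℝ → ℝ} (hmin : IsMinimizer φ ε x u M) (hM : Measurable M)
    (hx : φ x ≠ ⊤) :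
    (∀ᵐ t, 0 < t → φ (u t) ≠ ⊤) ∧ Integrable (dens φ ε u M) (expMeasure ε) := by
  have hfin : ∀ᵐ t ∂expMeasure ε, u t = u (max t 0) := (ae_expMeasure hε).2
    (Eventually.of_forall fun t ht => by rw [max_eq_left ht.le])
  have hmeas : AEMeasurable (wedIntegrand φ ε u M) (expMeasure ε) := by
    refine ⟨fun t => ((ε / 2 * M t ^ 2 : ℝ) : EReal) + φ (u (max t 0)),
      ((hM.pow_const 2).const_mul _).coe_real_ereal.add (measurable_comp h hc hmin.1.2.1 hM), ?_⟩
    filter_upwards [hfin] with t ht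
    simp only [wedIntegrand]
    rw [← ht]
  have hl : Integrable (fun t => -(B * dist (u t) x ^ 2 + (B * dist x ustar ^ 2 + A)))
      (expMeasure ε) :=
    (((hmin.1.integrable_sq_dist hε hM).const_mul B).add
      (integrable_const_expMeasure hε _)).neg
  have hC : WEDfun φ ε u M ≤ (((φ x).toReal : ℝ) : EReal) := by
    refine (hmin.2 (fun _ => x) (fun _ => 0) ⟨rfl, AC2LocOn.const x, by simp⟩).trans ?_
    have := eIntegral_coe (integrable_const_expMeasure hε (φ x).toReal)
    rw [integral_const_expMeasure hε] at this
    rw [← this]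
    refine eIntegral_mono (Eventually.of_forall fun t => ?_)
    simp only [wedIntegrand]
    rw [EReal.coe_toReal hx (h.ne_bot x)]
    simp
  obtain ⟨h1, h2⟩ := integrable_of_eIntegral hmeas hl (Eventually.of_forall fun t => by
    refine (h.coercive (u t) x).trans ?_
    simp only [wedIntegrand]
    refine le_add_of_nonneg_left ?_
    exact_mod_cast (by positivity : 0 ≤ ε / 2 * M t ^ 2)) hC
  have h3 : ∀ t, wedIntegrand φ ε u M t = ↑(wedIntegrand φ ε u M t).toReal → φ (u t) ≠ ⊤ := by
    intro t ht htop
    rw [wedIntegrand, htop, EReal.coe_add_top] at ht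
    simp at ht
  refine ⟨((ae_expMeasure hε).1 h1).mono fun t ht h0 => h3 t (ht h0), h2.congr ?_⟩
  filter_upwards [h1] with t ht
  rw [wedIntegrand, dens, EReal.toReal_add (EReal.coe_ne_top _) (EReal.coe_ne_bot _) (h3 t ht)
    (h.ne_bot _), EReal.toReal_coe]

/-- The value `W(t) = e^{t/ε} ∫_t^∞ ((ε/2)|u'|² + φ(u)) dμ_ε` left to a minimizer at time `t`. -/
def value (φ : X → EReal) (ε : ℝ) (u : ℝ → X) (M : ℝ → ℝ) (t : ℝ) : ℝ :=
  Real.exp (t / ε) * ∫ s in Ioi t, wt ε s * dens φ ε u M s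

/-- Dynamic programming: the value at time `t` is at most the cost of any curve leaving from
`u t`, because a cheaper one could be concatenated to `u` at time `t`. -/
theorem IsMinimizer.value_le (h : LSCC σ φ ustar A B) (hc : Compatible σ) {ε : ℝ} (hε : 0 < ε)
    {x : X} {u : ℝ → X} {M : ℝ → ℝ} (hmin : IsMinimizer φ ε x u M) (hM : Measurable M)
    (hx : φ x ≠ ⊤) {t : ℝ} (ht : 0 ≤ t) {v : ℝ → X} {n : ℝ → ℝ} (hv : AC2LocOn v n (Ici 0))
    (hv0 : v 0 = u t) (hn : ∫⁻ s, ENNReal.ofReal (n s ^ 2) ∂expMeasure ε < ⊤) {b : ℝ → ℝ}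
    (hb : Integrable b (expMeasure ε)) (hvb : ∀ᵐ s, 0 < s → wedIntegrand φ ε v n s ≤ ↑(b s)) :
    value φ ε u M t ≤ ∫ s, b s ∂expMeasure ε := by
  obtain ⟨hfin, hinteg⟩ := hmin.integrable h hc hε hM hx
  set f := dens φ ε u M with hf
  have hsplit : Ioc 0 t ∪ Ioi t = Ioi 0 := Ioc_union_Ioi_eq_Ioi ht
  have hdisj : Disjoint (Ioc 0 t) (Ioi t) := by
    rw [Set.disjoint_left]; intro s hs hs'; exact not_lt.2 hs.2 hs'
  have hwt : ∀ s, wt ε s = Real.exp (-t / ε) * wt ε (s - t) := fun s => by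
    rw [← wt_add]; congr 1; ring
  have hadm : Admissible ε x (WED.concat t u v) (WED.concat t M n) := by
    refine ⟨?_, hmin.1.2.1.concat hv ht hv0, ?_⟩
    · rw [concat_of_le ht, hmin.1.1]
    have h1 := hmin.1.2.2
    rw [lintegral_expMeasure] at h1 hn ⊢
    rw [← hsplit, lintegral_union measurableSet_Ioi hdisj]
    refine ENNReal.add_lt_top.2 ⟨?_, ?_⟩
    · refine lt_of_le_of_lt ?_ h1
      rw [setLIntegral_congr_fun (g := fun s => ENNReal.ofReal (wt ε s) * ENNReal.ofReal (M s ^ 2))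
        measurableSet_Ioc (fun s hs => by simp only [concat_of_le hs.2])]
      exact lintegral_mono_set Ioc_subset_Ioi_self
    · rw [setLIntegral_congr_fun (g := fun s => ENNReal.ofReal (Real.exp (-t / ε)) *
        (ENNReal.ofReal (wt ε (s - t)) * ENNReal.ofReal (n (s - t) ^ 2)))
        measurableSet_Ioi (fun s hs => by
          simp only [concat_of_lt (mem_Ioi.1 hs)]
          rw [hwt, ENNReal.ofReal_mul (Real.exp_pos _).le, mul_assoc])]
      rw [lintegral_const_mul' _ _ ENNReal.ofReal_ne_top, lintegral_Ioi_sub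
        (fun s => ENNReal.ofReal (wt ε s) * ENNReal.ofReal (n s ^ 2))]
      exact ENNReal.mul_lt_top ENNReal.ofReal_lt_top hn
  have hfI := (integrable_expMeasure hε).1 hinteg
  have hbI := (integrable_expMeasure hε).1 hb
  have hc1 : EqOn (fun s => wt ε s * WED.concat t f b s) (fun s => wt ε s * f s) (Ioc 0 t) :=
    fun s hs => by simp only [concat_of_le hs.2]
  have hc2 : EqOn (fun s => wt ε s * WED.concat t f b s)
      (fun s => Real.exp (-t / ε) * (wt ε (s - t) * b (s - t))) (Ioi t) := fun s hs => by
    simp only [concat_of_lt (mem_Ioi.1 hs)]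
    rw [hwt, mul_assoc]
  have hI1 : IntegrableOn (fun s => wt ε s * f s) (Ioc 0 t) := hfI.mono_set Ioc_subset_Ioi_self
  have hI1' : IntegrableOn (fun s => wt ε s * f s) (Ioi t) := hfI.mono_set (Ioi_subset_Ioi ht)
  have hI2 : IntegrableOn (fun s => Real.exp (-t / ε) * (wt ε (s - t) * b (s - t))) (Ioi t) :=
    Integrable.const_mul (integrableOn_Ioi_sub t hbI) _
  have hJ1 := IntegrableOn.congr_fun hI1 hc1.symm measurableSet_Ioc
  have hJ2 := IntegrableOn.congr_fun hI2 hc2.symm measurableSet_Ioi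
  have hJ : IntegrableOn (fun s => wt ε s * WED.concat t f b s) (Ioi 0) := by
    rw [← hsplit]; exact hJ1.union hJ2
  have hle : WEDfun φ ε u M ≤ ((∫ s, WED.concat t f b s ∂expMeasure ε : ℝ) : EReal) := by
    refine (hmin.2 _ _ hadm).trans ?_
    rw [← eIntegral_coe ((integrable_expMeasure hε).2 hJ)]
    refine eIntegral_mono ((ae_expMeasure hε).2 ?_)
    filter_upwards [hfin, ae_sub t hvb] with s hs hs' h0
    rcases le_or_gt s t with hst | hst
    · simp only [wedIntegrand, concat_of_le hst]
      simp only [hf, dens]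
      rw [EReal.coe_add, EReal.coe_toReal (hs h0) (h.ne_bot _)]
    · simp only [wedIntegrand, concat_of_lt hst]
      exact hs' (by linarith)
  have heq : WEDfun φ ε u M = ((∫ s, f s ∂expMeasure ε : ℝ) : EReal) := by
    rw [← eIntegral_coe hinteg]
    refine eIntegral_congr ((ae_expMeasure hε).2 ?_)
    filter_upwards [hfin] with s hs h0
    simp only [wedIntegrand, hf, dens]
    rw [EReal.coe_add, EReal.coe_toReal (hs h0) (h.ne_bot _)]
  rw [heq, EReal.coe_le_coe_iff, integral_expMeasure hε, integral_expMeasure hε, ← hsplit,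
    setIntegral_union hdisj measurableSet_Ioi hI1 hI1',
    setIntegral_union hdisj measurableSet_Ioi hJ1 hJ2,
    setIntegral_congr_fun measurableSet_Ioc hc1, setIntegral_congr_fun measurableSet_Ioi hc2,
    integral_const_mul, integral_Ioi_sub (fun s => wt ε s * b s), add_le_add_iff_left] at hle
  rw [integral_expMeasure hε, value]
  calc _ ≤ Real.exp (t / ε) * (Real.exp (-t / ε) * ∫ s in Ioi 0, wt ε s * b s) := by gcongr
    _ = _ := by
      rw [← mul_assoc, ← Real.exp_add, neg_div, add_neg_cancel, Real.exp_zero, one_mul]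

theorem IsMinimizer.value_le_energy (h : LSCC σ φ ustar A B) (hc : Compatible σ) {ε : ℝ}
    (hε : 0 < ε) {x : X} {u : ℝ → X} {M : ℝ → ℝ} (hmin : IsMinimizer φ ε x u M)
    (hM : Measurable M) (hx : φ x ≠ ⊤) {t : ℝ} (ht : 0 ≤ t) :
    (value φ ε u M t : EReal) ≤ φ (u t) := by
  by_cases htop : φ (u t) = ⊤
  · rw [htop]; exact le_top
  rw [← EReal.coe_toReal htop (h.ne_bot _), EReal.coe_le_coe_iff]
  have := hmin.value_le h hc hε hM hx ht (AC2LocOn.const (u t)) rfl (by simp)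
    (integrable_const_expMeasure hε (φ (u t)).toReal) (Eventually.of_forall fun s _ => by
      simp only [wedIntegrand]
      rw [EReal.coe_toReal htop (h.ne_bot _)]
      simp)
  rwa [integral_const_expMeasure hε] at this

/-- If `φ` has slope larger than `c` near `u t`, the competitor descending with slope `c`
for a time `T` shows that the value lies strictly below the energy. -/
theorem IsMinimizer.value_le_of_slope [CompleteSpace X] (h : LSCC σ φ ustar A B)
    (hc : Compatible σ) {ε : ℝ} (hε : 0 < ε) {x : X} {u : ℝ → X} {M : ℝ → ℝ}
    (hmin : IsMinimizer φ ε x u M) (hM : Measurable M) (hx : φ x ≠ ⊤) {t : ℝ} (ht : 0 ≤ t)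
    {p c T : ℝ} (hp : φ (u t) = ↑p) (hc0 : 0 < c) (hT : 0 < T)
    (hs : ∀ v, dist (u t) v ≤ c * T → φ v ≤ ↑p → ENNReal.ofReal c < slope φ v) :
    value φ ε u M t ≤ p - ε / 2 * c ^ 2 * (1 - Real.exp (-T / ε)) := by
  obtain ⟨v, n, hv, hv0, hφ, hn⟩ := h.exists_descent_curve hc hc0 hT hp.le hs
  obtain ⟨hb, hb'⟩ := integral_descent hε hT.le p c
  rw [← hb', ← integral_expMeasure hε]
  refine hmin.value_le h hc hε hM hx ht hv hv0 ?_ ((integrable_expMeasure hε).2 hb) ?_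
  · refine lt_of_le_of_lt (lintegral_mono_ae ((ae_expMeasure hε).2 ?_))
      (lintegral_const_expMeasure hε (c ^ 2))
    filter_upwards [hn] with s hs h0
    refine ENNReal.ofReal_le_ofReal ((hs h0).trans ?_)
    exact indicator_le_self' (fun _ _ => sq_nonneg c) s
  · filter_upwards [hn] with s hs h0
    rw [wedIntegrand, EReal.coe_add]
    refine add_le_add ?_ (hφ s h0.le)
    rw [EReal.coe_le_coe_iff]
    exact mul_le_mul_of_nonneg_left (hs h0) (by positivity)

/-- Quadratic lower bound for the value: the coercivity of `φ` around `u t`, where the quadratic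
term is absorbed by the kinetic term through the Hardy inequality as `8Bε ≤ 1`. -/
theorem IsMinimizer.le_value (h : LSCC σ φ ustar A B) (hc : Compatible σ) {ε : ℝ}
    (hε : 0 < ε) (hBε : 8 * B * ε ≤ 1) {x : X} {u : ℝ → X} {M : ℝ → ℝ}
    (hmin : IsMinimizer φ ε x u M) (hM : Measurable M) (hx : φ x ≠ ⊤) {t : ℝ} (ht : 0 ≤ t) :
    -(B * dist (u t) ustar ^ 2 + A) ≤ value φ ε u M t := by
  obtain ⟨hfin, hinteg⟩ := hmin.integrable h hc hε hM hx
  have hB := h.hB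
  set Q := B * dist (u t) ustar ^ 2 + A with hQ
  have hfI := ((integrable_expMeasure hε).1 hinteg).mono_set (Ioi_subset_Ioi ht)
  have hM2 : IntegrableOn (fun s => wt ε s * M s ^ 2) (Ioi t) := by
    have h1 : Integrable (fun s => M s ^ 2) (expMeasure ε) := by
      refine ⟨(hM.pow_const 2).aestronglyMeasurable, ?_⟩
      rw [hasFiniteIntegral_iff_ofReal (Eventually.of_forall fun t => sq_nonneg _)]
      exact hmin.1.2.2
    exact ((integrable_expMeasure hε).1 h1).mono_set (Ioi_subset_Ioi ht)
  have hd2 : IntegrableOn (fun s => wt ε s * dist (u s) (u t) ^ 2) (Ioi t) ∧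
      ∫ s in Ioi t, wt ε s * dist (u s) (u t) ^ 2 ≤
        4 * ε ^ 2 * ∫ s in Ioi t, wt ε s * M s ^ 2 := by
    have hcont : Continuous fun s => dist (u (max s 0)) (u t) := by
      refine continuous_iff_continuousAt.2 fun r => ?_
      refine tendsto_iff_dist_tendsto_zero.2 (squeeze_zero (fun s => dist_nonneg) (fun s => ?_)
        (hmin.1.2.1.tendsto_dist hM r))
      rw [Real.dist_eq]
      exact abs_dist_sub_le _ _ _
    have hmeas : AEStronglyMeasurable (fun s => wt ε s * dist (u s) (u t) ^ 2)
        (volume.restrict (Ioi t)) := by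
      refine (((continuous_wt ε).mul (hcont.pow 2)).aestronglyMeasurable).congr ?_
      rw [EventuallyEq, ae_restrict_iff' measurableSet_Ioi]
      exact Eventually.of_forall fun s hs => by
        simp only [Pi.mul_apply, Pi.pow_apply, max_eq_left (ht.trans (mem_Ioi.1 hs).le)]
    have hhardy := hmin.1.2.1.hardy hM hε ht
    simp_rw [← ENNReal.ofReal_mul (wt_pos hε _).le] at hhardy
    have hnn : ∀ s, 0 ≤ wt ε s * M s ^ 2 := fun s => mul_nonneg (wt_pos hε s).le (sq_nonneg _)
    have hnd : ∀ s, 0 ≤ wt ε s * dist (u s) (u t) ^ 2 :=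
      fun s => mul_nonneg (wt_pos hε s).le (sq_nonneg _)
    have hI0 : 0 ≤ ∫ s in Ioi t, wt ε s * M s ^ 2 := integral_nonneg hnn
    rw [← ofReal_integral_eq_lintegral_ofReal hM2 (Eventually.of_forall hnn),
      ← ENNReal.ofReal_mul (by positivity)] at hhardy
    have hd : IntegrableOn (fun s => wt ε s * dist (u s) (u t) ^ 2) (Ioi t) := by
      refine ⟨hmeas, ?_⟩
      rw [hasFiniteIntegral_iff_ofReal (Eventually.of_forall hnd)]
      exact hhardy.trans_lt ENNReal.ofReal_lt_top
    refine ⟨hd, ?_⟩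
    rwa [← ofReal_integral_eq_lintegral_ofReal hd (Eventually.of_forall hnd),
      ENNReal.ofReal_le_ofReal_iff (by positivity)] at hhardy
  have hI0 : 0 ≤ ∫ s in Ioi t, wt ε s * M s ^ 2 :=
    integral_nonneg fun s => mul_nonneg (wt_pos hε s).le (sq_nonneg _)
  have hkey : -(Q * Real.exp (-t / ε)) ≤ ∫ s in Ioi t, wt ε s * dens φ ε u M s := by
    calc -(Q * Real.exp (-t / ε))
        ≤ ε / 2 * (∫ s in Ioi t, wt ε s * M s ^ 2)
          - B * (∫ s in Ioi t, wt ε s * dist (u s) (u t) ^ 2) - Q * Real.exp (-t / ε) := by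
          have h1 := mul_le_mul_of_nonneg_left hd2.2 hB
          have h2 : 0 ≤ (1 - 8 * B * ε) * (ε / 2 * ∫ s in Ioi t, wt ε s * M s ^ 2) :=
            mul_nonneg (by linarith) (by positivity)
          nlinarith
      _ = ∫ s in Ioi t, (ε / 2 * (wt ε s * M s ^ 2) - B * (wt ε s * dist (u s) (u t) ^ 2)
          - Q * wt ε s) := by
          have e1 := integral_sub
            ((Integrable.const_mul hM2 (ε / 2)).sub (Integrable.const_mul hd2.1 B))
            (Integrable.const_mul (integrableOn_wt hε t) Q)
          simp only [Pi.sub_apply] at e1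
          rw [e1, integral_sub (Integrable.const_mul hM2 _) (Integrable.const_mul hd2.1 _),
            integral_const_mul, integral_const_mul, integral_const_mul, integral_wt hε]
      _ ≤ _ := by
          refine setIntegral_mono_on_ae
            (((Integrable.const_mul hM2 _).sub (Integrable.const_mul hd2.1 _)).sub
              (Integrable.const_mul (integrableOn_wt hε t) _)) hfI measurableSet_Ioi ?_
          filter_upwards [hfin] with s hs hst
          have h1 := h.coercive (u s) (u t)
          rw [← EReal.coe_toReal (hs (ht.trans_lt hst)) (h.ne_bot _), EReal.coe_le_coe_iff] at h1
          have h2 := mul_le_mul_of_nonneg_left h1 (wt_pos hε s).le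
          rw [dens]
          linarith
  rw [value]
  calc -Q = Real.exp (t / ε) * -(Q * Real.exp (-t / ε)) := by
        rw [mul_neg, mul_left_comm, ← Real.exp_add, neg_div, add_neg_cancel, Real.exp_zero,
          mul_one]
    _ ≤ _ := by gcongr

end

/-! ### The energy identity at fixed `ε` -/

/-- The function `W(t) = e^{t/ε} ∫_t^∞ f dμ_ε` solves `W' = (W - f)/ε`, in integrated form. -/
theorem weighted_tail_identity {ε : ℝ} (hε : 0 < ε) {f W : ℝ → ℝ}
    (hf : IntegrableOn (fun s => wt ε s * f s) (Ioi 0))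
    (hW : ∀ t, W t = Real.exp (t / ε) * ∫ s in Ioi t, wt ε s * f s) :
    (∀ b, IntegrableOn f (Icc 0 b)) ∧ Continuous (fun t => W (max t 0)) ∧
      ∀ t, 0 ≤ t → W 0 - W t = ∫ r in (0:ℝ)..t, ε⁻¹ * (f r - W r) := by
  set G : ℝ → ℝ := (Ioi 0).indicator fun s => wt ε s * f s with hG
  have hGi : Integrable G := (integrable_indicator_iff measurableSet_Ioi).2 hf
  set J : ℝ → ℝ := fun t => (∫ s in Ioi 0, wt ε s * f s) - ∫ s in (0:ℝ)..t, G s with hJ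
  have hJc : Continuous J := continuous_const.sub
    (intervalIntegral.continuous_primitive (fun a b => hGi.intervalIntegrable) 0)
  have hWJ : ∀ t, 0 ≤ t → W t = Real.exp (t / ε) * J t := by
    intro t ht
    rw [hW]
    congr 1
    have hdisj : Disjoint (Ioc 0 t) (Ioi t) := by
      rw [Set.disjoint_left]; intro s hs hs'; exact not_lt.2 hs.2 hs'
    have h1 : ∫ s in (0:ℝ)..t, G s = ∫ s in Ioc 0 t, wt ε s * f s := by
      rw [intervalIntegral.integral_of_le ht]
      exact setIntegral_congr_fun measurableSet_Ioc fun s hs => by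
        simp only [hG]; rw [indicator_of_mem (mem_Ioi.2 hs.1)]
    simp only [hJ]
    rw [h1, ← Ioc_union_Ioi_eq_Ioi ht, setIntegral_union hdisj measurableSet_Ioi
      (hf.mono_set Ioc_subset_Ioi_self) (hf.mono_set (Ioi_subset_Ioi ht))]
    ring
  have hwe : ∀ r, Real.exp (r / ε) * wt ε r = ε⁻¹ := fun r => by
    rw [wt, mul_left_comm, ← Real.exp_add, neg_div, add_neg_cancel, Real.exp_zero, mul_one]
  refine ⟨fun b => ?_, ?_, fun t ht => ?_⟩
  · have h1 : IntegrableOn (fun s => wt ε s * f s) (Icc 0 b) := by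
      rw [integrableOn_Icc_iff_integrableOn_Ioc]
      exact hf.mono_set Ioc_subset_Ioi_self
    have h2 : Continuous fun s => ε * Real.exp (s / ε) := by fun_prop
    refine IntegrableOn.congr_fun (h1.continuousOn_mul h2.continuousOn isCompact_Icc)
      (fun s _ => ?_) measurableSet_Icc
    have := hwe s
    calc ε * Real.exp (s / ε) * (wt ε s * f s) = ε * (Real.exp (s / ε) * wt ε s) * f s := by ring
      _ = f s := by rw [this]; field_simp
  · have h1 : (fun t => W (max t 0)) = fun t => Real.exp (max t 0 / ε) * J (max t 0) :=
      funext fun t => hWJ _ (le_max_right _ _)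
    rw [h1]
    have := hJc.comp (continuous_id.max continuous_const : Continuous fun t : ℝ => max t 0)
    exact (by fun_prop : Continuous fun t : ℝ => Real.exp (max t 0 / ε)).mul this
  · have hac1 : AbsolutelyContinuousOnInterval (fun r : ℝ => Real.exp (r / ε)) 0 t :=
      ContDiffOn.absolutelyContinuousOnInterval
        (Real.contDiff_exp.comp (contDiff_id.div_const ε)).contDiffOn
    have hac2 : AbsolutelyContinuousOnInterval J 0 t := by
      have h1 : AbsolutelyContinuousOnInterval
          (fun _ : ℝ => ∫ s in Ioi 0, wt ε s * f s) 0 t :=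
        ContDiffOn.absolutelyContinuousOnInterval contDiff_const.contDiffOn
      exact h1.sub (hGi.intervalIntegrable.absolutelyContinuousOnInterval_intervalIntegral
        left_mem_uIcc)
    have h1 := hac1.integral_deriv_mul_eq_sub hac2
    have h2 : W 0 - W t = -(Real.exp (t / ε) * J t - Real.exp (0 / ε) * J 0) := by
      rw [hWJ 0 le_rfl, hWJ t ht]; ring
    rw [h2, ← h1, ← intervalIntegral.integral_neg]
    refine intervalIntegral.integral_congr_ae ?_
    filter_upwards [LocallyIntegrable.ae_hasDerivAt_integral hGi.locallyIntegrable] with r hr hrt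
    rw [uIoc_of_le ht] at hrt
    have h3 : deriv (fun r : ℝ => Real.exp (r / ε)) r = Real.exp (r / ε) * ε⁻¹ := by
      have := ((hasDerivAt_id r).div_const ε).exp.deriv
      simp only [id] at this
      rw [this]; ring
    have h4 : deriv J r = -(wt ε r * f r) := by
      rw [((hr 0).const_sub _).deriv]
      simp only [hG]; rw [indicator_of_mem (mem_Ioi.2 hrt.1)]
    rw [h3, h4, hWJ r hrt.1.le]
    have := hwe r
    calc _ = -(Real.exp (r / ε) * ε⁻¹ * J r) + (Real.exp (r / ε) * wt ε r) * f r := by ring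
      _ = _ := by rw [this]; ring

/-- What the limit passage uses about a minimizer `u` at level `ε`: `M` is its metric derivative,
`W` the value left at time `t`, and `a = (φ(u) - W)/ε`. -/
structure MinData (φ : X → EReal) (ustar : X) (A B ε : ℝ) (x : X) (u : ℝ → X)
    (M a W : ℝ → ℝ) : Prop where
  start : u 0 = x
  measM : Measurable M
  measa : Measurable a
  a_nonneg : ∀ t, 0 ≤ a t
  intM : ∀ b, IntegrableOn (fun r => M r ^ 2) (Icc 0 b)
  inta : ∀ b, IntegrableOn a (Icc 0 b)
  energy : ∀ᵐ t, 0 ≤ t → φ (u t) = ((W t + ε * a t : ℝ) : EReal)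
  identity : ∀ s t, 0 ≤ s → s ≤ t → W s - W t = ∫ r in Icc s t, (1 / 2 * M r ^ 2 + a r)
  init : (W 0 : EReal) ≤ φ x
  lower : ∀ t, 0 ≤ t → -(B * dist (u t) ustar ^ 2 + A) ≤ W t
  dist_sq : ∀ s t, 0 ≤ s → s ≤ t → dist (u s) (u t) ^ 2 ≤ (t - s) * ∫ r in Icc s t, M r ^ 2
  slope_le : ∀ t, 0 ≤ t → φ (u t) = ((W t + ε * a t : ℝ) : EReal) → ∀ c T : ℝ, 0 < c → 0 < T →
    (∀ v, dist (u t) v ≤ c * T → φ v ≤ φ (u t) → ENNReal.ofReal c < slope φ v) →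
    c ^ 2 / 2 * (1 - Real.exp (-T / ε)) ≤ a t

theorem IsMinimizer.exists_minData [CompleteSpace X] {σ : TopologicalSpace X} {φ : X → EReal}
    {ustar : X} {A B : ℝ} (h : LSCC σ φ ustar A B) (hc : Compatible σ) {ε : ℝ} (hε : 0 < ε)
    (hBε : 8 * B * ε ≤ 1) {x : X} {u : ℝ → X} {m : ℝ → ℝ} (hmin' : IsMinimizer φ ε x u m)
    (hx : φ x ≠ ⊤) : ∃ M a W, MinData φ ustar A B ε x u M a W := by
  obtain ⟨M, hM, hmin⟩ := hmin'.exists_measurable hε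
  obtain ⟨hfin, hinteg⟩ := hmin.integrable h hc hε hM hx
  set W := value φ ε u M with hW
  obtain ⟨hfi, hWc, hid⟩ := weighted_tail_identity hε ((integrable_expMeasure hε).1 hinteg)
    (W := W) (fun t => rfl)
  have hle : ∀ t, 0 ≤ t → (W t : EReal) ≤ φ (u t) := fun t ht =>
    hmin.value_le_energy h hc hε hM hx ht
  have hψm := measurable_comp h hc hmin.1.2.1 hM
  set a : ℝ → ℝ := fun t => if φ (u (max t 0)) = ⊤ then 0 else
    ((φ (u (max t 0))).toReal - W (max t 0)) / ε with ha
  have ham : Measurable a := Measurable.ite (hψm (measurableSet_singleton ⊤)) measurable_const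
    ((hψm.ereal_toReal.sub hWc.measurable).div_const ε)
  have ha0 : ∀ t, 0 ≤ a t := by
    intro t
    simp only [ha]
    split_ifs with htop
    · exact le_rfl
    · have := hle _ (le_max_right t 0)
      rw [← EReal.coe_toReal htop (h.ne_bot _), EReal.coe_le_coe_iff] at this
      exact div_nonneg (sub_nonneg.2 this) hε.le
  have haeq : ∀ t, 0 ≤ t → φ (u t) ≠ ⊤ → a t = ((φ (u t)).toReal - W t) / ε := by
    intro t ht htop
    simp only [ha, max_eq_left ht]
    rw [if_neg htop]
  have hfin' : ∀ᵐ t, 0 ≤ t → φ (u t) ≠ ⊤ := by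
    filter_upwards [hfin, Measure.ae_ne volume 0] with t ht ht0 h0
    exact ht (lt_of_le_of_ne h0 (Ne.symm ht0))
  have hM2 : ∀ b, IntegrableOn (fun r => M r ^ 2) (Icc 0 b) := by
    intro b
    rcases le_or_gt 0 b with hb | hb
    · exact hmin.1.2.1.2 0 (by simp) b hb
    · rw [Icc_eq_empty (not_le.2 hb)]; exact integrableOn_empty
  have hdens : ∀ t, 0 ≤ t → φ (u t) ≠ ⊤ →
      ε⁻¹ * (dens φ ε u M t - W t) = 1 / 2 * M t ^ 2 + a t := by
    intro t ht htop
    rw [haeq t ht htop, dens]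
    field_simp
    ring
  have haI : ∀ b, IntegrableOn a (Icc 0 b) := by
    intro b
    have hWI : IntegrableOn W (Icc 0 b) :=
      IntegrableOn.congr_fun hWc.integrableOn_Icc (fun t ht => by simp only [max_eq_left ht.1])
        measurableSet_Icc
    have h1 : IntegrableOn (fun t => ε⁻¹ * (dens φ ε u M t - W t) - 1 / 2 * M t ^ 2) (Icc 0 b) :=
      (Integrable.const_mul ((hfi b).sub hWI) _).sub (Integrable.const_mul (hM2 b) _)
    refine Integrable.congr h1 ?_
    rw [EventuallyEq, ae_restrict_iff' measurableSet_Icc]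
    filter_upwards [hfin'] with t ht htb
    rw [hdens t htb.1 (ht htb.1)]; ring
  have hsum : ∀ b, IntegrableOn (fun r => 1 / 2 * M r ^ 2 + a r) (Icc 0 b) := fun b =>
    (Integrable.const_mul (hM2 b) _).add (haI b)
  have hid' : ∀ t, 0 ≤ t → W 0 - W t = ∫ r in (0:ℝ)..t, (1 / 2 * M r ^ 2 + a r) := by
    intro t ht
    rw [hid t ht]
    refine intervalIntegral.integral_congr_ae ?_
    filter_upwards [hfin'] with r hr hrt
    rw [uIoc_of_le ht] at hrt
    exact hdens r hrt.1.le (hr hrt.1.le)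
  refine ⟨M, a, W, hmin.1.1, hM, ham, ha0, hM2, haI, ?_, ?_, ?_, ?_, ?_, ?_⟩
  · filter_upwards [hfin'] with t ht h0
    rw [haeq t h0 (ht h0), ← EReal.coe_toReal (ht h0) (h.ne_bot _), EReal.coe_eq_coe_iff,
      EReal.toReal_coe]
    field_simp
    ring
  · intro s t hs hst
    have h1 := hid' s hs
    have h2 := hid' t (hs.trans hst)
    rw [integral_Icc_eq_integral_Ioc, ← intervalIntegral.integral_of_le hst]
    have h3 := intervalIntegral.integral_add_adjacent_intervals
      ((intervalIntegrable_iff_integrableOn_Icc_of_le hs).2 (hsum s))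
      ((intervalIntegrable_iff_integrableOn_Icc_of_le hst).2
        ((hsum t).mono_set (Icc_subset_Icc_left hs)))
    linarith
  · have := hle 0 le_rfl
    rwa [hmin.1.1] at this
  · exact fun t ht => hmin.le_value h hc hε hBε hM hx ht
  · exact fun s t hs hst => hmin.1.2.1.sq_dist_le hM hs hst
  · intro t ht hp c T hc0 hT hs
    rw [hp] at hs
    have h1 := hmin.value_le_of_slope h hc hε hM hx ht hp hc0 hT hs
    rw [← hW] at h1
    have h2 : ε * (c ^ 2 / 2 * (1 - Real.exp (-T / ε))) ≤ ε * a t := by linarith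
    exact le_of_mul_le_mul_left h2 hε

/-! ### Uniform bounds and compactness -/

section

variable {φ : X → EReal} {ustar : X} {A B ε : ℝ} {x : X} {u : ℝ → X} {M a W : ℝ → ℝ}

theorem MinData.sum_integral (h : MinData φ ustar A B ε x u M a W) {s t : ℝ} (hs : 0 ≤ s)
    (hst : s ≤ t) :
    W s - W t = 1 / 2 * (∫ r in Icc s t, M r ^ 2) + ∫ r in Icc s t, a r := by
  rw [h.identity s t hs hst, integral_add, integral_const_mul]
  · exact Integrable.const_mul ((h.intM t).mono_set (Icc_subset_Icc_left hs)) _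
  · exact (h.inta t).mono_set (Icc_subset_Icc_left hs)

theorem MinData.antitone (h : MinData φ ustar A B ε x u M a W) {s t : ℝ} (hs : 0 ≤ s)
    (hst : s ≤ t) : W t ≤ W s := by
  have h1 := h.sum_integral hs hst
  have h2 : 0 ≤ ∫ r in Icc s t, M r ^ 2 := integral_nonneg fun r => sq_nonneg _
  have h3 : 0 ≤ ∫ r in Icc s t, a r := integral_nonneg h.a_nonneg
  linarith

end

/-- Gronwall-type bound, by induction on time steps so short that the quadratic lower bound on
the value can be absorbed. -/
theorem exists_dist_bound (φ : X → EReal) (ustar : X) {A B : ℝ} (hA : 0 ≤ A) (hB : 0 ≤ B)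
    (P R₀ : ℝ) (n : ℕ) :
    ∃ R, 0 ≤ R ∧ ∀ (ε : ℝ) (x : X) (u : ℝ → X) (M a W : ℝ → ℝ), MinData φ ustar A B ε x u M a W →
      W 0 ≤ P → dist x ustar ^ 2 ≤ R₀ → ∀ t, 0 ≤ t → t ≤ n * (1 / (8 * (B + 1))) →
        dist (u t) ustar ^ 2 ≤ R := by
  set T₀ : ℝ := 1 / (8 * (B + 1)) with hT₀
  have hT₀p : 0 < T₀ := by positivity
  have hT₀B : 4 * T₀ * B ≤ 1 / 2 := by
    have h1 : 4 * T₀ * B = B / (2 * (B + 1)) := by rw [hT₀]; field_simp; ring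
    rw [h1, div_le_div_iff₀ (by positivity) (by norm_num)]
    linarith
  induction n with
  | zero =>
    refine ⟨|R₀|, abs_nonneg _, fun ε x u M a W h hP hR t ht0 ht => ?_⟩
    have : t = 0 := le_antisymm (by simpa using ht) ht0
    rw [this, h.start]
    exact hR.trans (le_abs_self _)
  | succ n ih =>
    obtain ⟨R, hR0, hR⟩ := ih
    refine ⟨4 * R + 8 * T₀ * (|P| + A), by positivity, fun ε x u M a W h hP hx t ht0 ht => ?_⟩
    have hextra : 0 ≤ 8 * T₀ * (|P| + A) := by positivity
    rcases le_total t (n * T₀) with hle | hle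
    · have := hR ε x u M a W h hP hx t ht0 hle
      linarith
    set s : ℝ := n * T₀ with hs
    have hs0 : 0 ≤ s := by positivity
    have h1 := hR ε x u M a W h hP hx s hs0 le_rfl
    have h2 := h.sum_integral hs0 hle
    have h3 := h.antitone le_rfl hs0
    have h4 := h.lower t ht0
    have h5 := h.dist_sq s t hs0 hle
    have h6 : 0 ≤ ∫ r in Icc s t, a r := integral_nonneg h.a_nonneg
    have h7 : 0 ≤ ∫ r in Icc s t, M r ^ 2 := integral_nonneg fun r => sq_nonneg _
    have h8 : t - s ≤ T₀ := by
      rw [hs]; push_cast at ht; linarith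
    have h9 : dist (u t) ustar ^ 2 ≤ 2 * dist (u s) ustar ^ 2 + 2 * dist (u s) (u t) ^ 2 := by
      have := dist_triangle (u t) (u s) ustar
      rw [dist_comm (u t) (u s)] at this
      nlinarith [sq_nonneg (dist (u s) ustar - dist (u s) (u t)), dist_nonneg (x := u t) (y := ustar)]
    set D := dist (u t) ustar ^ 2 with hD
    have hD0 : 0 ≤ D := sq_nonneg _
    have h10 : (∫ r in Icc s t, M r ^ 2) ≤ 2 * (|P| + A + B * D) := by
      have := le_abs_self P
      linarith
    have h11 : dist (u s) (u t) ^ 2 ≤ T₀ * (2 * (|P| + A + B * D)) :=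
      h5.trans (mul_le_mul h8 h10 h7 hT₀p.le)
    have h12 : 4 * T₀ * B * D ≤ 1 / 2 * D := mul_le_mul_of_nonneg_right hT₀B hD0
    nlinarith

/-- A sequence of minimizers with vanishing `ε` and uniformly controlled initial data. -/
structure SeqData (φ : X → EReal) (ustar : X) (A B P R₀ : ℝ) (ε : ℕ → ℝ) (x : ℕ → X)
    (f : ℕ → ℝ → X) (M a W : ℕ → ℝ → ℝ) : Prop where
  pos : ∀ k, 0 < ε k
  lim : Tendsto ε atTop (𝓝 0)
  data : ∀ k, MinData φ ustar A B (ε k) (x k) (f k) (M k) (a k) (W k)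
  init : ∀ k, W k 0 ≤ P
  near : ∀ k, dist (x k) ustar ^ 2 ≤ R₀

section

variable {φ : X → EReal} {ustar : X} {A B P R₀ : ℝ} {ε : ℕ → ℝ} {x : ℕ → X}
  {f : ℕ → ℝ → X} {M a W : ℕ → ℝ → ℝ}

theorem SeqData.comp (h : SeqData φ ustar A B P R₀ ε x f M a W) {j : ℕ → ℕ} (hj : StrictMono j) :
    SeqData φ ustar A B P R₀ (ε ∘ j) (x ∘ j) (f ∘ j) (M ∘ j) (a ∘ j) (W ∘ j) :=
  ⟨fun _ => h.pos _, h.lim.comp hj.tendsto_atTop, fun _ => h.data _, fun _ => h.init _,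
    fun _ => h.near _⟩

theorem SeqData.exists_bound (h : SeqData φ ustar A B P R₀ ε x f M a W) (hA : 0 ≤ A)
    (hB : 0 ≤ B) (T : ℝ) :
    ∃ R, 0 ≤ R ∧ ∀ k t, 0 ≤ t → t ≤ T → dist (f k t) ustar ≤ R ∧ W k t ≤ P ∧
      ∫ r in Icc 0 t, M k r ^ 2 ≤ R ∧ ∫ r in Icc 0 t, a k r ≤ R := by
  obtain ⟨n, hn⟩ := exists_nat_ge (T * (8 * (B + 1)))
  obtain ⟨R, hR0, hR⟩ := exists_dist_bound φ ustar hA hB P R₀ n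
  refine ⟨√R + 2 * (|P| + A + B * R), by positivity, fun k t ht0 htT => ?_⟩
  have hd := h.data k
  have hle : t ≤ n * (1 / (8 * (B + 1))) := by
    rw [mul_one_div, le_div_iff₀ (by positivity)]
    refine le_trans ?_ hn
    exact mul_le_mul_of_nonneg_right htT (by positivity)
  have h1 := hR _ _ _ _ _ _ hd (h.init k) (h.near k) t ht0 hle
  have h2 := hd.sum_integral le_rfl ht0
  have h4 := hd.lower t ht0
  have h5 := mul_le_mul_of_nonneg_left h1 hB
  have h6 : 0 ≤ ∫ r in Icc 0 t, a k r := integral_nonneg hd.a_nonneg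
  have h7 : 0 ≤ ∫ r in Icc 0 t, M k r ^ 2 := integral_nonneg fun r => sq_nonneg _
  have h8 := h.init k
  have h9 := le_abs_self P
  have h10 := abs_nonneg P
  have h11 : 0 ≤ √R := Real.sqrt_nonneg _
  have h12 : 0 ≤ B * R := by positivity
  refine ⟨?_, (hd.antitone le_rfl ht0).trans h8, by linarith, by linarith⟩
  have := Real.le_sqrt_of_sq_le h1
  linarith

/-- Along a subsequence, the gap `φ(u_k) - W_k = ε_k a_k` vanishes at a.e. time. -/
theorem SeqData.exists_subseq_gap (h : SeqData φ ustar A B P R₀ ε x f M a W) (hA : 0 ≤ A)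
    (hB : 0 ≤ B) : ∃ j : ℕ → ℕ, StrictMono j ∧
      ∀ᵐ t, 0 ≤ t → Tendsto (fun k => ε (j k) * a (j k) t) atTop (𝓝 0) := by
  choose R hR0 hR using fun n : ℕ => h.exists_bound hA hB (n : ℝ)
  obtain ⟨j, hj, hjn⟩ := extraction_forall_of_eventually
    (P := fun n k => ε k * R n ≤ (1 / 2) ^ n) (fun n => by
      have h1 : Tendsto (fun k => ε k * R n) atTop (𝓝 0) := by
        simpa using h.lim.mul_const (R n)
      exact h1.eventually_le_const (by positivity))
  refine ⟨j, hj, ?_⟩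
  set g : ℕ → ℝ → ℝ≥0∞ := fun n =>
    (Icc (0:ℝ) n).indicator fun t => ENNReal.ofReal (ε (j n) * a (j n) t) with hg
  have hgm : ∀ n, Measurable (g n) := fun n =>
    (((h.data (j n)).measa.const_mul _).ennreal_ofReal).indicator measurableSet_Icc
  have hgi : ∀ n, ∫⁻ t, g n t ≤ ENNReal.ofReal ((1 / 2) ^ n) := by
    intro n
    simp only [hg]
    rw [lintegral_indicator measurableSet_Icc, ← ofReal_integral_eq_lintegral_ofReal
      (Integrable.const_mul ((h.data (j n)).inta n) _)
      (Eventually.of_forall fun t => mul_nonneg (h.pos _).le ((h.data _).a_nonneg t)),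
      integral_const_mul]
    refine ENNReal.ofReal_le_ofReal (le_trans ?_ (hjn n))
    exact mul_le_mul_of_nonneg_left (hR n (j n) n (by positivity) le_rfl).2.2.2 (h.pos _).le
  have hsum : ∫⁻ t, ∑' n, g n t ≠ ⊤ := by
    rw [lintegral_tsum fun n => (hgm n).aemeasurable]
    refine ne_top_of_le_ne_top ?_ (ENNReal.tsum_le_tsum hgi)
    rw [← ENNReal.ofReal_tsum_of_nonneg (fun n => by positivity) summable_geometric_two]
    exact ENNReal.ofReal_ne_top
  filter_upwards [ae_lt_top (Measurable.tsum hgm) hsum] with t ht ht0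
  have h1 := ENNReal.tendsto_atTop_zero_of_tsum_ne_top ht.ne
  have h2 : Tendsto (fun n => (g n t).toReal) atTop (𝓝 0) :=
    (ENNReal.tendsto_toReal ENNReal.zero_ne_top).comp h1
  refine h2.congr' ?_
  filter_upwards [eventually_ge_atTop ⌈t⌉₊] with n hn
  simp only [hg]
  rw [indicator_of_mem (show t ∈ Icc (0:ℝ) n from ⟨ht0, Nat.ceil_le.1 hn⟩), ENNReal.toReal_ofReal
    (mul_nonneg (h.pos _).le ((h.data _).a_nonneg t))]

/-- A time at which the energy of all the curves is known, with vanishing gap to the value. -/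
def GoodTime (φ : X → EReal) (ε : ℕ → ℝ) (f : ℕ → ℝ → X) (a W : ℕ → ℝ → ℝ) (t : ℝ) : Prop :=
  (∀ k, φ (f k t) = ((W k t + ε k * a k t : ℝ) : EReal)) ∧
    Tendsto (fun k => ε k * a k t) atTop (𝓝 0)

theorem GoodTime.comp {t : ℝ} (h : GoodTime φ ε f a W t) {j : ℕ → ℕ} (hj : StrictMono j) :
    GoodTime φ (ε ∘ j) (f ∘ j) (a ∘ j) (W ∘ j) t :=
  ⟨fun _ => h.1 _, h.2.comp hj.tendsto_atTop⟩

theorem exists_good {p : ℝ → Prop} (hp : ∀ᵐ t, 0 ≤ t → p t) {t ρ : ℝ} (ht : 0 ≤ t)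
    (hρ : 0 < ρ) : ∃ s, t < s ∧ s < t + ρ ∧ p s := by
  obtain ⟨s, hs, hs'⟩ := (Measure.dense_of_ae hp).exists_mem_open isOpen_Ioo
    (nonempty_Ioo.2 (by linarith : t < t + ρ))
  exact ⟨s, hs'.1, hs'.2, hs (ht.trans hs'.1.le)⟩

/-- Hölder estimate for the minimizers, in terms of the monotone functions `t ↦ ∫_0^t |u_k'|²`. -/
theorem SeqData.dist_le_sqrt (h : SeqData φ ustar A B P R₀ ε x f M a W) {k : ℕ} {s t : ℝ}
    (hs : 0 ≤ s) (hst : s ≤ t) :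
    dist (f k s) (f k t) ≤
      √((t - s) * ((∫ r in Icc 0 t, M k r ^ 2) - ∫ r in Icc 0 s, M k r ^ 2)) := by
  refine Real.le_sqrt_of_sq_le (((h.data k).dist_sq s t hs hst).trans (le_of_eq ?_))
  congr 1
  have hI := (h.data k).intM t
  have h3 := intervalIntegral.integral_add_adjacent_intervals
      ((intervalIntegrable_iff_integrableOn_Icc_of_le hs).2 ((h.data k).intM s))
      ((intervalIntegrable_iff_integrableOn_Icc_of_le hst).2
        (hI.mono_set (Icc_subset_Icc_left hs)))
  simp only [integral_Icc_eq_integral_Ioc]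
  rw [← intervalIntegral.integral_of_le hst, ← intervalIntegral.integral_of_le hs,
    ← intervalIntegral.integral_of_le (hs.trans hst)]
  linarith

/-- Pointwise `σ`-compactness of the minimizers: the energies are bounded at the good times, which
are dense, and the curves are equicontinuous. -/
theorem SeqData.exists_limit [CompleteSpace X] {σ : TopologicalSpace X}
    (h : SeqData φ ustar A B P R₀ ε x f M a W)
    (hφ : LSCC σ φ ustar A B) (hc : Compatible σ)
    (hgood : ∀ᵐ t, 0 ≤ t → GoodTime φ ε f a W t) :
    ∃ j : ℕ → ℕ, StrictMono j ∧ ∃ u : ℝ → X, ∀ t, 0 ≤ t →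
      Tendsto (fun k => f (j k) t) atTop (@nhds X σ (u t)) := by
  set S : Set ℝ := {t | 0 ≤ t ∧ GoodTime φ ε f a W t} with hS
  have hne : Nonempty S := by
    obtain ⟨s, hs, -, hg⟩ := exists_good hgood le_rfl one_pos
    exact ⟨⟨s, hs.le, hg⟩⟩
  refine hc.exists_subseq_curve f ?_ (fun n => ((TopologicalSpace.denseSeq S n : S) : ℝ))
    (fun n => (TopologicalSpace.denseSeq S n).2.1) ?_ ?_
  · intro t ht η hη
    obtain ⟨R, hR0, hR⟩ := h.exists_bound hφ.hA hφ.hB (t + 1)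
    refine ⟨min 1 (η ^ 2 / (R + 1)), lt_min one_pos (by positivity),
      fun s hs hst => Eventually.of_forall fun k => ?_⟩
    have key : ∀ p q, 0 ≤ p → p ≤ q → q ≤ t + 1 → q - p < η ^ 2 / (R + 1) →
        dist (f k p) (f k q) ≤ η := by
      intro p q hp hpq hq hd
      refine (h.dist_le_sqrt hp hpq).trans ?_
      rw [Real.sqrt_le_left hη.le]
      have h1 := (hR k q (hp.trans hpq) hq).2.2.1
      have h2 : 0 ≤ ∫ r in Icc 0 p, M k r ^ 2 := integral_nonneg fun r => sq_nonneg _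
      rw [lt_div_iff₀ (by positivity)] at hd
      have : (q - p) * ((∫ r in Icc 0 q, M k r ^ 2) - ∫ r in Icc 0 p, M k r ^ 2) ≤
          (q - p) * (R + 1) := mul_le_mul_of_nonneg_left (by linarith) (sub_nonneg.2 hpq)
      linarith
    have h1 := lt_of_lt_of_le hst (min_le_left _ _)
    have h2 := lt_of_lt_of_le hst (min_le_right _ _)
    rw [abs_lt] at h1 h2
    rcases le_total s t with hle | hle
    · exact key s t hs hle (by linarith) (by linarith)
    · rw [dist_comm]
      exact key t s ht hle (by linarith) (by linarith)
  · intro t ht ρ hρ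
    obtain ⟨s, hs1, hs2, hg⟩ := exists_good hgood ht hρ
    obtain ⟨n, hn⟩ := (TopologicalSpace.denseRange_denseSeq S).exists_mem_open
      (isOpen_Ioo.preimage continuous_subtype_val : IsOpen (Subtype.val ⁻¹' Ioo t (t + ρ)))
      ⟨⟨s, ht.trans hs1.le, hg⟩, hs1, hs2⟩
    refine ⟨n, ?_⟩
    have h1 := hn.1
    have h2 := hn.2
    rw [abs_lt]
    constructor <;> linarith
  · intro n j hj
    set q := TopologicalSpace.denseSeq S n with hq
    obtain ⟨R, hR0, hR⟩ := h.exists_bound hφ.hA hφ.hB q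
    obtain ⟨y, i, hi, hy⟩ := hφ.exists_subseq (u := fun k => f (j k) q) (p := ustar) (R := R)
      (C := P + 1)
      (Eventually.of_forall fun k => (hR (j k) q q.2.1 le_rfl).1) (by
        filter_upwards [(q.2.2.2.comp hj.tendsto_atTop).eventually_le_const one_pos] with k hk
        rw [q.2.2.1 (j k), EReal.coe_le_coe_iff]
        have := (hR (j k) q q.2.1 le_rfl).2.1
        simp only [Function.comp] at hk
        linarith)
    exact ⟨y, i, hi, hy⟩

end

/-! ### Passing to the limit -/

section

variable {σ : TopologicalSpace X} {φ : X → EReal} {ustar : X} {A B P R₀ : ℝ} {ε : ℕ → ℝ}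
  {x : ℕ → X} {f : ℕ → ℝ → X} {M a W : ℕ → ℝ → ℝ}

/-- The relaxed slope is controlled by the rescaled gap `2(φ(u_k) - W_k)/ε_k`: if the latter is
less than `c²` infinitely often, then there are points of slope at most `c` within distance
`√ε_k` of `u_k(t)`. -/
theorem SeqData.relaxedSlope_le (h : SeqData φ ustar A B P R₀ ε x f M a W)
    (hφ : LSCC σ φ ustar A B) (hc : Compatible σ) {t : ℝ} (ht : 0 ≤ t)
    (hg : GoodTime φ ε f a W t) {y : X}
    (hy : Tendsto (fun k => f k t) atTop (@nhds X σ y)) :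
    relaxedSlope σ φ y ^ 2 ≤ liminf (fun k => ENNReal.ofReal (2 * a k t)) atTop := by
  obtain ⟨R, hR0, hR⟩ := h.exists_bound hφ.hA hφ.hB t
  refine le_of_forall_gt_imp_ge_of_dense fun b hb => ?_
  by_cases hbt : b = ⊤
  · rw [hbt]; exact le_top
  obtain ⟨b', hb1, hb2⟩ := exists_between hb
  set d := b'.toReal with hd
  set c := √b.toReal with hcd
  have hb0 : 0 < b.toReal := ENNReal.toReal_pos (bot_le.trans_lt hb).ne' hbt
  have hc0 : 0 < c := Real.sqrt_pos.2 hb0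
  have hc2 : c ^ 2 = b.toReal := Real.sq_sqrt hb0.le
  have hdc : d < c ^ 2 := by
    rw [hc2]; exact (ENNReal.toReal_lt_toReal (hb2.trans_le le_top).ne hbt).2 hb2
  have hsq : Tendsto (fun k => √(ε k)) atTop (𝓝 0) := by
    have h1 := (Real.continuous_sqrt.tendsto 0).comp h.lim
    rw [Real.sqrt_zero] at h1
    exact h1
  have hsqp : ∀ k, 0 < √(ε k) := fun k => Real.sqrt_pos.2 (h.pos k)
  have hexp : Tendsto (fun k => c ^ 2 * (1 - Real.exp (-(√(ε k) / c) / ε k))) atTop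
      (𝓝 (c ^ 2)) := by
    have h1 : Tendsto (fun k => c⁻¹ * (√(ε k))⁻¹) atTop atTop :=
      Tendsto.const_mul_atTop (inv_pos.2 hc0) (tendsto_inv_nhdsGT_zero.comp
        (tendsto_nhdsWithin_iff.2 ⟨hsq, Eventually.of_forall hsqp⟩))
    have h2 : ∀ k, -(√(ε k) / c) / ε k = -(c⁻¹ * (√(ε k))⁻¹) := by
      intro k
      have h3 := Real.mul_self_sqrt (h.pos k).le
      have h4 := hsqp k
      have h5 := h.pos k
      rw [neg_div, neg_inj, div_div, ← mul_inv, div_eq_iff (by positivity), eq_comm,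
        inv_mul_eq_div, div_eq_iff (by positivity)]
      calc c * ε k = c * (√(ε k) * √(ε k)) := by rw [h3]
        _ = _ := by ring
    have h3 := (Real.tendsto_exp_neg_atTop_nhds_zero.comp h1)
    have h4 : Tendsto (fun k => c ^ 2 * (1 - Real.exp (-(c⁻¹ * (√(ε k))⁻¹)))) atTop
        (𝓝 (c ^ 2 * (1 - 0))) := (tendsto_const_nhds.sub h3).const_mul _
    simpa only [h2, sub_zero, mul_one] using h4
  have hfreq : ∃ᶠ k in atTop, ∃ v, dist (f k t) v ≤ √(ε k) ∧ √(ε k) ≤ 1 ∧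
      φ v ≤ ((P + 1 : ℝ) : EReal) ∧ slope φ v ≤ ENNReal.ofReal c := by
    have h1 := frequently_lt_of_liminf_lt (h := hb1)
    refine (h1.and_eventually ((hexp.eventually_const_lt hdc).and
      ((hsq.eventually_le_const one_pos).and (hg.2.eventually_le_const one_pos)))).mono ?_
    rintro k ⟨hk1, hk2, hk3, hk4⟩
    have hk1' : 2 * a k t < d := by
      have := (ENNReal.toReal_lt_toReal ENNReal.ofReal_ne_top (hb2.trans_le le_top).ne).2 hk1
      rwa [ENNReal.toReal_ofReal (by have := (h.data k).a_nonneg t; positivity)] at this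
    by_contra! hcon
    have h2 := (h.data k).slope_le t ht (hg.1 k) c (√(ε k) / c) hc0 (div_pos (hsqp k) hc0) ?_
    · linarith
    · intro v hv hvφ
      rw [mul_div_cancel₀ _ hc0.ne'] at hv
      refine hcon v hv hk3 (hvφ.trans ?_)
      rw [hg.1 k, EReal.coe_le_coe_iff]
      have := (hR k t ht le_rfl).2.1
      linarith
  obtain ⟨i, hi, hv⟩ := extraction_of_frequently_atTop hfreq
  choose v hv1 hv2 hv3 hv4 using hv
  have hvy : Tendsto v atTop (@nhds X σ y) := by
    refine hc.tendsto_of_dist (hy.comp hi.tendsto_atTop) ?_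
    exact squeeze_zero (fun n => dist_nonneg) hv1 (hsq.comp hi.tendsto_atTop)
  have hle : relaxedSlope σ φ y ≤ ENNReal.ofReal c := by
    rw [relaxedSlope]
    refine (iInf_le _ v).trans ((iInf_le _ hvy).trans ((iInf_le _ ?_).trans
      (liminf_le_of_frequently_le' (Eventually.of_forall hv4).frequently)))
    refine ⟨max (1 + R + dist ustar y) (P + 1), fun n => ⟨?_, ?_⟩⟩
    · refine le_max_of_le_left ?_
      have h1 := dist_triangle (v n) (f (i n) t) y
      have h2 := dist_triangle (f (i n) t) ustar y
      have h3 := (hR (i n) t ht le_rfl).1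
      have h4 := hv1 n
      rw [dist_comm] at h4
      have h5 := hv2 n
      linarith
    · exact (hv3 n).trans (EReal.coe_le_coe_iff.2 (le_max_right _ _))
  calc relaxedSlope σ φ y ^ 2 ≤ ENNReal.ofReal c ^ 2 := by gcongr
    _ = b := by rw [← ENNReal.ofReal_pow hc0.le, hc2, ENNReal.ofReal_toReal hbt]

/-- A bounded real sequence converges along the hyperfilter. -/
theorem exists_hyperfilter_lim {r : ℕ → ℝ} {C : ℝ} (h0 : ∀ k, 0 ≤ r k) (hC : ∀ k, r k ≤ C) :
    ∃ L, Tendsto r (hyperfilter ℕ) (𝓝 L) := by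
  obtain ⟨L, -, hL⟩ := (isCompact_Icc (a := (0:ℝ)) (b := C)).ultrafilter_le_nhds
    ((hyperfilter ℕ).map r) (by
      rw [le_principal_iff]
      exact Ultrafilter.mem_map.2 (Filter.univ_mem' fun k => ⟨h0 k, hC k⟩))
  exact ⟨L, hL⟩

/-- The limit curve has a metric derivative `m`, whose energy is dominated by the limit (along the
hyperfilter) of the energies of the minimizers. -/
theorem SeqData.exists_metricDeriv (h : SeqData φ ustar A B P R₀ ε x f M a W)
    (hφ : LSCC σ φ ustar A B) (hc : Compatible σ) {u : ℝ → X}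
    (hu : ∀ t, 0 ≤ t → Tendsto (fun k => f k t) atTop (@nhds X σ (u t))) :
    ∃ (m F : ℝ → ℝ), AC2LocOn (fun t => u (max t 0)) m (Ici 0) ∧
      (∀ t, 0 ≤ t → Tendsto (fun k => ∫ r in Icc 0 t, M k r ^ 2) (hyperfilter ℕ) (𝓝 (F t))) ∧
      ∀ t, 0 ≤ t → ∫⁻ r in Icc 0 t, ENNReal.ofReal (m r ^ 2) ≤ ENNReal.ofReal (F t) := by
  have hex : ∀ t : ℝ, ∃ L, Tendsto (fun k => ∫ r in Icc 0 (max t 0), M k r ^ 2)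
      (hyperfilter ℕ) (𝓝 L) := fun t => by
    obtain ⟨R, hR0, hR⟩ := h.exists_bound hφ.hA hφ.hB (max t 0)
    exact exists_hyperfilter_lim (fun k => integral_nonneg fun r => sq_nonneg _)
      fun k => (hR k (max t 0) (le_max_right _ _) le_rfl).2.2.1
  choose F hF using hex
  have hmono : Monotone F := fun s t hst =>
    le_of_tendsto_of_tendsto' (hF s) (hF t) fun k =>
      setIntegral_mono_set ((h.data k).intM _) (Eventually.of_forall fun r => sq_nonneg _)
        (Icc_subset_Icc_right (max_le_max hst le_rfl)).eventuallyLE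
  have hdist : ∀ s t, s ≤ t →
      dist (u (max s 0)) (u (max t 0)) ^ 2 ≤ (t - s) * (F t - F s) := by
    intro s t hst
    have h1 := hc.dist_le (hu (max s 0) (le_max_right _ _)) (hu (max t 0) (le_max_right _ _))
      Nat.hyperfilter_le_atTop
      (Eventually.of_forall fun k => h.dist_le_sqrt (k := k) (le_max_right s 0)
        (max_le_max hst le_rfl))
      ((Real.continuous_sqrt.tendsto _).comp (((hF t).sub (hF s)).const_mul _))
    have h2 : 0 ≤ F t - F s := sub_nonneg.2 (hmono hst)
    have h3 : 0 ≤ max t 0 - max s 0 := sub_nonneg.2 (max_le_max hst le_rfl)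
    have h4 : max t 0 - max s 0 ≤ t - s := by
      rcases le_total s 0 with hs | hs
      · rcases le_total t 0 with ht | ht
        · simp [hs, ht, hst]
        · simp [hs, ht]
      · simp [hs, hs.trans hst]
    calc _ ≤ √((max t 0 - max s 0) * (F t - F s)) ^ 2 :=
          pow_le_pow_left₀ dist_nonneg h1 2
      _ = (max t 0 - max s 0) * (F t - F s) := Real.sq_sqrt (mul_nonneg h3 h2)
      _ ≤ _ := mul_le_mul_of_nonneg_right h4 h2
  obtain ⟨m, hm, hmF⟩ := WED.exists_metricDeriv hmono hdist
  refine ⟨m, F, hm, fun t ht => by simpa only [max_eq_left ht] using hF t, fun t ht => ?_⟩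
  have hF0 : F 0 = 0 := by
    refine tendsto_nhds_unique (hF 0) ?_
    simp
  have hmon : MonotoneOn F (uIcc 0 t) := hmono.monotoneOn _
  have h1 : ∫ r in (0:ℝ)..t, deriv F r ≤ F t := by
    have := hmon.intervalIntegral_deriv_mem_uIcc
    rw [hF0, sub_zero, uIcc_of_le (hF0 ▸ hmono ht)] at this
    exact this.2
  have h2 : IntegrableOn (deriv F) (Icc 0 t) :=
    (intervalIntegrable_iff_integrableOn_Icc_of_le ht).1 hmon.intervalIntegrable_deriv
  rw [← ofReal_integral_eq_lintegral_ofReal (hm.2 0 (by simp) t ht)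
    (Eventually.of_forall fun r => sq_nonneg _)]
  refine ENNReal.ofReal_le_ofReal (le_trans ?_ h1)
  rw [intervalIntegral.integral_of_le ht, ← integral_Icc_eq_integral_Ioc]
  exact integral_mono_ae (hm.2 0 (by simp) t ht) h2 (ae_restrict_of_ae hmF)

/-- The energy inequality for the limit at a.e. time. -/
theorem SeqData.energy_le_of_good (h : SeqData φ ustar A B P R₀ ε x f M a W)
    (hφ : LSCC σ φ ustar A B) {p : ℝ}
    (hp : Tendsto (fun k => φ (x k)) atTop (𝓝 (p : EReal))) {m F : ℝ → ℝ} {t : ℝ} (ht : 0 ≤ t)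
    (hF : Tendsto (fun k => ∫ r in Icc 0 t, M k r ^ 2) (hyperfilter ℕ) (𝓝 (F t)))
    (hmF : ∫⁻ r in Icc 0 t, ENNReal.ofReal (m r ^ 2) ≤ ENNReal.ofReal (F t))
    (hm : AEMeasurable m (volume.restrict (Icc 0 t)))
    (hg : GoodTime φ ε f a W t) {y : X}
    (hy : Tendsto (fun k => f k t) atTop (@nhds X σ y)) :
    ((∫⁻ s in Icc 0 t, ((ENNReal.ofReal (m s ^ 2) +
      liminf (fun k => ENNReal.ofReal (2 * a k s)) atTop) / 2) : ℝ≥0∞) : EReal) + φ y ≤ p := by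
  obtain ⟨R, hR0, hR⟩ := h.exists_bound hφ.hA hφ.hB t
  have hα0 : ∀ k, 0 ≤ ∫ r in Icc 0 t, a k r := fun k => integral_nonneg (h.data k).a_nonneg
  obtain ⟨α, hα⟩ := exists_hyperfilter_lim hα0 (fun k => (hR k t ht le_rfl).2.2.2)
  have hα' : 0 ≤ α := ge_of_tendsto' hα hα0
  have hF0 : 0 ≤ F t := ge_of_tendsto' hF fun k => integral_nonneg fun r => sq_nonneg _
  -- Fatou's lemma for the rescaled gap
  have hfatou : ∫⁻ s in Icc 0 t, liminf (fun k => ENNReal.ofReal (2 * a k s)) atTop ≤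
      ENNReal.ofReal (2 * α) := by
    refine (lintegral_liminf_le fun k => ((h.data k).measa.const_mul 2).ennreal_ofReal).trans ?_
    have h1 : ∀ k, ∫⁻ s in Icc 0 t, ENNReal.ofReal (2 * a k s) =
        ENNReal.ofReal (2 * ∫ s in Icc 0 t, a k s) := fun k => by
      rw [← integral_const_mul, ofReal_integral_eq_lintegral_ofReal
        (Integrable.const_mul ((h.data k).inta t) _) (Eventually.of_forall fun s => by
          have := (h.data k).a_nonneg s
          simp only [Pi.zero_apply]; positivity)]
    simp_rw [h1]
    refine (liminf_le_liminf_of_le Nat.hyperfilter_le_atTop).trans (le_of_eq ?_)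
    exact ((ENNReal.continuous_ofReal.tendsto _).comp (hα.const_mul 2)).liminf_eq
  have hI : ∫⁻ s in Icc 0 t, ((ENNReal.ofReal (m s ^ 2) +
      liminf (fun k => ENNReal.ofReal (2 * a k s)) atTop) / 2) ≤
      ENNReal.ofReal (1 / 2 * F t + α) := by
    simp only [div_eq_mul_inv]
    rw [lintegral_mul_const' _ _ (by simp), lintegral_add_left' (hm.pow_const 2).ennreal_ofReal]
    calc _ ≤ (ENNReal.ofReal (F t) + ENNReal.ofReal (2 * α)) * 2⁻¹ := by gcongr
      _ = ENNReal.ofReal ((F t + 2 * α) * 2⁻¹) := by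
        rw [← ENNReal.ofReal_add hF0 (by positivity),
          ENNReal.ofReal_mul (p := F t + 2 * α) (by positivity),
          ENNReal.ofReal_inv_of_pos two_pos]
        simp
      _ = _ := by congr 1; ring
  -- lower semicontinuity of the energy
  have hlow : φ y ≤ ((p - (1 / 2 * F t + α) : ℝ) : EReal) := by
    refine le_of_forall_gt_imp_ge_of_dense fun b hb => ?_
    obtain ⟨q, hq1, hq2⟩ := EReal.lt_iff_exists_real_btwn.1 hb
    refine le_trans ?_ hq2.le
    rw [EReal.coe_lt_coe_iff] at hq1
    set δ := (q - (p - (1 / 2 * F t + α))) / 2 with hδ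
    have hδ0 : 0 < δ := by rw [hδ]; linarith
    have h1 : ∀ᶠ k in (hyperfilter ℕ : Filter ℕ),
        1 / 2 * F t + α - δ < 1 / 2 * (∫ r in Icc 0 t, M k r ^ 2) + ∫ r in Icc 0 t, a k r :=
      ((hF.const_mul (1 / 2)).add hα).eventually_const_lt (by linarith)
    have h2 : ∀ᶠ k in atTop, φ (x k) < ((p + δ / 2 : ℝ) : EReal) :=
      hp.eventually_lt_const (EReal.coe_lt_coe_iff.2 (by linarith))
    have h3 := hg.2.eventually_lt_const (half_pos hδ0)
    have hfreq : ∃ᶠ k in atTop, φ (f k t) ≤ (q : EReal) := by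
      refine ((h1.frequently.filter_mono Nat.hyperfilter_le_atTop).and_eventually
        (h2.and h3)).mono ?_
      rintro k ⟨hk1, hk2, hk3⟩
      rw [hg.1 k, EReal.coe_le_coe_iff]
      have h4 := (h.data k).init.trans_lt hk2
      rw [EReal.coe_lt_coe_iff] at h4
      have h5 := (h.data k).sum_integral le_rfl ht
      linarith
    obtain ⟨i, hi, hiq⟩ := extraction_of_frequently_atTop hfreq
    exact hφ.le_of_tendsto (p := ustar) (R := R)
      (Eventually.of_forall fun k => (hR (i k) t ht le_rfl).1) (hy.comp hi.tendsto_atTop)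
      (Eventually.of_forall hiq) tendsto_const_nhds
  calc _ ≤ ((ENNReal.ofReal (1 / 2 * F t + α) : ℝ≥0∞) : EReal) +
        ((p - (1 / 2 * F t + α) : ℝ) : EReal) := by
        gcongr
        exact_mod_cast hI
    _ = p := by
        rw [EReal.coe_ennreal_ofReal, max_eq_left (by positivity), ← EReal.coe_add]
        congr 1; ring

end

section

variable {σ : TopologicalSpace X} {φ : X → EReal} {ustar : X} {A B P R₀ : ℝ} {ε : ℕ → ℝ}
  {x : ℕ → X} {f : ℕ → ℝ → X} {M a W : ℕ → ℝ → ℝ}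

/-- Compactness and the energy inequality in the limit. The function `H` is a measurable
majorant of the squared relaxed slope along the limit curve; it is used in place of the latter
because the relaxed slope need not be measurable along the curve. -/
theorem SeqData.exists_curve [CompleteSpace X] (h : SeqData φ ustar A B P R₀ ε x f M a W)
    (hφ : LSCC σ φ ustar A B) (hc : Compatible σ) {y : X} {p : ℝ}
    (hx : Tendsto x atTop (@nhds X σ y))
    (hp : Tendsto (fun k => φ (x k)) atTop (𝓝 (p : EReal))) :
    ∃ j : ℕ → ℕ, StrictMono j ∧ ∃ (u : ℝ → X) (m : ℝ → ℝ) (H : ℝ → ℝ≥0∞),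
      Measurable m ∧ Measurable H ∧ AC2LocOn u m (Ici 0) ∧ u 0 = y ∧
      (∀ t, 0 ≤ t → Tendsto (fun k => f (j k) t) atTop (@nhds X σ (u t))) ∧
      (∀ᵐ t, 0 ≤ t → relaxedSlope σ φ (u t) ^ 2 ≤ H t) ∧
      ∀ t, 0 ≤ t →
        ((∫⁻ s in Icc 0 t, (ENNReal.ofReal (m s ^ 2) + H s) / 2 : ℝ≥0∞) : EReal) + φ (u t) ≤ p := by
  obtain ⟨j₁, hj₁, hgap⟩ := h.exists_subseq_gap hφ.hA hφ.hB
  have h₁ := h.comp hj₁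
  have hgood₁ : ∀ᵐ t, 0 ≤ t → GoodTime φ (ε ∘ j₁) (f ∘ j₁) (a ∘ j₁) (W ∘ j₁) t := by
    filter_upwards [hgap, ae_all_iff.2 fun k => (h₁.data k).energy] with t h1 h2 ht
    exact ⟨fun k => h2 k ht, h1 ht⟩
  obtain ⟨j₂, hj₂, u₀, hu₀⟩ := h₁.exists_limit hφ hc hgood₁
  have h₂ := h₁.comp hj₂
  obtain ⟨m₀, F, hm₀, hF, hmF₀⟩ := h₂.exists_metricDeriv hφ hc hu₀
  set u : ℝ → X := fun t => u₀ (max t 0) with hu_def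
  have hu : ∀ t, 0 ≤ t → Tendsto (fun k => ((f ∘ j₁) ∘ j₂) k t) atTop (@nhds X σ (u t)) :=
    fun t ht => by
      have h1 := hu₀ t ht
      simp only [hu_def, max_eq_left ht]
      exact h1
  obtain ⟨m, hmm, hmeq, hm⟩ := hm₀.exists_measurable
  have hmF : ∀ t, 0 ≤ t → ∫⁻ r in Icc 0 t, ENNReal.ofReal (m r ^ 2) ≤ ENNReal.ofReal (F t) := by
    intro t ht
    refine le_trans (le_of_eq (setLIntegral_congr_fun_ae measurableSet_Icc ?_)) (hmF₀ t ht)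
    filter_upwards [hmeq] with s hs hst
    rw [hs hst.1]
  have hx₂ : Tendsto ((x ∘ j₁) ∘ j₂) atTop (@nhds X σ y) :=
    (hx.comp hj₁.tendsto_atTop).comp hj₂.tendsto_atTop
  have hp₂ : Tendsto (fun k => φ (((x ∘ j₁) ∘ j₂) k)) atTop (𝓝 (p : EReal)) :=
    (hp.comp hj₁.tendsto_atTop).comp hj₂.tendsto_atTop
  set H : ℝ → ℝ≥0∞ := fun t => liminf (fun k => ENNReal.ofReal (2 * ((a ∘ j₁) ∘ j₂) k t)) atTop
    with hH
  have hgood : ∀ᵐ t, 0 ≤ t → GoodTime φ ((ε ∘ j₁) ∘ j₂) ((f ∘ j₁) ∘ j₂) ((a ∘ j₁) ∘ j₂)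
      ((W ∘ j₁) ∘ j₂) t := by
    filter_upwards [hgood₁] with t h1 ht using (h1 ht).comp hj₂
  have hHm : Measurable H :=
    Measurable.liminf fun k => ((h₂.data k).measa.const_mul 2).ennreal_ofReal
  have hu0 : u 0 = y := by
    refine hc.unique (hu 0 le_rfl) ?_
    have : (fun k => ((f ∘ j₁) ∘ j₂) k 0) = (x ∘ j₁) ∘ j₂ := funext fun k => (h₂.data k).start
    rw [this]
    exact hx₂
  have hE : ∀ t, 0 ≤ t → GoodTime φ ((ε ∘ j₁) ∘ j₂) ((f ∘ j₁) ∘ j₂) ((a ∘ j₁) ∘ j₂)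
      ((W ∘ j₁) ∘ j₂) t →
      ((∫⁻ s in Icc 0 t, (ENNReal.ofReal (m s ^ 2) + H s) / 2 : ℝ≥0∞) : EReal) + φ (u t) ≤ p :=
    fun t ht hg => h₂.energy_le_of_good hφ hp₂ ht (hF t ht) (hmF t ht) hmm.aemeasurable hg (hu t ht)
  refine ⟨j₁ ∘ j₂, hj₁.comp hj₂, u, m, H, hmm, hHm, hm, hu0, hu, ?_, fun t ht => ?_⟩
  · filter_upwards [hgood] with t h1 ht
    exact h₂.relaxedSlope_le hφ hc ht (h1 ht) (hu t ht)
  -- approximate `t` from the right by good times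
  have hex : ∀ i : ℕ, ∃ s, t < s ∧ s < t + 1 / ((i : ℝ) + 1) ∧
      GoodTime φ ((ε ∘ j₁) ∘ j₂) ((f ∘ j₁) ∘ j₂) ((a ∘ j₁) ∘ j₂) ((W ∘ j₁) ∘ j₂) s :=
    fun i => exists_good hgood ht Nat.one_div_pos_of_nat
  choose s hs1 hs2 hs3 using hex
  have hst : Tendsto s atTop (𝓝 t) := by
    refine tendsto_of_tendsto_of_tendsto_of_le_of_le tendsto_const_nhds ?_
      (fun i => (hs1 i).le) (fun i => (hs2 i).le)
    simpa using (tendsto_const_nhds (x := t)).add (tendsto_one_div_add_atTop_nhds_zero_nat (𝕜 := ℝ))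
  have hmono : ∀ i, ((∫⁻ s in Icc 0 t, (ENNReal.ofReal (m s ^ 2) + H s) / 2 : ℝ≥0∞) : EReal) +
      φ (u (s i)) ≤ p := fun i => by
    refine le_trans ?_ (hE (s i) (ht.trans (hs1 i).le) (hs3 i))
    gcongr
    exact EReal.coe_ennreal_le_coe_ennreal_iff.2
      (lintegral_mono_set (Icc_subset_Icc_right (hs1 i).le))
  set I := ∫⁻ s in Icc 0 t, (ENNReal.ofReal (m s ^ 2) + H s) / 2 with hI
  have hItop : I ≠ ⊤ := by
    intro hcon
    have := hmono 0
    rw [hcon, EReal.coe_ennreal_top, EReal.top_add_of_ne_bot (hφ.ne_bot _)] at this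
    exact EReal.coe_ne_top _ (top_le_iff.1 this)
  have hIr : (I : EReal) = (I.toReal : EReal) := (EReal.coe_ennreal_toReal hItop).symm
  rw [hIr]
  have hle : φ (u t) ≤ ((p - I.toReal : ℝ) : EReal) := by
    refine hφ.le_of_metric hc (u := fun i => u (s i)) (r := fun _ => ((p - I.toReal : ℝ) : EReal))
      ?_ (Eventually.of_forall fun i => ?_) tendsto_const_nhds
    · have := (hm.tendsto_dist hmm t).comp hst
      refine this.congr fun i => ?_
      simp only [Function.comp, hu_def, max_assoc, max_self]
    · have := hmono i
      rw [hIr] at this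
      rw [EReal.coe_sub]
      exact EReal.le_sub_iff_add_le (by simp) (by simp) |>.2 (by rwa [add_comm])
  calc (I.toReal : EReal) + φ (u t) ≤ (I.toReal : EReal) + ((p - I.toReal : ℝ) : EReal) := by gcongr
    _ = p := by rw [← EReal.coe_add]; congr 1; ring

end

/-! ### Curves of maximal slope -/

theorem eabs_coe_le {r K : ℝ} (h : |r| ≤ K) : eabs (r : EReal) ≤ ENNReal.ofReal K := by
  rw [eabs, ← EReal.coe_neg, epos, epos, if_neg (EReal.coe_ne_top _), if_neg (EReal.coe_ne_top _),
    EReal.toReal_coe, EReal.toReal_coe]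
  exact sup_le (ENNReal.ofReal_le_ofReal ((le_abs_self r).trans h))
    (ENNReal.ofReal_le_ofReal ((neg_le_abs r).trans h))

theorem ennreal_mul_le_half_sq_add_sq (a b : ℝ≥0∞) : a * b ≤ (b ^ 2 + a ^ 2) / 2 := by
  rw [ENNReal.le_div_iff_mul_le (by simp) (by simp)]
  induction a with
  | top => simp
  | coe a =>
    induction b with
    | top => simp
    | coe b =>
      norm_cast
      rw [← NNReal.coe_le_coe]
      push_cast
      nlinarith [sq_nonneg ((a : ℝ) - b)]

/-- The equality case of Young's inequality. -/
theorem eq_sq_of_mul_eq {a b H : ℝ≥0∞} (hH : a ^ 2 ≤ H) (h : a * b = (b ^ 2 + H) / 2)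
    (hfin : (b ^ 2 + H) / 2 < ⊤) : b ^ 2 = a ^ 2 ∧ (b ^ 2 + H) / 2 = b ^ 2 := by
  have hs : b ^ 2 + H ≠ ⊤ := fun hc => by simp [hc, ENNReal.top_div] at hfin
  have hHt : H ≠ ⊤ := fun hc => hs (by simp [hc])
  have hbt : b ≠ ⊤ := fun hc => hs (by simp [hc])
  have hat : a ≠ ⊤ := fun hc => hHt (top_le_iff.1 (by simpa [hc] using hH))
  lift a to NNReal using hat
  lift b to NNReal using hbt
  lift H to NNReal using hHt
  rw [ENNReal.eq_div_iff (by simp) (by simp)] at h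
  norm_cast at h hH
  have h1 : (2 : ℝ) * (a * b) = b ^ 2 + H := by exact_mod_cast h
  have h2 : (a : ℝ) ^ 2 ≤ H := by exact_mod_cast hH
  have h3 : (a : ℝ) = b := by
    have : ((a : ℝ) - b) ^ 2 ≤ 0 := by nlinarith
    nlinarith [pow_eq_zero_iff (two_ne_zero) |>.1 (le_antisymm this (sq_nonneg _))]
  have h4 : (H : ℝ) = b ^ 2 := by rw [h3] at h1; linarith
  have h3' : a = b := by exact_mod_cast h3
  have h4' : H = b ^ 2 := by exact_mod_cast h4
  subst h3' h4'
  refine ⟨rfl, ?_⟩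
  push_cast
  rw [← two_mul, mul_comm, ENNReal.mul_div_cancel_right (by simp) (by simp)]

theorem IsMetricDerivOn.mono {u : ℝ → X} {m : ℝ → ℝ} {I J : Set ℝ} (h : IsMetricDerivOn u m I)
    (hJ : J ⊆ I) : IsMetricDerivOn u m J :=
  ⟨h.nonneg, fun s hs t ht => h.locInt s (hJ hs) t (hJ ht),
    fun s hs t ht => h.dist_le s (hJ hs) t (hJ ht),
    (ae_restrict_of_ae_restrict_of_subset hJ h.limit).mono fun _ ht =>
      ht.mono_left (nhdsWithin_mono _ (sdiff_subset_sdiff_left hJ))⟩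

/-- The energy inequality together with the upper gradient property forces equality in Young's
inequality, so that `u` is a curve of maximal slope. -/
theorem maximal_slope {σ : TopologicalSpace X} {φ : X → EReal} {ustar : X} {A B p : ℝ}
    (hφ : LSCC σ φ ustar A B) {u : ℝ → X} {m : ℝ → ℝ} {H S : ℝ → ℝ≥0∞} {g : X → ℝ≥0∞}
    (hS : S = fun t => g (u t))
    (hmm : Measurable m) (hHm : Measurable H) (hu : AC2LocOn u m (Ici 0))
    (hp : φ (u 0) = (p : EReal)) (hSH : ∀ᵐ t, 0 ≤ t → S t ^ 2 ≤ H t)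
    (hE : ∀ t, 0 ≤ t → ((∫⁻ s in Icc 0 t, (ENNReal.ofReal (m s ^ 2) + H s) / 2 : ℝ≥0∞) : EReal) +
      φ (u t) ≤ p)
    (hg : IsModeratedUpperGradient φ g ⊤) :
    ∃ E g : ℝ → ℝ, (∀ t : ℝ, 0 ≤ t → (E t : EReal) = φ (u t)) ∧ RealACLoc E g ∧
      ∀ᵐ t ∂(volume.restrict (Ioi (0:ℝ))),
        g t = -(m t ^ 2) ∧ ENNReal.ofReal (m t ^ 2) = S t ^ 2 := by
  set D : ℝ → ℝ≥0∞ := fun s => (ENNReal.ofReal (m s ^ 2) + H s) / 2 with hD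
  have hDm : Measurable D := ((hmm.pow_const 2).ennreal_ofReal.add hHm).div_const 2
  have hb2 : ∀ s, ENNReal.ofReal (m s ^ 2) = ENNReal.ofReal (m s) ^ 2 :=
    fun s => ENNReal.ofReal_pow (hu.1.nonneg s) 2
  have hphi : ∀ t, 0 ≤ t → (((φ (u t)).toReal : ℝ) : EReal) = φ (u t) := by
    intro t ht
    refine EReal.coe_toReal (fun hcon => ?_) (hφ.ne_bot _)
    have := hE t ht
    rw [hcon, EReal.add_top_of_ne_bot (by simp)] at this
    exact EReal.coe_ne_top _ (top_le_iff.1 this)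
  set E : ℝ → ℝ := fun t => (φ (u t)).toReal with hEdef
  have hIfin : ∀ t, 0 ≤ t → ∫⁻ s in Icc 0 t, D s ≠ ⊤ := by
    intro t ht hcon
    have := hE t ht
    rw [hcon, EReal.coe_ennreal_top, EReal.top_add_of_ne_bot (hφ.ne_bot _)] at this
    exact EReal.coe_ne_top _ (top_le_iff.1 this)
  have hEle : ∀ t, 0 ≤ t → (∫⁻ s in Icc 0 t, D s).toReal + E t ≤ p := by
    intro t ht
    have := hE t ht
    rw [← EReal.coe_ennreal_toReal (hIfin t ht), ← hphi t ht] at this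
    exact_mod_cast this
  have hGD : ∀ᵐ s, 0 ≤ s → S s * ENNReal.ofReal (m s) ≤ D s := by
    filter_upwards [hSH] with s hs h0
    refine (ennreal_mul_le_half_sq_add_sq _ _).trans ?_
    simp only [hD, hb2]
    gcongr
    exact hs h0
  have hJI : ∀ t, 0 ≤ t → ∫⁻ s in Icc 0 t, S s * ENNReal.ofReal (m s) ≤ ∫⁻ s in Icc 0 t, D s :=
    fun t _ => lintegral_mono_ae ((ae_restrict_iff' measurableSet_Icc).2 (by
      filter_upwards [hGD] with s hs h0 using hs h0.1))
  -- boundedness of the energy on compact time intervals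
  have hbdd : ∀ t, 0 ≤ t → MemLpENN (fun s => eabs (φ (u s))) ⊤ (speedMeasure m (Icc 0 t)) := by
    intro t ht
    set d := ∫ r in Icc 0 t, m r with hd
    set c := B * d ^ 2 + (B * dist (u 0) ustar ^ 2 + A) with hc
    rw [MemLpENN, if_pos rfl]
    refine ⟨ENNReal.ofReal (max p c), ENNReal.ofReal_ne_top, ?_⟩
    refine (withDensity_absolutelyContinuous _ _).ae_le
      ((ae_restrict_iff' measurableSet_Icc).2 (Eventually.of_forall fun s hs => ?_))
    rw [← hphi s hs.1]
    refine eabs_coe_le (abs_le.2 ⟨?_, ?_⟩)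
    · have h1 := hφ.coercive (u s) (u 0)
      rw [← hphi s hs.1, EReal.coe_le_coe_iff] at h1
      have h2 : dist (u s) (u 0) ≤ d := by
        rw [dist_comm]
        refine (hu.1.dist_le 0 (by simp) s hs.1 hs.1).trans ?_
        exact setIntegral_mono_set (hu.1.locInt 0 (by simp) t ht)
          (Eventually.of_forall hu.1.nonneg) (Icc_subset_Icc_right hs.2).eventuallyLE
      have h3 : B * dist (u s) (u 0) ^ 2 ≤ B * d ^ 2 :=
        mul_le_mul_of_nonneg_left (pow_le_pow_left₀ dist_nonneg h2 2) hφ.hB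
      have h4 := le_max_right p c
      change _ ≤ E s at h1
      change _ ≤ E s
      linarith
    · have h1 := hEle s hs.1
      have h2 : 0 ≤ (∫⁻ s in Icc 0 s, D s).toReal := ENNReal.toReal_nonneg
      exact le_max_of_le_left (by linarith)
  have hIJ : ∀ t, 0 ≤ t → p ≤ E t + (∫⁻ s in Icc 0 t, S s * ENNReal.ofReal (m s)).toReal := by
    intro t ht
    have h1 := (hg 0 t ht u m (hu.1.mono Icc_subset_Ici_self) (hbdd t ht)
      (by subst hS; exact (hJI t ht).trans_lt (hIfin t ht).lt_top) 0 ⟨le_rfl, ht⟩ t ⟨ht, le_rfl⟩ ht).2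
    have h2 : ∫⁻ s in Icc 0 t, S s * ENNReal.ofReal (m s) ≠ ⊤ :=
      ((hJI t ht).trans_lt (hIfin t ht).lt_top).ne
    subst hS
    rw [hp, ← hphi t ht, ← EReal.coe_ennreal_toReal h2] at h1
    exact_mod_cast h1
  have hEeq : ∀ t, 0 ≤ t → E t = p - (∫⁻ s in Icc 0 t, D s).toReal := by
    intro t ht
    have h1 := hEle t ht
    have h2 := hIJ t ht
    have h3 := ENNReal.toReal_mono (hIfin t ht) (hJI t ht)
    linarith
  have hae : ∀ t, 0 ≤ t → ∀ᵐ s, s ∈ Icc 0 t → S s * ENNReal.ofReal (m s) = D s ∧ D s < ⊤ := by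
    intro t ht
    have h1 : (fun s => S s * ENNReal.ofReal (m s)) =ᵐ[volume.restrict (Icc 0 t)] D := by
      refine ae_eq_of_ae_le_of_lintegral_le ((ae_restrict_iff' measurableSet_Icc).2 (by
        filter_upwards [hGD] with s hs h0 using hs h0.1))
        ((hJI t ht).trans_lt (hIfin t ht).lt_top).ne hDm.aemeasurable ?_
      rw [← ENNReal.toReal_le_toReal (hIfin t ht)
        ((hJI t ht).trans_lt (hIfin t ht).lt_top).ne]
      have h1 := hEle t ht
      have h2 := hIJ t ht
      linarith
    have h2 := ae_lt_top hDm (hIfin t ht)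
    rw [EventuallyEq, ae_restrict_iff' measurableSet_Icc] at h1
    rw [ae_restrict_iff' measurableSet_Icc] at h2
    filter_upwards [h1, h2] with s h1 h2 hs using ⟨h1 hs, h2 hs⟩
  have hkey : ∀ᵐ s, 0 ≤ s → ENNReal.ofReal (m s ^ 2) = S s ^ 2 ∧ D s = ENNReal.ofReal (m s ^ 2) := by
    filter_upwards [ae_all_iff.2 fun n : ℕ => hae n n.cast_nonneg, hSH] with s hs hs2 h0
    obtain ⟨n, hn⟩ := exists_nat_ge s
    obtain ⟨h1, h2⟩ := hs n ⟨h0, hn⟩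
    simp only [hD, hb2] at h1 h2 ⊢
    exact eq_sq_of_mul_eq (hs2 h0) h1 h2
  refine ⟨E, fun t => -(m t ^ 2), hphi, ⟨fun b hb => Integrable.neg (hu.2 0 (by simp) b hb),
    fun t ht => ?_⟩, ?_⟩
  · have h0 : E 0 = p := by simp [hEdef, hp]
    rw [h0, hEeq t ht, integral_neg, ← sub_eq_add_neg]
    congr 1
    rw [integral_eq_lintegral_of_nonneg_ae (Eventually.of_forall fun s => sq_nonneg _)
      (hmm.pow_const 2).aestronglyMeasurable]
    congr 1
    refine setLIntegral_congr_fun_ae measurableSet_Icc ?_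
    filter_upwards [hkey] with s hs h0 using (hs h0.1).2
  · rw [ae_restrict_iff' measurableSet_Ioi]
    filter_upwards [hkey] with s hs h0
    exact ⟨rfl, (hs (le_of_lt h0)).1⟩

end WED

namespace WED

/-- Theorem 4.4 / main convergence result: under the LSCC assumptions,
minimizers of the WED functionals with well-prepared initial data converge (along a
subsequence of any vanishing sequence `ε_k ↓ 0`, pointwise in the σ-topology) to a curve
`u ∈ AC²_loc([0,∞);X)` starting from `ū` and satisfying the maximal-slope energy inequality;
if moreover the relaxed slope is an `L^∞`-moderated upper gradient for `φ`, then `u` is a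
curve of maximal slope for `φ` with respect to `|∂⁻φ|`. -/
theorem statement0
    {X : Type*} [MetricSpace X] [CompleteSpace X]
    (σ : TopologicalSpace X) (hcomp : Compatible σ)
    (φ : X → EReal) (ustar : X) (A B : ℝ) (hφ : LSCC σ φ ustar A B)
    (ubar : X) (hubar : φ ubar ≠ ⊤)
    (ubarε : ℝ → X) (hdom : ∀ ε : ℝ, 0 < ε → φ (ubarε ε) ≠ ⊤)
    (hconv : Tendsto ubarε (𝓝[>] (0:ℝ)) (@nhds X σ ubar))
    (hbd : ∃ C : ℝ, ∀ ε : ℝ, 0 < ε → dist (ubarε ε) ubar ≤ C)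
    (hen : Tendsto (fun ε => φ (ubarε ε)) (𝓝[>] (0:ℝ)) (𝓝 (φ ubar)))
    (uε : ℝ → ℝ → X) (mε : ℝ → ℝ → ℝ)
    (hmin : ∀ ε : ℝ, 0 < ε → IsMinimizer φ ε (ubarε ε) (uε ε) (mε ε))
    (εk : ℕ → ℝ) (hεkpos : ∀ k, 0 < εk k) (hεk0 : Tendsto εk atTop (𝓝 (0:ℝ))) :
    ∃ j : ℕ → ℕ, StrictMono j ∧ ∃ (u : ℝ → X) (m : ℝ → ℝ),
      AC2LocOn u m (Ici 0) ∧ u 0 = ubar ∧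
      (∀ t : ℝ, 0 ≤ t →
        Tendsto (fun k => uε (εk (j k)) t) atTop (@nhds X σ (u t))) ∧
      (∀ t : ℝ, 0 ≤ t →
        ((∫⁻ s in Icc (0:ℝ) t,
            ((ENNReal.ofReal (m s ^ 2) + (relaxedSlope σ φ (u s)) ^ 2) / 2) : ℝ≥0∞) : EReal)
          + φ (u t) ≤ φ ubar) ∧
      (IsModeratedUpperGradient φ (relaxedSlope σ φ) ⊤ →
        ∃ E g : ℝ → ℝ, (∀ t : ℝ, 0 ≤ t → (E t : EReal) = φ (u t)) ∧ RealACLoc E g ∧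
          ∀ᵐ t ∂(volume.restrict (Ioi (0:ℝ))),
            g t = -(m t ^ 2) ∧
            ENNReal.ofReal (m t ^ 2) = (relaxedSlope σ φ (u t)) ^ 2) := by
  obtain ⟨p, hp⟩ : ∃ p : ℝ, φ ubar = (p : EReal) :=
    ⟨(φ ubar).toReal, (EReal.coe_toReal hubar (hφ.ne_bot _)).symm⟩
  obtain ⟨C, hC⟩ := hbd
  have hε' : Tendsto εk atTop (𝓝[>] (0:ℝ)) :=
    tendsto_nhdsWithin_iff.2 ⟨hεk0, Eventually.of_forall hεkpos⟩
  -- discard the finitely many indices for which `ε_k` is not small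
  have hev : ∀ᶠ k in atTop, 8 * B * εk k ≤ 1 ∧ φ (ubarε (εk k)) ≤ ((p + 1 : ℝ) : EReal) := by
    refine Eventually.and ?_ ?_
    · have h1 := hεk0.const_mul (8 * B)
      rw [mul_zero] at h1
      exact h1.eventually_le_const one_pos
    · have h1 := hen.comp hε'
      rw [hp] at h1
      exact h1.eventually_le_const (EReal.coe_lt_coe_iff.2 (by linarith))
  obtain ⟨K, hK⟩ := eventually_atTop.1 hev
  set j₀ : ℕ → ℕ := fun k => k + K with hj₀
  have hj₀m : StrictMono j₀ := fun a b hab => Nat.add_lt_add_right hab K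
  have hmd : ∀ k, ∃ M a W, MinData φ ustar A B (εk (j₀ k)) (ubarε (εk (j₀ k)))
      (uε (εk (j₀ k))) M a W := fun k =>
    (hmin _ (hεkpos _)).exists_minData hφ hcomp (hεkpos _) (hK _ (Nat.le_add_left _ _)).1
      (hdom _ (hεkpos _))
  choose M a W hdata using hmd
  have hseq : SeqData φ ustar A B (p + 1) ((C + dist ubar ustar) ^ 2) (fun k => εk (j₀ k))
      (fun k => ubarε (εk (j₀ k))) (fun k => uε (εk (j₀ k))) M a W := by
    refine ⟨fun k => hεkpos _, hεk0.comp hj₀m.tendsto_atTop, hdata, fun k => ?_, fun k => ?_⟩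
    · have h1 := (hdata k).init.trans (hK _ (Nat.le_add_left K k)).2
      exact_mod_cast h1
    · refine pow_le_pow_left₀ dist_nonneg ?_ 2
      have h1 := hC _ (hεkpos (j₀ k))
      exact (dist_triangle _ ubar _).trans (by linarith)
  obtain ⟨j, hj, u, m, H, hmm, hHm, hu, hu0, hlim, hSH, hE⟩ := hseq.exists_curve hφ hcomp
    (y := ubar) (p := p) ((hconv.comp hε').comp hj₀m.tendsto_atTop)
    (hp ▸ (hen.comp hε').comp hj₀m.tendsto_atTop)
  refine ⟨j₀ ∘ j, hj₀m.comp hj, u, m, hu, hu0, hlim, fun t ht => ?_, fun hg => ?_⟩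
  · rw [hp]
    refine le_trans ?_ (hE t ht)
    gcongr
    refine EReal.coe_ennreal_le_coe_ennreal_iff.2 (lintegral_mono_ae
      ((ae_restrict_iff' measurableSet_Icc).2 ?_))
    filter_upwards [hSH] with s hs hst
    have := hs hst.1
    gcongr
  · exact maximal_slope hφ (g := relaxedSlope σ φ) rfl hmm hHm hu (hu0 ▸ hp) hSH hE hg

end WED
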